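/- arXiv:2211.02871 — 4 statements merged into one kernel-verified Lean document; each statement's English description precedes it below -/
import Mathlib

section
/- Let N ≥ 2, let α be a real number with −1 ≤ α ≤ 2 and α ≠ 0, and let σ be an N-qubit operator. If the matrix (1/α)·(σ − (Tr(σ)/(2^N + α))·𝟙) is positive semidefinite, then for every i ∈ Fin N, σ is biseparable across the 1:(N−1) bipartition at qubit i. -/
open scoped ComplexOrder

noncomputable section

/-- Separability of an `N`-qubit matrix across the bipartition `X : Xᶜ`. -/
def SepAcross {N : ℕ} (X : Finset (Fin N))
    (σ : Matrix (Fin N → Fin 2) (Fin N → Fin 2) ℂ) : Prop :=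
  ∃ (K : ℕ)
    (A : Fin K → Matrix ({i // i ∈ X} → Fin 2) ({i // i ∈ X} → Fin 2) ℂ)
    (B : Fin K → Matrix ({i // i ∈ Xᶜ} → Fin 2) ({i // i ∈ Xᶜ} → Fin 2) ℂ),
    (∀ k, (A k).PosSemidef) ∧ (∀ k, (B k).PosSemidef) ∧
    ∀ x y, σ x y =
      ∑ k, A k (fun i => x i.1) (fun i => y i.1) * B k (fun i => x i.1) (fun i => y i.1)

/-- Partial transpose with respect to the qubits in `X`. -/
def pt {N : ℕ} (X : Finset (Fin N))
    (σ : Matrix (Fin N → Fin 2) (Fin N → Fin 2) ℂ) :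
    Matrix (Fin N → Fin 2) (Fin N → Fin 2) ℂ :=
  fun x y => σ (fun i => if i ∈ X then y i else x i) (fun i => if i ∈ X then x i else y i)

/-- The Dicke state `|S_k^N⟩`. -/
def dicke (N k : ℕ) : (Fin N → Fin 2) → ℂ :=
  fun x => if (Finset.univ.filter (fun i => x i = 1)).card = k
    then ((Real.sqrt (N.choose k))⁻¹ : ℝ) else 0

/-- The projector onto the symmetric subspace of `N` qubits. -/
def symProj (N : ℕ) : Matrix (Fin N → Fin 2) (Fin N → Fin 2) ℂ :=
  fun x y => ∑ k ∈ Finset.range (N + 1), dicke N k x * star (dicke N k y)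

/-- Full separability of an `N`-qubit matrix. -/
def FullySep {N : ℕ} (σ : Matrix (Fin N → Fin 2) (Fin N → Fin 2) ℂ) : Prop :=
  ∃ (K : ℕ) (A : Fin K → Fin N → Matrix (Fin 2) (Fin 2) ℂ),
    (∀ k i, (A k i).PosSemidef) ∧
    ∀ x y, σ x y = ∑ k, ∏ i, A k i (x i) (y i)

/-- The second Pauli matrix. -/
def pauliY : Matrix (Fin 2) (Fin 2) ℂ := !![0, -Complex.I; Complex.I, 0]

/-- The `N`-qubit operator acting as `σy` on each qubit in `X` and trivially elsewhere. -/
def pauliYat {N : ℕ} (X : Finset (Fin N)) :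
    Matrix (Fin N → Fin 2) (Fin N → Fin 2) ℂ :=
  fun x y => ∏ i, if i ∈ X then pauliY (x i) (y i) else (if x i = y i then 1 else 0)

/-- `(σy@X) · ρ^{T_X} · (σy@X)`. -/
def tildeAt {N : ℕ} (X : Finset (Fin N))
    (ρ : Matrix (Fin N → Fin 2) (Fin N → Fin 2) ℂ) :
    Matrix (Fin N → Fin 2) (Fin N → Fin 2) ℂ :=
  pauliYat X * pt X ρ * pauliYat X

/-- The Hankel matrix `M_l(q)` with entries `q_{i+j+l} / (N choose (i+j+l))`. -/
def hankel (N l : ℕ) (q : ℕ → ℝ) :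
    Matrix (Fin ((N - l) / 2 + 1)) (Fin ((N - l) / 2 + 1)) ℝ :=
  fun i j => q ((i : ℕ) + j + l) / (N.choose ((i : ℕ) + j + l))

/-- The diagonal symmetric state `Σ_k p_k |S_k^N⟩⟨S_k^N|`. -/
def rhoDS (N : ℕ) (p : ℕ → ℝ) : Matrix (Fin N → Fin 2) (Fin N → Fin 2) ℂ :=
  fun x y => ∑ k ∈ Finset.range (N + 1), (p k : ℂ) * dicke N k x * star (dicke N k y)

namespace SepAux

open Matrix

variable {p m : Type*} [Fintype p] [Fintype m] [DecidableEq p] [DecidableEq m]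

/-- Separability for matrices indexed by a product type. -/
def Sep (σ : Matrix (p × m) (p × m) ℂ) : Prop :=
  ∃ (K : ℕ) (A : Fin K → Matrix p p ℂ) (B : Fin K → Matrix m m ℂ),
    (∀ k, (A k).PosSemidef) ∧ (∀ k, (B k).PosSemidef) ∧
    ∀ x y, σ x y = ∑ k, A k x.1 y.1 * B k x.2 y.2

set_option linter.unusedSectionVars false

lemma Sep.zero : Sep (0 : Matrix (p × m) (p × m) ℂ) :=
  ⟨0, fun _ => 0, fun _ => 0, fun k => k.elim0, fun k => k.elim0, by simp⟩

lemma Sep.congr {σ τ : Matrix (p × m) (p × m) ℂ} (h : Sep τ) (e : ∀ s t, σ s t = τ s t) :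
    Sep σ := by
  obtain ⟨K, A, B, hA, hB, h⟩ := h
  exact ⟨K, A, B, hA, hB, fun x y => (e x y).trans (h x y)⟩

lemma Sep.prod {A : Matrix p p ℂ} {B : Matrix m m ℂ} (hA : A.PosSemidef) (hB : B.PosSemidef) :
    Sep (Matrix.of fun x y : p × m => A x.1 y.1 * B x.2 y.2) :=
  ⟨1, fun _ => A, fun _ => B, fun _ => hA, fun _ => hB, by simp⟩

lemma Sep.add {σ τ : Matrix (p × m) (p × m) ℂ} (h₁ : Sep σ) (h₂ : Sep τ) : Sep (σ + τ) := by
  obtain ⟨K, A, B, hA, hB, h⟩ := h₁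
  obtain ⟨L, C, D, hC, hD, h'⟩ := h₂
  refine ⟨K + L, Fin.append A C, Fin.append B D, ?_, ?_, ?_⟩
  · intro k
    refine Fin.addCases (fun k => ?_) (fun k => ?_) k
    · simpa using hA k
    · simpa using hC k
  · intro k
    refine Fin.addCases (fun k => ?_) (fun k => ?_) k
    · simpa using hB k
    · simpa using hD k
  · intro x y
    simp [Fin.sum_univ_add, h x y, h' x y]

lemma Sep.sum {ι : Type*} (s : Finset ι) {σ : ι → Matrix (p × m) (p × m) ℂ}
    (h : ∀ k, Sep (σ k)) : Sep (∑ k ∈ s, σ k) := by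
  classical
  induction s using Finset.induction_on with
  | empty => simpa using Sep.zero
  | insert a s ha ih => rw [Finset.sum_insert ha]; exact (h a).add ih

/-- rank one operator -/
def ket (f : m → ℂ) : Matrix m m ℂ := vecMulVec f (star f)

lemma ket_psd (f : m → ℂ) : (ket f).PosSemidef := posSemidef_vecMulVec_self_star f

lemma rsmul_psd {A : Matrix m m ℂ} (hA : A.PosSemidef) {c : ℝ} (hc : 0 ≤ c) :
    ((c : ℂ) • A).PosSemidef := hA.smul (by exact_mod_cast hc)

lemma ket_mul (f g : m → ℂ) : ket f * ket g = (star f ⬝ᵥ g) • vecMulVec f (star g) := by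
  simp [ket, vecMulVec_mul_vecMulVec]

lemma psd_aux (f g : m → ℂ) (a b S q r : ℝ) (ha : star f ⬝ᵥ f = (a : ℂ))
    (hb : star g ⬝ᵥ g = (b : ℂ)) (hfg : star f ⬝ᵥ g = 0) (hgf : star g ⬝ᵥ f = 0)
    (hS : 0 ≤ S) (hq : 0 ≤ S + q * a) (hr : 0 ≤ S + r * b)
    (ha0 : a = 0 → f = 0) (hb0 : b = 0 → g = 0) (ha1 : 0 ≤ a) (hb1 : 0 ≤ b) :
    ((S : ℂ) • (1 : Matrix m m ℂ) + (q : ℂ) • ket f + (r : ℂ) • ket g).PosSemidef := by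
  set P : Matrix m m ℂ := 1 - ((a⁻¹ : ℝ) : ℂ) • ket f - ((b⁻¹ : ℝ) : ℂ) • ket g with hP
  have hherm : Pᴴ = P := by
    simp [hP, (ket_psd f).1.eq, (ket_psd g).1.eq, conjTranspose_smul]
  have hff : ket f * ket f = (a : ℂ) • ket f := by rw [ket_mul, ha]; rfl
  have hgg : ket g * ket g = (b : ℂ) • ket g := by rw [ket_mul, hb]; rfl
  have hfg' : ket f * ket g = 0 := by rw [ket_mul, hfg, zero_smul]
  have hgf' : ket g * ket f = 0 := by rw [ket_mul, hgf, zero_smul]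
  have key : ∀ (c : ℝ) (w : m → ℂ), (((c⁻¹ * c⁻¹ * c : ℝ)) : ℂ) = ((c⁻¹ : ℝ) : ℂ) := by
    intro c w
    congr 1
    by_cases h : c = 0
    · simp [h]
    · field_simp
  have hidem : P * P = P := by
    have e1 := key a f
    have e2 := key b g
    push_cast at e1 e2
    simp only [hP, sub_mul, mul_sub, one_mul, mul_one, smul_mul_smul_comm, hff, hgg, hfg', hgf',
      smul_zero, smul_smul]
    push_cast
    rw [e1, e2]
    abel
  have hPpsd : P.PosSemidef := by
    have := posSemidef_conjTranspose_mul_self P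
    rwa [hherm, hidem] at this
  have part : ∀ (w : m → ℂ) (c t : ℝ), 0 ≤ c → (c = 0 → w = 0) → 0 ≤ S + t * c →
      (((t + S * c⁻¹ : ℝ) : ℂ) • ket w).PosSemidef := by
    intro w c t hc hw ht
    rcases hc.eq_or_lt with h | h
    · simp [hw h.symm, ket, PosSemidef.zero]
    · refine rsmul_psd (ket_psd w) ?_
      have : t + S * c⁻¹ = (S + t * c) * c⁻¹ := by field_simp; ring
      rw [this]; positivity
  have := ((rsmul_psd hPpsd hS).add (part f a q ha1 ha0 hq)).add (part g b r hb1 hb0 hr)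
  convert this using 1
  rw [hP]
  push_cast
  module

/-- The core: rank one, Schmidt form. -/
lemma core (u₀ u₁ : p → ℂ)
    (hu : ∀ i j, u₀ i * star (u₀ j) + u₁ i * star (u₁ j) = (1 : Matrix p p ℂ) i j)
    (f g : m → ℂ) (a b α : ℝ) (ha : star f ⬝ᵥ f = (a : ℂ))
    (hb : star g ⬝ᵥ g = (b : ℂ)) (hfg : star f ⬝ᵥ g = 0) (hgf : star g ⬝ᵥ f = 0)
    (ha0 : a = 0 → f = 0) (hb0 : b = 0 → g = 0) (ha1 : 0 ≤ a) (hb1 : 0 ≤ b)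
    (c x y : ℝ) (hc : 0 ≤ c)
    (hxy : ∀ k l, (c * x * y : ℂ) * (f k * star (g l)) = α * (f k * star (g l)))
    (hxy' : ∀ k l, (c * x * y : ℂ) * (g k * star (f l)) = α * (g k * star (f l)))
    (h1 : 0 ≤ (a + b) + (α - c * x ^ 2) * a) (h2 : 0 ≤ (a + b) + (-(c * y ^ 2)) * b)
    (h3 : 0 ≤ (a + b) + (-(c * x ^ 2)) * a) (h4 : 0 ≤ (a + b) + (α - c * y ^ 2) * b) :
    Sep (Matrix.of fun s t : p × m => ((a + b : ℝ) : ℂ) * (1 : Matrix (p × m) (p × m) ℂ) s t +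
      (α : ℂ) * ((u₀ s.1 * f s.2 + u₁ s.1 * g s.2) * star (u₀ t.1 * f t.2 + u₁ t.1 * g t.2))) := by
  have hab : 0 ≤ a + b := by linarith
  have B0 := psd_aux f g a b (a + b) _ _ ha hb hfg hgf hab h1 h2 ha0 hb0 ha1 hb1
  have B1 := psd_aux f g a b (a + b) _ _ ha hb hfg hgf hab h3 h4 ha0 hb0 ha1 hb1
  have hc4 : 0 ≤ c / 4 := by positivity
  have T : ∀ w : ℂ, Sep (Matrix.of fun s t : p × m => ket (u₀ + w • u₁) s.1 t.1 *
      (((c / 4 : ℝ) : ℂ) • ket ((x : ℂ) • f + (star w * y) • g)) s.2 t.2) := fun w =>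
    Sep.prod (ket_psd _) (rsmul_psd (ket_psd _) hc4)
  have := (((((T 1).add (T (-1))).add (T Complex.I)).add (T (-Complex.I))).add
    (Sep.prod (ket_psd u₀) B0)).add (Sep.prod (ket_psd u₁) B1)
  refine this.congr fun s t => ?_
  obtain ⟨i, k⟩ := s
  obtain ⟨j, l⟩ := t
  have h11 : (1 : Matrix (p × m) (p × m) ℂ) (i, k) (j, l) =
      (1 : Matrix p p ℂ) i j * (1 : Matrix m m ℂ) k l := by
    simp only [Matrix.one_apply, Prod.mk.injEq]
    by_cases h : i = j <;> by_cases h' : k = l <;> simp [h, h']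
  rw [of_apply, h11, ← hu i j]
  have e1 := hxy k l
  have e2 := hxy' k l
  simp only [ket, of_apply, Matrix.add_apply, Matrix.smul_apply, vecMulVec_apply, Pi.add_apply, Pi.smul_apply,
    Pi.star_apply, smul_eq_mul, star_add, star_mul', star_neg, star_one, Complex.star_def,
    Complex.conj_I, Complex.conj_ofReal, map_neg, map_one, map_add, map_mul, neg_neg] at e1 e2 ⊢
  push_cast
  have hI : Complex.I ^ 2 = -1 := Complex.I_sq
  generalize (starRingEnd ℂ) (u₀ j) = U0 at *
  generalize (starRingEnd ℂ) (u₁ j) = U1 at *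
  generalize (starRingEnd ℂ) (f l) = F at *
  generalize (starRingEnd ℂ) (g l) = G at *
  generalize Complex.I = I at *
  have hI4 : I ^ 4 = 1 := by rw [show I ^ 4 = (I^2)^2 by ring, hI]; norm_num
  have hI3 : I ^ 3 = -I := by rw [show I ^ 3 = (I^2)*I by ring, hI]; norm_num
  ring_nf
  simp only [hI, hI4, hI3]
  linear_combination (-(u₀ i * U1)) * e1 - (u₁ i * U0) * e2

lemma rank_one (hp : Fintype.card p = 2) (V : Matrix p m ℂ) (α : ℝ) (hα1 : -1 ≤ α) (hα2 : α ≤ 2) :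
    Sep (Matrix.of fun s t : p × m => (V * Vᴴ).trace * (1 : Matrix (p × m) (p × m) ℂ) s t +
      (α : ℂ) * (V s.1 s.2 * star (V t.1 t.2))) := by
  have e : Fin 2 ≃ p := (Fintype.equivFinOfCardEq hp).symm
  have hG : (V * Vᴴ).IsHermitian := isHermitian_mul_conjTranspose_self V
  obtain ⟨U, D, hUU, hUU', hD⟩ : ∃ (U : Matrix p p ℂ) (D : p → ℂ), U * Uᴴ = 1 ∧ Uᴴ * U = 1 ∧
      Uᴴ * (V * Vᴴ) * U = diagonal D := by
    have h1 : (hG.eigenvectorUnitary : Matrix p p ℂ) * (hG.eigenvectorUnitary : Matrix p p ℂ)ᴴ = 1 :=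
      Unitary.mul_star_self_of_mem hG.eigenvectorUnitary.2
    have h2 : (hG.eigenvectorUnitary : Matrix p p ℂ)ᴴ * (hG.eigenvectorUnitary : Matrix p p ℂ) = 1 :=
      Unitary.star_mul_self_of_mem hG.eigenvectorUnitary.2
    refine ⟨hG.eigenvectorUnitary, RCLike.ofReal ∘ hG.eigenvalues, h1, h2, ?_⟩
    have := hG.spectral_theorem
    rw [Unitary.conjStarAlgAut_apply] at this
    rw [star_eq_conjTranspose] at this
    generalize (hG.eigenvectorUnitary : Matrix p p ℂ) = W at *
    generalize diagonal (RCLike.ofReal ∘ hG.eigenvalues : p → ℂ) = E at *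
    rw [this]
    calc Wᴴ * (W * E * Wᴴ) * W = (Wᴴ * W) * E * (Wᴴ * W) := by simp only [Matrix.mul_assoc]
      _ = E := by rw [h2]; simp
  set F : Matrix p m ℂ := Uᴴ * V with hF
  have hV : V = U * F := by rw [hF, ← Matrix.mul_assoc, hUU, Matrix.one_mul]
  have hFF : F * Fᴴ = diagonal D := by
    rw [← hD, hF, conjTranspose_mul, conjTranspose_conjTranspose]
    simp only [Matrix.mul_assoc]
  have htr : (V * Vᴴ).trace = (F * Fᴴ).trace := by
    rw [hV, conjTranspose_mul, ← Matrix.mul_assoc, Matrix.trace_mul_comm, Matrix.mul_assoc,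
      ← Matrix.mul_assoc, ← Matrix.mul_assoc, hUU', Matrix.one_mul]
  have dot : ∀ i j, star (F i) ⬝ᵥ F j = (F * Fᴴ) j i := by
    intro i j
    simp [dotProduct, Matrix.mul_apply, mul_comm]
  have nrm : ∀ i, star (F i) ⬝ᵥ F i = ((∑ k, Complex.normSq (F i k) : ℝ) : ℂ) := by
    intro i
    simp [dotProduct, Complex.normSq_eq_conj_mul_self]
  have nz : ∀ i, (∑ k, Complex.normSq (F i k)) = 0 → F i = 0 := by
    intro i h
    rw [Finset.sum_eq_zero_iff_of_nonneg (fun k _ => Complex.normSq_nonneg _)] at h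
    funext k
    exact Complex.normSq_eq_zero.1 (h k (Finset.mem_univ k))
  have nn : ∀ i, 0 ≤ ∑ k, Complex.normSq (F i k) := fun i =>
    Finset.sum_nonneg (fun k _ => Complex.normSq_nonneg _)
  have hne : e 0 ≠ e 1 := by simp
  have hsum : ∀ q : p → ℂ, ∑ i, q i = q (e 0) + q (e 1) := by
    intro q
    rw [← e.sum_comp, Fin.sum_univ_two]
  have hu : ∀ i j, U i (e 0) * star (U j (e 0)) + U i (e 1) * star (U j (e 1)) =
      (1 : Matrix p p ℂ) i j := by
    intro i j
    rw [← hUU, Matrix.mul_apply, hsum]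
    simp
  have hVe : ∀ i k, V i k = U i (e 0) * F (e 0) k + U i (e 1) * F (e 1) k := by
    intro i k
    conv_lhs => rw [hV]
    rw [Matrix.mul_apply, hsum]
  have hfg : star (F (e 0)) ⬝ᵥ F (e 1) = 0 := by
    rw [dot, hFF, diagonal_apply_ne _ hne.symm]
  have hgf : star (F (e 1)) ⬝ᵥ F (e 0) = 0 := by
    rw [dot, hFF, diagonal_apply_ne _ hne]
  have htr' : (V * Vᴴ).trace = ((∑ k, Complex.normSq (F (e 0) k) +
      ∑ k, Complex.normSq (F (e 1) k) : ℝ) : ℂ) := by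
    rw [htr, Matrix.trace, hsum, diag_apply, diag_apply, ← dot, ← dot, nrm, nrm, Complex.ofReal_add]
  simp only [hVe, htr']
  have ha := nrm (e 0)
  have hb := nrm (e 1)
  have ha0 := nz (e 0)
  have hb0 := nz (e 1)
  have ha1 := nn (e 0)
  have hb1 := nn (e 1)
  generalize (∑ k, Complex.normSq (F (e 0) k)) = a at *
  generalize (∑ k, Complex.normSq (F (e 1) k)) = b at *
  rcases ha1.eq_or_lt with h | ha2
  · have hf := ha0 h.symm
    refine core _ _ hu _ _ a b α ha hb hfg hgf ha0 hb0 ha1 hb1 0 0 0 le_rfl ?_ ?_ ?_ ?_ ?_ ?_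
    · simp [hf]
    · simp [hf]
    all_goals nlinarith
  rcases hb1.eq_or_lt with h | hb2
  · have hf := hb0 h.symm
    refine core _ _ hu _ _ a b α ha hb hfg hgf ha0 hb0 ha1 hb1 0 0 0 le_rfl ?_ ?_ ?_ ?_ ?_ ?_
    · simp [hf]
    · simp [hf]
    all_goals nlinarith
  rcases le_total 0 α with hα | hα
  · set x := Real.sqrt ((a + b) / (2 * a)) with hx
    have hx2 : x ^ 2 = (a + b) / (2 * a) := Real.sq_sqrt (by positivity)
    have hx0 : 0 < x := Real.sqrt_pos.2 (by positivity)
    have hxa : x ^ 2 * a = (a + b) / 2 := by rw [hx2]; field_simp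
    have hyb : (x⁻¹) ^ 2 * b ≤ (a + b) / 2 := by
      rw [inv_pow, hx2, inv_div, div_mul_eq_mul_div, div_le_div_iff₀ (by positivity) (by norm_num)]
      nlinarith [sq_nonneg (a - b)]
    have hyb0 : 0 ≤ (x⁻¹) ^ 2 * b := by positivity
    have hα' : α * x * x⁻¹ = α := by field_simp
    have hα'' : (α : ℂ) * (x : ℂ) * ((x⁻¹ : ℝ) : ℂ) = α := by exact_mod_cast hα'
    refine core _ _ hu _ _ a b α ha hb hfg hgf ha0 hb0 ha1 hb1 α x x⁻¹ hα ?_ ?_ ?_ ?_ ?_ ?_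
    · intro k l; rw [hα'']
    · intro k l; rw [hα'']
    · nlinarith [mul_nonneg hα ha1]
    · nlinarith
    · nlinarith
    · nlinarith [mul_nonneg hα hb1]
  · set x := Real.sqrt (b / a) with hx
    have hx2 : x ^ 2 = b / a := Real.sq_sqrt (by positivity)
    have hx0 : 0 < x := Real.sqrt_pos.2 (by positivity)
    have hxa : x ^ 2 * a = b := by rw [hx2]; field_simp
    have hyb : (-x⁻¹) ^ 2 * b = a := by
      rw [neg_sq, inv_pow, hx2, inv_div]; field_simp
    have hα' : (-α) * x * (-x⁻¹) = α := by field_simp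
    have hα'' : ((-α : ℝ) : ℂ) * (x : ℂ) * ((-x⁻¹ : ℝ) : ℂ) = α := by exact_mod_cast hα'
    refine core _ _ hu _ _ a b α ha hb hfg hgf ha0 hb0 ha1 hb1 (-α) x (-x⁻¹) (by linarith)
      ?_ ?_ ?_ ?_ ?_ ?_
    · intro k l; rw [hα'']
    · intro k l; rw [hα'']
    · nlinarith
    · nlinarith
    · nlinarith
    · nlinarith

lemma main (hp : Fintype.card p = 2) (ρ : Matrix (p × m) (p × m) ℂ) (hρ : ρ.PosSemidef)
    (α : ℝ) (hα1 : -1 ≤ α) (hα2 : α ≤ 2) :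
    Sep (ρ.trace • (1 : Matrix (p × m) (p × m) ℂ) + (α : ℂ) • ρ) := by
  obtain ⟨B, rfl⟩ : ∃ B : Matrix (p × m) (p × m) ℂ, ρ = Bᴴ * B := by
    open scoped MatrixOrder in
    exact CStarAlgebra.nonneg_iff_eq_star_mul_self.1 hρ.nonneg
  have := Sep.sum Finset.univ (fun k : p × m =>
    rank_one hp (Matrix.of fun i j => star (B k (i, j)) : Matrix p m ℂ) α hα1 hα2)
  refine this.congr fun s t => ?_
  rw [Matrix.sum_apply]
  simp only [of_apply, Matrix.add_apply, Matrix.smul_apply, smul_eq_mul, Matrix.sum_apply,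
    Finset.sum_add_distrib, ← Finset.sum_mul, ← Finset.mul_sum]
  congr 1
  · congr 1
    simp only [Matrix.trace, diag_apply, Matrix.mul_apply, of_apply,
      conjTranspose_apply, star_star]
    rw [Finset.sum_comm]
    refine Finset.sum_congr rfl fun k _ => ?_
    rw [Fintype.sum_prod_type]
  · simp [Matrix.mul_apply]

end SepAux

/-- Sufficient `(N-1)`-entanglement-depth criterion from the inverse reduction map. -/
theorem stmt1 (N : ℕ) (hN : 2 ≤ N)
    (α : ℝ) (hα1 : -1 ≤ α) (hα2 : α ≤ 2) (hα0 : α ≠ 0)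
    (σ : Matrix (Fin N → Fin 2) (Fin N → Fin 2) ℂ)
    (h : (((α⁻¹ : ℝ) : ℂ) •
        (σ - (σ.trace / ((2 ^ N + α : ℝ) : ℂ)) •
          (1 : Matrix (Fin N → Fin 2) (Fin N → Fin 2) ℂ))).PosSemidef)
    (i : Fin N) :
    SepAcross {i} σ := by
  have hNpos : (0 : ℝ) < 2 ^ N + α := by
    have : (2 : ℝ) ^ 2 ≤ 2 ^ N := pow_le_pow_right₀ (by norm_num) hN
    linarith
  set ρ := (((α⁻¹ : ℝ) : ℂ) •
        (σ - (σ.trace / ((2 ^ N + α : ℝ) : ℂ)) •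
          (1 : Matrix (Fin N → Fin 2) (Fin N → Fin 2) ℂ))) with hρ
  have hαc : (α : ℂ) ≠ 0 := by exact_mod_cast hα0
  have hNc : ((2 ^ N + α : ℝ) : ℂ) ≠ 0 := by exact_mod_cast hNpos.ne'
  have htr : ρ.trace = σ.trace / ((2 ^ N + α : ℝ) : ℂ) := by
    rw [hρ, Matrix.trace_smul, Matrix.trace_sub, Matrix.trace_smul, Matrix.trace_one]
    simp only [Fintype.card_pi, Fintype.card_fin, Finset.prod_const, Finset.card_univ, smul_eq_mul]
    push_cast at hNc ⊢
    field_simp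
    ring
  have hσ : σ = ρ.trace • (1 : Matrix (Fin N → Fin 2) (Fin N → Fin 2) ℂ) + (α : ℂ) • ρ := by
    rw [htr, hρ, smul_smul, Complex.ofReal_inv, mul_inv_cancel₀ hαc, one_smul]
    abel
  let φ : (Fin N → Fin 2) ≃
      ({j // j ∈ ({i} : Finset (Fin N))} → Fin 2) × ({j // j ∈ ({i} : Finset (Fin N))ᶜ} → Fin 2) :=
    { toFun := fun x => (fun j => x j.1, fun j => x j.1)
      invFun := fun q j => if hj : j ∈ ({i} : Finset (Fin N)) then q.1 ⟨j, hj⟩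
        else q.2 ⟨j, Finset.mem_compl.2 hj⟩
      left_inv := by
        intro x
        funext j
        by_cases hj : j ∈ ({i} : Finset (Fin N)) <;> simp
      right_inv := by
        rintro ⟨q, r⟩
        refine Prod.ext ?_ ?_
        · funext j
          simp only [dif_pos j.2]
        · funext j
          simp only [dif_neg (Finset.mem_compl.1 j.2)] }
  have hcard : Fintype.card ({j // j ∈ ({i} : Finset (Fin N))} → Fin 2) = 2 := by
    simp
  obtain ⟨K, A, B, hA, hB, hAB⟩ := SepAux.main hcard (ρ.submatrix φ.symm φ.symm)
    (h.submatrix φ.symm) α hα1 hα2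
  refine ⟨K, A, B, hA, hB, fun x y => ?_⟩
  have hxy := hAB (φ x) (φ y)
  have htr2 : (ρ.submatrix φ.symm φ.symm).trace = ρ.trace := by
    simp only [Matrix.trace, Matrix.diag_apply, Matrix.submatrix_apply]
    exact φ.symm.sum_comp (fun x => ρ x x)
  have h1 : (1 : Matrix _ _ ℂ) (φ x) (φ y) = (1 : Matrix (Fin N → Fin 2) (Fin N → Fin 2) ℂ) x y := by
    simp [Matrix.one_apply]
  simp only [Matrix.add_apply, Matrix.smul_apply, htr2, h1, Matrix.submatrix_apply,
    Equiv.symm_apply_apply] at hxy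
  conv_lhs => rw [hσ]
  simp only [Matrix.add_apply, Matrix.smul_apply]
  exact hxy
end
end

section
/- Let N ≥ 2, let 1 ≤ n < N, let ρ be a positive semidefinite N-qubit operator, and let α be a real number with −1 ≤ α ≤ 2. Then for every subset X ⊆ Fin N with |X| = n, the matrix σ = Tr(ρ)·𝟙 + α·ρ is separable across the bipartition X : Xᶜ; in particular, for n ≤ N − n, σ has entanglement depth at most N − n. -/
open scoped ComplexOrder

noncomputable section

namespace SepAux

open Matrix Kronecker

/-- Outer product. -/
def outer {A : Type} (x y : A → ℂ) : Matrix A A ℂ := fun a b => x a * star (y b)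

/-- The separable cone. -/
def cone (A B : Type) : AddSubmonoid (Matrix (A × B) (A × B) ℂ) :=
  AddSubmonoid.closure {M | ∃ (P : Matrix A A ℂ) (Q : Matrix B B ℂ),
    P.PosSemidef ∧ Q.PosSemidef ∧ M = P ⊗ₖ Q}

set_option linter.unusedSectionVars false

variable {A B : Type} [Fintype A] [Fintype B] [DecidableEq A] [DecidableEq B]

theorem outer_psd (x : A → ℂ) : (outer x x).PosSemidef :=
  posSemidef_vecMulVec_self_star x

theorem kron_mem {P : Matrix A A ℂ} {Q : Matrix B B ℂ} (hP : P.PosSemidef) (hQ : Q.PosSemidef) :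
    P ⊗ₖ Q ∈ cone A B :=
  AddSubmonoid.subset_closure ⟨P, Q, hP, hQ, rfl⟩

theorem smul_mem {c : ℝ} (hc : 0 ≤ c) {M : Matrix (A × B) (A × B) ℂ} (hM : M ∈ cone A B) :
    (c : ℂ) • M ∈ cone A B := by
  induction hM using AddSubmonoid.closure_induction with
  | mem x hx =>
    obtain ⟨P, Q, hP, hQ, rfl⟩ := hx
    rw [← smul_kronecker]
    exact kron_mem (hP.smul (by exact_mod_cast hc)) hQ
  | zero => rw [smul_zero]; exact zero_mem _
  | add x y _ _ hx hy => rw [smul_add]; exact add_mem hx hy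

theorem char_sum {ι : Type} [Fintype ι] [DecidableEq ι] (i j k l : ι) :
    ∑ θ : ι → ZMod 3, (ZMod.stdAddChar (θ i - θ j - θ k + θ l) : ℂ) =
      if (i = k ∧ j = l) ∨ (i = j ∧ k = l) then (Fintype.card (ι → ZMod 3) : ℂ) else 0 := by
  split_ifs with h
  · have : ∀ θ : ι → ZMod 3, θ i - θ j - θ k + θ l = 0 := by
      intro θ
      rcases h with ⟨rfl, rfl⟩ | ⟨rfl, rfl⟩ <;> ring
    simp [this]
  · let L : (ι → ZMod 3) →+ ZMod 3 :=
      Pi.evalAddMonoidHom (fun _ : ι => ZMod 3) i - Pi.evalAddMonoidHom (fun _ : ι => ZMod 3) j - Pi.evalAddMonoidHom (fun _ : ι => ZMod 3) k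
        + Pi.evalAddMonoidHom (fun _ : ι => ZMod 3) l
    have hL : ∀ θ, L θ = θ i - θ j - θ k + θ l := fun θ => rfl
    have key : ∃ θ, L θ ≠ 0 := by
      by_cases hij : i = j
      · subst hij
        have hkl : k ≠ l := fun hh => h (Or.inr ⟨rfl, hh⟩)
        refine ⟨Pi.single l 1, ?_⟩
        rw [hL]
        simp [Pi.single_apply, hkl]
      · by_cases hik : i = k
        · subst hik
          have hkl : j ≠ l := fun hh => h (Or.inl ⟨rfl, hh⟩)
          refine ⟨Pi.single l 1, ?_⟩
          rw [hL]
          simp [Pi.single_apply, hkl]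
        · refine ⟨Pi.single i 1, ?_⟩
          rw [hL]
          by_cases hil : l = i
          · simp only [Pi.single_apply, hil, Ne.symm hij, Ne.symm hik, if_true, if_false]
            decide
          · simp only [Pi.single_apply, hil, Ne.symm hij, Ne.symm hik, if_true, if_false]
            decide
    have := (AddChar.sum_eq_zero_iff_ne_zero
      (ψ := (ZMod.stdAddChar (N := 3)).compAddMonoidHom L)).2 (by
        intro h0
        obtain ⟨θ, hθ⟩ := key
        have h1 := DFunLike.congr_fun h0 θ
        rw [AddChar.compAddMonoidHom_apply] at h1
        apply hθ
        apply ZMod.injective_stdAddChar (N := 3)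
        rw [h1]; simp)
    simpa [hL] using this

theorem four {ι : Type} [Fintype ι] (x y z w : ι → ℂ) :
    ∑ i, ∑ j, ∑ k, ∑ l, x i * y j * (z k * w l) =
      (∑ i, x i) * (∑ j, y j) * ((∑ k, z k) * ∑ l, w l) := by
  simp only [← Finset.mul_sum, ← Finset.sum_mul]

/-- The core averaging lemma. -/
theorem core_s2 {ι : Type} [Fintype ι] [DecidableEq ι] (p : ι → A → ℂ) (q : ι → B → ℂ) :
    (∑ i, ∑ j, outer (p i) (p j) ⊗ₖ outer (q i) (q j)) +
      (∑ i, ∑ j, if i = j then 0 else outer (p i) (p i) ⊗ₖ outer (q j) (q j)) ∈ cone A B := by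
  let χ : ZMod 3 → ℂ := fun z => ZMod.stdAddChar z
  let u : (ι → ZMod 3) → A → ℂ := fun θ a => ∑ i, χ (θ i) * p i a
  let v : (ι → ZMod 3) → B → ℂ := fun θ b => ∑ i, χ (-θ i) * q i b
  let m : ℝ := (Fintype.card (ι → ZMod 3) : ℝ)
  have hm : (m : ℂ) ≠ 0 := by
    simp only [m, Complex.ofReal_natCast]
    exact_mod_cast Fintype.card_ne_zero
  have hmem : ((m⁻¹ : ℝ) : ℂ) • ∑ θ, outer (u θ) (u θ) ⊗ₖ outer (v θ) (v θ) ∈ cone A B :=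
    smul_mem (by positivity) (sum_mem fun θ _ => kron_mem (outer_psd _) (outer_psd _))
  convert hmem using 1
  have hst : ∀ z, star (χ z) = χ (-z) := fun z => (AddChar.map_neg_eq_conj _ z).symm
  have hmul : ∀ y z, χ y * χ z = χ (y + z) := fun y z => (AddChar.map_add_eq_mul _ y z).symm
  ext ⟨a, b⟩ ⟨a', b'⟩
  have expand : ∀ θ, (outer (u θ) (u θ) ⊗ₖ outer (v θ) (v θ)) (a, b) (a', b') =
      ∑ i, ∑ j, ∑ k, ∑ l, χ (θ i - θ j - θ k + θ l) *
        (p i a * star (p j a') * (q k b * star (q l b'))) := by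
    intro θ
    simp only [kroneckerMap_apply, outer, u, v, star_sum, star_mul', hst, neg_neg]
    rw [← four]
    refine Finset.sum_congr rfl fun i _ => Finset.sum_congr rfl fun j _ =>
      Finset.sum_congr rfl fun k _ => Finset.sum_congr rfl fun l _ => ?_
    rw [show θ i - θ j - θ k + θ l = θ i + (-θ j) + (-θ k) + θ l by ring, ← hmul, ← hmul, ← hmul]
    ring
  rw [Matrix.smul_apply, Matrix.sum_apply]
  simp only [expand]
  rw [smul_eq_mul, Complex.ofReal_inv, eq_inv_mul_iff_mul_eq₀ hm]
  have : ∑ θ : ι → ZMod 3, ∑ i, ∑ j, ∑ k, ∑ l, χ (θ i - θ j - θ k + θ l) *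
        (p i a * star (p j a') * (q k b * star (q l b')))
      = ∑ i, ∑ j, ∑ k, ∑ l, (m : ℂ) * ((if i = k then if j = l then
            (p i a * star (p j a') * (q k b * star (q l b'))) else 0 else 0) +
          (if i = j then if k = l then if i = k then 0 else
            (p i a * star (p j a') * (q k b * star (q l b'))) else 0 else 0)) := by
    rw [Finset.sum_comm]; refine Finset.sum_congr rfl fun i _ => ?_
    rw [Finset.sum_comm]; refine Finset.sum_congr rfl fun j _ => ?_
    rw [Finset.sum_comm]; refine Finset.sum_congr rfl fun k _ => ?_
    rw [Finset.sum_comm]; refine Finset.sum_congr rfl fun l _ => ?_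
    rw [← Finset.sum_mul, char_sum]
    simp only [m, Complex.ofReal_natCast]
    split_ifs <;> grind
  rw [this]
  simp only [← Finset.mul_sum]
  congr 1
  simp only [Finset.sum_add_distrib, Matrix.add_apply, Matrix.sum_apply]
  congr 1
  · refine Finset.sum_congr rfl fun i _ => Finset.sum_congr rfl fun j _ => ?_
    simp [outer, kroneckerMap_apply]
  · refine Finset.sum_congr rfl fun i _ => ?_
    rw [Finset.sum_comm]
    refine Finset.sum_congr rfl fun j _ => ?_
    by_cases h : i = j
    · simp [h]
    · simp [outer, kroneckerMap_apply, h]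

theorem outer_smul (r s : ℝ) (x y : A → ℂ) :
    outer ((r : ℂ) • x) ((s : ℂ) • y) = ((r * s : ℝ) : ℂ) • outer x y := by
  ext a b
  simp [outer]
  ring

theorem comb_identity {ι V : Type} [Fintype ι] [DecidableEq ι] [AddCommGroup V] [Module ℂ V]
    (D C : ι → ι → V) (hCD : ∀ i, C i i = D i i) (a : ι → ℂ) (T β : ℂ) (hT : T = ∑ i, a i ^ 2) :
    T • (∑ i, ∑ j, D i j) + (-β) • (∑ i, ∑ j, (a i * a j) • C i j) =
      (β / 2) • (∑ i, ∑ j, if i = j then 0 else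
        ((a j ^ 2) • D i i - (a i * a j) • C i j + (a i ^ 2) • D i j) +
        ((a i ^ 2) • D j j - (a j * a i) • C j i + (a j ^ 2) • D j i)) +
      ∑ i, ∑ j, (if i = j then (1 - β) * T else T - β * a i ^ 2) • D i j := by
  set g : ι → ι → V := fun i j =>
    (a j ^ 2) • D i i - (a i * a j) • C i j + (a i ^ 2) • D i j with hg
  have h1 : (∑ i, ∑ j, if i = j then 0 else g i j + g j i) =
      (2 : ℂ) • ((∑ i, ∑ j, g i j) - ∑ i, (a i ^ 2) • D i i) := by
    have hs : ∀ i j, (if i = j then 0 else g i j + g j i) =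
        g i j + g j i - if i = j then (2 : ℂ) • (a i ^ 2) • D i i else 0 := by
      intro i j
      split_ifs with h
      · subst h
        simp only [hg, hCD]
        module
      · simp
    simp only [hs, Finset.sum_sub_distrib, Finset.sum_add_distrib]
    rw [Finset.sum_comm (f := fun i j => g j i)]
    simp only [Finset.sum_ite_eq, Finset.mem_univ, if_true, ← Finset.smul_sum]
    module
  have h2 : (∑ i, ∑ j, g i j) = T • (∑ i, D i i) - (∑ i, ∑ j, (a i * a j) • C i j) +
      ∑ i, ∑ j, (a i ^ 2) • D i j := by
    simp only [hg, Finset.sum_sub_distrib, Finset.sum_add_distrib, ← Finset.sum_smul, ← hT,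
      Finset.smul_sum]
  have h3 : (∑ i, ∑ j, (if i = j then (1 - β) * T else T - β * a i ^ 2) • D i j) =
      T • (∑ i, ∑ j, D i j) - β • (∑ i, ∑ j, (a i ^ 2) • D i j) -
        (β * T) • (∑ i, D i i) + β • ∑ i, (a i ^ 2) • D i i := by
    have hs : ∀ i j, (if i = j then (1 - β) * T else T - β * a i ^ 2) • D i j =
        T • D i j - β • (a i ^ 2) • D i j +
          if i = j then -((β * T) • D i i) + β • (a i ^ 2) • D i i else 0 := by
      intro i j
      split_ifs with h
      · subst h
        module
      · module
    simp only [hs, Finset.sum_sub_distrib, Finset.sum_add_distrib, Finset.sum_ite_eq,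
      Finset.mem_univ, if_true, Finset.smul_sum, Finset.sum_neg_distrib]
    abel
  change _ = (β / 2) • (∑ i, ∑ j, if i = j then 0 else g i j + g j i) + _
  rw [h1, h2, h3]
  module

theorem one_decomp (e : A → A → ℂ) (f : A → B → ℂ) (hE : ∑ i, outer (e i) (e i) = 1) :
    (1 : Matrix (A × B) (A × B) ℂ) =
      (1 : Matrix A A ℂ) ⊗ₖ (1 - ∑ i, outer (f i) (f i)) +
      ∑ i, ∑ j, outer (e i) (e i) ⊗ₖ outer (f j) (f j) := by
  have : ∑ i, ∑ j, outer (e i) (e i) ⊗ₖ outer (f j) (f j) =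
      (∑ i, outer (e i) (e i)) ⊗ₖ (∑ j, outer (f j) (f j)) := by
    ext ⟨x, y⟩ ⟨x', y'⟩
    simp only [Matrix.sum_apply, kroneckerMap_apply, Finset.sum_mul_sum]
  rw [this, hE, ← kronecker_add, sub_add_cancel, one_kronecker_one]

theorem combine (e : A → A → ℂ) (f : A → B → ℂ) (a : A → ℝ) (ha : ∀ i, 0 ≤ a i)
    (hE : ∑ i, outer (e i) (e i) = 1)
    (hP : (1 - ∑ i, outer (f i) (f i)).PosSemidef) (α : ℝ) (h1 : -1 ≤ α) (h2 : α ≤ 2)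
    (T : ℝ) (hT : T = ∑ i, a i ^ 2) :
    (T : ℂ) • (1 : Matrix (A × B) (A × B) ℂ) +
      (α : ℂ) • ∑ i, ∑ j, ((a i : ℂ) * (a j : ℂ)) • (outer (e i) (e j) ⊗ₖ outer (f i) (f j))
      ∈ cone A B := by
  have hle : ∀ i, a i ^ 2 ≤ T := fun i => by
    rw [hT]
    exact Finset.single_le_sum (f := fun i => a i ^ 2) (fun j _ => sq_nonneg _) (Finset.mem_univ i)
  have hT0 : 0 ≤ T := by rw [hT]; positivity
  have hle2 : ∀ i j, i ≠ j → a i ^ 2 + a j ^ 2 ≤ T := fun i j hij => by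
    rw [hT, ← Finset.sum_pair (f := fun i => a i ^ 2) hij]
    exact Finset.sum_le_sum_of_subset_of_nonneg (Finset.subset_univ _) (fun _ _ _ => sq_nonneg _)
  have hDmem : ∀ i j, outer (e i) (e i) ⊗ₖ outer (f j) (f j) ∈ cone A B :=
    fun i j => kron_mem (outer_psd _) (outer_psd _)
  have hR : (T : ℂ) • ((1 : Matrix A A ℂ) ⊗ₖ (1 - ∑ i, outer (f i) (f i))) ∈ cone A B :=
    smul_mem hT0 (kron_mem PosSemidef.one hP)
  rw [one_decomp e f hE, smul_add, add_assoc]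
  refine add_mem hR ?_
  rcases le_total 0 α with hα | hα
  · have hc := smul_mem hα (core_s2 (fun i => ((√(a i) : ℝ) : ℂ) • e i)
      (fun i => ((√(a i) : ℝ) : ℂ) • f i))
    have hd : ∑ i, ∑ j, ((T - (if i = j then 0 else α * (a i * a j)) : ℝ) : ℂ) •
        (outer (e i) (e i) ⊗ₖ outer (f j) (f j)) ∈ cone A B := by
      refine sum_mem fun i _ => sum_mem fun j _ => smul_mem ?_ (hDmem i j)
      split_ifs with h
      · simpa using hT0
      · have := hle2 i j h
        nlinarith [sq_nonneg (a i - a j), mul_nonneg (ha i) (ha j)]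
    convert add_mem hc hd using 1
    simp only [outer_smul, smul_kronecker, kronecker_smul, smul_add, Finset.smul_sum,
      ← Finset.sum_add_distrib]
    have hsq : ∀ i, ((√(a i) : ℝ) : ℂ) * ((√(a i) : ℝ) : ℂ) = (a i : ℂ) := fun i => by
      rw [← Complex.ofReal_mul, Real.mul_self_sqrt (ha i)]
    refine Finset.sum_congr rfl fun i _ => Finset.sum_congr rfl fun j _ => ?_
    by_cases h : i = j
    · subst h
      simp only [if_true, Complex.ofReal_mul, hsq]
      push_cast
      module
    · simp only [if_neg h, Real.mul_self_sqrt (ha _), Complex.ofReal_mul, Complex.ofReal_sub]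
      rw [smul_smul (((√(a i) : ℝ) : ℂ) * ((√(a j) : ℝ) : ℂ)),
        show ((√(a i) : ℝ) : ℂ) * ((√(a j) : ℝ) : ℂ) * (((√(a i) : ℝ) : ℂ) * ((√(a j) : ℝ) : ℂ))
          = (((√(a i) : ℝ) : ℂ) * ((√(a i) : ℝ) : ℂ)) * (((√(a j) : ℝ) : ℂ) * ((√(a j) : ℝ) : ℂ))
          by ring, hsq, hsq]
      module
  · have hid := comb_identity (fun i j => outer (e i) (e i) ⊗ₖ outer (f j) (f j))
      (fun i j => outer (e i) (e j) ⊗ₖ outer (f i) (f j)) (fun i => rfl)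
      (fun i => (a i : ℂ)) (T : ℂ) ((-α : ℝ) : ℂ) (by rw [hT]; push_cast; rfl)
    rw [← Complex.ofReal_neg, neg_neg] at hid
    rw [hid]
    refine add_mem ?_ ?_
    · rw [show (((-α : ℝ) : ℂ) / 2) = ((-α / 2 : ℝ) : ℂ) by push_cast; ring]
      refine smul_mem (by linarith) (sum_mem fun i _ => sum_mem fun j _ => ?_)
      split_ifs with h
      · exact zero_mem _
      · have hc := core_s2 (ι := Fin 2) ![e i, e j]
          ![((a j : ℝ) : ℂ) • f i, ((-a i : ℝ) : ℂ) • f j]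
        simp only [Fin.sum_univ_two, Matrix.cons_val_zero, Matrix.cons_val_one, outer_smul,
          kronecker_smul, if_true, Fin.isValue, zero_ne_one, one_ne_zero, if_false] at hc
        convert hc using 1
        push_cast
        module
    · refine sum_mem fun i _ => sum_mem fun j _ => ?_
      have := smul_mem (c := if i = j then (1 - -α) * T else T - -α * a i ^ 2) (by
        split_ifs
        · nlinarith
        · nlinarith [hle i, sq_nonneg (a i)]) (hDmem i j)
      convert this using 2
      split_ifs <;> push_cast <;> rfl

theorem schmidt (M : Matrix A B ℂ) : ∃ (e : A → A → ℂ) (f : A → B → ℂ) (a : A → ℝ),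
    (∀ i, 0 ≤ a i) ∧ (∑ i, outer (e i) (e i) = 1) ∧
    (1 - ∑ i, outer (f i) (f i)).PosSemidef ∧
    (∀ x y, M x y = ∑ i, (a i : ℂ) * (e i x * f i y)) ∧
    ((∑ i, a i ^ 2 : ℝ) : ℂ) = (M * Mᴴ).trace := by
  have hS : (M * Mᴴ).PosSemidef := posSemidef_self_mul_conjTranspose M
  set U : Matrix A A ℂ := (hS.isHermitian.eigenvectorUnitary : Matrix A A ℂ) with hU
  set lam := hS.isHermitian.eigenvalues with hlam
  have hUU : U * Uᴴ = 1 := Unitary.coe_mul_star_self hS.isHermitian.eigenvectorUnitary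
  have hUU' : Uᴴ * U = 1 := Unitary.coe_star_mul_self hS.isHermitian.eigenvectorUnitary
  have hspec : M * Mᴴ = U * diagonal (fun i => (lam i : ℂ)) * Uᴴ := by
    have := hS.isHermitian.spectral_theorem
    rwa [Unitary.conjStarAlgAut_apply] at this
  have hl0 : ∀ i, 0 ≤ lam i := hS.eigenvalues_nonneg
  set W : Matrix A B ℂ := Uᴴ * M with hW
  have hWW : W * Wᴴ = diagonal (fun i => (lam i : ℂ)) := by
    rw [hW, conjTranspose_mul, conjTranspose_conjTranspose, Matrix.mul_assoc,
      ← Matrix.mul_assoc M, hspec]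
    rw [show Uᴴ * (U * diagonal (fun i => (lam i : ℂ)) * Uᴴ * U) =
      (Uᴴ * U) * diagonal (fun i => (lam i : ℂ)) * (Uᴴ * U) by simp only [Matrix.mul_assoc], hUU']
    simp
  have hM : M = U * W := by rw [hW, ← Matrix.mul_assoc, hUU, Matrix.one_mul]
  have hrow : ∀ i j, ∑ y, W i y * star (W j y) = if i = j then (lam i : ℂ) else 0 := by
    intro i j
    have := congrFun (congrFun hWW i) j
    rw [Matrix.mul_apply, diagonal_apply] at this
    exact this
  let a : A → ℝ := fun i => √(lam i)
  have haa : ∀ i, (a i : ℂ) * (a i : ℂ) = lam i := fun i => by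
    rw [← Complex.ofReal_mul, Real.mul_self_sqrt (hl0 i)]
  let f : A → B → ℂ := fun i y => (a i : ℂ)⁻¹ * W i y
  have hf : ∀ i y, (a i : ℂ) * f i y = W i y := by
    intro i y
    by_cases h : (a i : ℂ) = 0
    · have hl : (lam i : ℂ) = 0 := by rw [← haa, h, zero_mul]
      have h0 := hrow i i
      rw [if_pos rfl, hl] at h0
      have : W i = 0 := by
        have := dotProduct_star_self_eq_zero (v := W i)
        refine this.1 ?_
        rw [← h0]
        exact Finset.sum_congr rfl fun y _ => mul_comm _ _
      simp [h, this]
    · simp only [f]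
      field_simp
  refine ⟨fun i x => U x i, f, a, fun i => Real.sqrt_nonneg _, ?_, ?_, ?_, ?_⟩
  · rw [← hUU]
    ext x y
    simp [Matrix.sum_apply, outer, Matrix.mul_apply]
  · have hff : ∀ i j, (∑ y, star (f i y) * f j y) • outer (f i) (f j) =
        if i = j then outer (f i) (f j) else 0 := by
      intro i j
      have e1 : ∑ y, star (f i y) * f j y =
          (a i : ℂ)⁻¹ * (a j : ℂ)⁻¹ * ∑ y, W j y * star (W i y) := by
        rw [Finset.mul_sum]
        refine Finset.sum_congr rfl fun y _ => ?_
        simp [f]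
        ring
      rw [e1, hrow]
      by_cases h : i = j
      · subst h
        simp only [if_true, ← haa]
        by_cases h0 : (a i : ℂ) = 0
        · have : f i = 0 := by ext y; simp [f, h0]
          ext y y'
          simp [outer, this]
        · rw [show (a i : ℂ)⁻¹ * (a i : ℂ)⁻¹ * ((a i : ℂ) * (a i : ℂ)) = 1 by field_simp, one_smul]
      · simp [h, Ne.symm h]
    set P := ∑ i, outer (f i) (f i) with hP
    have hPh : Pᴴ = P := by
      ext y y'
      simp [hP, Matrix.sum_apply, outer, mul_comm]
    have hPP : P * P = P := by
      have hmul : ∀ i j, outer (f i) (f i) * outer (f j) (f j) =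
          (∑ y, star (f i y) * f j y) • outer (f i) (f j) := by
        intro i j
        ext y y'
        simp only [outer, Matrix.mul_apply, Matrix.smul_apply, smul_eq_mul, Finset.sum_mul]
        refine Finset.sum_congr rfl fun z _ => ?_
        ring
      rw [hP, Finset.sum_mul_sum]
      simp only [hmul, hff, Finset.sum_ite_eq, Finset.mem_univ, if_true]
    have : 1 - P = (1 - P)ᴴ * (1 - P) := by
      rw [conjTranspose_sub, conjTranspose_one, hPh]
      rw [sub_mul, mul_sub, mul_sub, hPP]
      simp
    rw [this]
    exact posSemidef_conjTranspose_mul_self _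
  · intro x y
    conv_lhs => rw [hM, Matrix.mul_apply]
    refine Finset.sum_congr rfl fun i _ => ?_
    rw [← hf]
    ring
  · rw [hspec, Matrix.trace_mul_comm, ← Matrix.mul_assoc, hUU', Matrix.one_mul, trace_diagonal]
    push_cast
    refine Finset.sum_congr rfl fun i _ => ?_
    rw [sq, haa]

theorem pure_case (ψ : A × B → ℂ) (α : ℝ) (h1 : -1 ≤ α) (h2 : α ≤ 2) :
    (∑ z, ψ z * star (ψ z)) • (1 : Matrix (A × B) (A × B) ℂ) + (α : ℂ) • outer ψ ψ
      ∈ cone A B := by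
  obtain ⟨e, f, a, ha, hE, hP, hM, hT⟩ := schmidt (Matrix.of fun x y => ψ (x, y))
  have h := combine e f a ha hE hP α h1 h2 _ rfl
  rw [hT] at h
  convert h using 2
  · congr 1
    simp [Matrix.trace, Matrix.mul_apply, Fintype.sum_prod_type]
  · congr 1
    ext ⟨x, y⟩ ⟨x', y'⟩
    have hψ : ∀ x y, ψ (x, y) = ∑ i, (a i : ℂ) * (e i x * f i y) := hM
    simp only [outer, hψ, star_sum, Finset.sum_mul_sum, Matrix.sum_apply, Matrix.smul_apply,
      kroneckerMap_apply, smul_eq_mul, star_mul']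
    refine Finset.sum_congr rfl fun i _ => Finset.sum_congr rfl fun j _ => ?_
    rw [show star (a j : ℂ) = (a j : ℂ) from Complex.conj_ofReal _]
    ring

theorem psd_case (ρ : Matrix (A × B) (A × B) ℂ) (hρ : ρ.PosSemidef) (α : ℝ) (h1 : -1 ≤ α)
    (h2 : α ≤ 2) :
    ρ.trace • (1 : Matrix (A × B) (A × B) ℂ) + (α : ℂ) • ρ ∈ cone A B := by
  obtain ⟨C, hC⟩ : ∃ C : Matrix (A × B) (A × B) ℂ, ρ = C * Cᴴ := by
    open scoped MatrixOrder in
    obtain ⟨C, hC⟩ := CStarAlgebra.nonneg_iff_eq_star_mul_self.mp hρ.nonneg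
    exact ⟨Cᴴ, by rw [hC, conjTranspose_conjTranspose]; rfl⟩
  have hsum : ρ = ∑ k, outer (fun z => C z k) (fun z => C z k) := by
    rw [hC]
    ext z z'
    simp [Matrix.mul_apply, Matrix.sum_apply, outer]
  have : ρ.trace • (1 : Matrix (A × B) (A × B) ℂ) + (α : ℂ) • ρ =
      ∑ k, ((∑ z, C z k * star (C z k)) • (1 : Matrix (A × B) (A × B) ℂ) +
        (α : ℂ) • outer (fun z => C z k) (fun z => C z k)) := by
    rw [Finset.sum_add_distrib, ← Finset.smul_sum, ← hsum, ← Finset.sum_smul, Finset.sum_comm]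
    congr 2
    rw [hC]
    simp [Matrix.trace, Matrix.mul_apply]
  rw [this]
  exact sum_mem fun k _ => pure_case _ α h1 h2

theorem cone_fin {M : Matrix (A × B) (A × B) ℂ} (hM : M ∈ cone A B) :
    ∃ (K : ℕ) (P : Fin K → Matrix A A ℂ) (Q : Fin K → Matrix B B ℂ),
      (∀ k, (P k).PosSemidef) ∧ (∀ k, (Q k).PosSemidef) ∧
      ∀ x y x' y', M (x, y) (x', y') = ∑ k, P k x x' * Q k y y' := by
  induction hM using AddSubmonoid.closure_induction with
  | mem x hx =>
    obtain ⟨P, Q, hP, hQ, rfl⟩ := hx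
    exact ⟨1, fun _ => P, fun _ => Q, fun _ => hP, fun _ => hQ, by simp [kroneckerMap_apply]⟩
  | zero => exact ⟨0, fun _ => 0, fun _ => 0, fun k => k.elim0, fun k => k.elim0, by simp⟩
  | add M₁ M₂ _ _ hx hy =>
    obtain ⟨K, P, Q, hP, hQ, h⟩ := hx
    obtain ⟨K', P', Q', hP', hQ', h'⟩ := hy
    refine ⟨K + K', Fin.append P P', Fin.append Q Q', ?_, ?_, ?_⟩
    · intro k
      refine Fin.addCases (fun i => ?_) (fun i => ?_) k <;> simp [hP, hP']
    · intro k
      refine Fin.addCases (fun i => ?_) (fun i => ?_) k <;> simp [hQ, hQ']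
    · intro x y x' y'
      simp [Fin.sum_univ_add, h, h']

/-- Splitting configurations along a subset. -/
def splitEquiv {N : ℕ} (X : Finset (Fin N)) :
    (Fin N → Fin 2) ≃ ({i // i ∈ X} → Fin 2) × ({i // i ∈ Xᶜ} → Fin 2) where
  toFun x := (fun i => x i.1, fun i => x i.1)
  invFun p := fun i => if h : i ∈ X then p.1 ⟨i, h⟩ else p.2 ⟨i, Finset.mem_compl.2 h⟩
  left_inv x := by
    funext i
    by_cases h : i ∈ X <;> simp [h]
  right_inv p := by
    ext i
    · simp [i.2]
    · have := Finset.mem_compl.1 i.2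
      simp [this]

end SepAux

/-- The reduction map makes every PSD `N`-qubit operator separable across every
bipartition `X : Xᶜ` with `|X| = n`, for `-1 ≤ α ≤ 2`. -/
theorem stmt2 (N n : ℕ) (hN : 2 ≤ N) (hn1 : 1 ≤ n) (hn2 : n < N)
    (ρ : Matrix (Fin N → Fin 2) (Fin N → Fin 2) ℂ) (hρ : ρ.PosSemidef)
    (α : ℝ) (hα1 : -1 ≤ α) (hα2 : α ≤ 2)
    (X : Finset (Fin N)) (hX : X.card = n) :
    SepAcross X
      (ρ.trace • (1 : Matrix (Fin N → Fin 2) (Fin N → Fin 2) ℂ) + (α : ℂ) • ρ) := by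
  classical
  have hρ' : (ρ.submatrix (SepAux.splitEquiv X).symm (SepAux.splitEquiv X).symm).PosSemidef :=
    hρ.submatrix _
  have h := SepAux.psd_case _ hρ' α hα1 hα2
  obtain ⟨K, P, Q, hP, hQ, hs⟩ := SepAux.cone_fin h
  refine ⟨K, P, Q, hP, hQ, fun x y => ?_⟩
  rw [← hs (fun i => x i.1) (fun i => x i.1) (fun i => y i.1) (fun i => y i.1)]
  have hx : ∀ x, ((fun i => x i.1, fun i => x i.1) :
      ({i // i ∈ X} → Fin 2) × ({i // i ∈ Xᶜ} → Fin 2)) = SepAux.splitEquiv X x := fun x => rfl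
  have htr : (ρ.submatrix (SepAux.splitEquiv X).symm (SepAux.splitEquiv X).symm).trace
      = ρ.trace := by
    simp only [Matrix.trace, Matrix.diag_apply, Matrix.submatrix_apply]
    exact Equiv.sum_comp (SepAux.splitEquiv X).symm (fun z => ρ z z)
  rw [hx, hx, htr]
  simp only [Matrix.add_apply, Matrix.smul_apply, Matrix.submatrix_apply, Matrix.one_apply,
    Equiv.symm_apply_apply, EmbeddingLike.apply_eq_iff_eq]
end
end

section
/- Let N = 2 and let ρ be a positive semidefinite 2-qubit operator supported on the symmetric subspace, i.e. 𝟙_S · ρ · 𝟙_S = ρ. Then for every real α with −3/4 ≤ α ≤ 1, the matrix σ = Tr(ρ)·𝟙_S + α·ρ is separable across the bipartition {0} : {1}. -/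
open scoped ComplexOrder

noncomputable section

lemma sep_zero {N : ℕ} (X : Finset (Fin N)) : SepAcross X 0 :=
  ⟨0, fun _ => 0, fun _ => 0, fun k => k.elim0, fun k => k.elim0, by intro x y; simp⟩

lemma sep_add {N : ℕ} (X : Finset (Fin N)) {σ τ : Matrix (Fin N → Fin 2) (Fin N → Fin 2) ℂ}
    (h1 : SepAcross X σ) (h2 : SepAcross X τ) : SepAcross X (σ + τ) := by
  obtain ⟨K, A, B, hA, hB, h⟩ := h1
  obtain ⟨L, A', B', hA', hB', h'⟩ := h2
  refine ⟨K + L, Fin.append A A', Fin.append B B', ?_, ?_, ?_⟩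
  · intro k
    refine Fin.addCases (fun i => ?_) (fun i => ?_) k
    · simpa using hA i
    · simpa using hA' i
  · intro k
    refine Fin.addCases (fun i => ?_) (fun i => ?_) k
    · simpa using hB i
    · simpa using hB' i
  · intro x y
    simp [Fin.sum_univ_add, h, h']

lemma sep_smul {N : ℕ} (X : Finset (Fin N)) {σ : Matrix (Fin N → Fin 2) (Fin N → Fin 2) ℂ}
    (h1 : SepAcross X σ) (c : ℝ) (hc : 0 ≤ c) : SepAcross X ((c : ℂ) • σ) := by
  obtain ⟨K, A, B, hA, hB, h⟩ := h1
  refine ⟨K, fun k => (c : ℂ) • A k, B, ?_, hB, ?_⟩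
  · intro k
    exact (hA k).smul (by exact_mod_cast hc)
  · intro x y
    simp [h, Finset.mul_sum, mul_assoc]

lemma sep_sum {N : ℕ} (X : Finset (Fin N)) {ι : Type*} (s : Finset ι)
    (σ : ι → Matrix (Fin N → Fin 2) (Fin N → Fin 2) ℂ)
    (h : ∀ i, SepAcross X (σ i)) : SepAcross X (∑ i ∈ s, σ i) := by
  classical
  induction s using Finset.induction_on with
  | empty => simpa using sep_zero X
  | insert a s ha ih => rw [Finset.sum_insert ha]; exact sep_add X (h a) ih

/-- Rank-one matrix. -/
def outer (f : (Fin 2 → Fin 2) → ℂ) : Matrix (Fin 2 → Fin 2) (Fin 2 → Fin 2) ℂ :=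
  fun x y => f x * star (f y)

/-- The projector onto the product vector z ⊗ z. -/
def prodProj (z : Fin 2 → ℂ) : Matrix (Fin 2 → Fin 2) (Fin 2 → Fin 2) ℂ :=
  fun x y => (z (x 0) * star (z (y 0))) * (z (x 1) * star (z (y 1)))

lemma sep_prod (z : Fin 2 → ℂ) : SepAcross {0} (prodProj z) := by
  refine ⟨1, fun _ => Matrix.vecMulVec (fun f => z (f ⟨0, by simp⟩))
      (star (fun f => z (f ⟨0, by simp⟩))),
    fun _ => Matrix.vecMulVec (fun f => z (f ⟨1, by simp⟩))
      (star (fun f => z (f ⟨1, by simp⟩))), ?_, ?_, ?_⟩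
  · intro _; exact Matrix.posSemidef_vecMulVec_self_star _
  · intro _; exact Matrix.posSemidef_vecMulVec_self_star _
  · intro x y
    simp [prodProj, Matrix.vecMulVec_apply]

lemma symProj_two (x y : Fin 2 → Fin 2) : symProj 2 x y =
    1 / 2 * ((if x 0 = y 0 then 1 else 0) * (if x 1 = y 1 then 1 else 0) +
      (if x 0 = y 1 then 1 else 0) * (if x 1 = y 0 then 1 else 0)) := by
  have hs : ((√2 : ℝ) : ℂ)⁻¹ * ((√2 : ℝ) : ℂ)⁻¹ = 1 / 2 := by
    rw [← mul_inv, ← Complex.ofReal_mul, Real.mul_self_sqrt (by norm_num)]; norm_num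
  have key : ∀ i j k l : Fin 2, symProj 2 ![i, j] ![k, l] =
    1 / 2 * ((if i = k then 1 else 0) * (if j = l then 1 else 0) +
      (if i = l then 1 else 0) * (if j = k then 1 else 0)) := by
    intro i j k l
    have hc : ∀ i j : Fin 2, (Finset.univ.filter (fun m : Fin 2 => (![i, j] : Fin 2 → Fin 2) m = 1)).card
        = (i : ℕ) + j := by decide
    simp only [symProj, dicke, hc]
    fin_cases i <;> fin_cases j <;> fin_cases k <;> fin_cases l <;>
      simp [hs] <;> norm_num
  have hx : x = ![x 0, x 1] := by ext i; fin_cases i <;> rfl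
  have hy : y = ![y 0, y 1] := by ext i; fin_cases i <;> rfl
  rw [hx, hy, key]; rfl

/-- Takagi-type vector: antilinear eigenvector. -/
lemma takagi_vec (S : Matrix (Fin 2) (Fin 2) ℂ) (hS : S.transpose = S) :
    ∃ (u : Fin 2 → ℂ) (s : ℝ), 0 ≤ s ∧ u ≠ 0 ∧ S.mulVec (star u) = (s : ℂ) • u := by
  have hp := Matrix.posSemidef_self_mul_conjTranspose S
  set u : Fin 2 → ℂ := (hp.1.eigenvectorBasis 0).ofLp with hu
  have hu0 : u ≠ 0 := by
    intro h
    have := hp.1.eigenvectorBasis.orthonormal.ne_zero 0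
    apply this
    ext i
    exact congrFun h i
  have he := hp.1.mulVec_eigenvectorBasis 0
  have hμ := hp.eigenvalues_nonneg 0
  set μ := hp.1.eigenvalues 0
  set s := √μ with hs
  have hss : (s : ℂ) * s = μ := by
    rw [← Complex.ofReal_mul, Real.mul_self_sqrt hμ]
  have hst : ∀ v : Fin 2 → ℂ, star (S.mulVec v) = (S.conjTranspose).mulVec (star v) := by
    intro v
    rw [Matrix.star_mulVec, ← Matrix.mulVec_transpose]
    congr 1
    ext i j
    exact congrArg star (congrFun (congrFun hS.symm i) j)
  have he' : S.mulVec (star (S.mulVec (star u))) = (μ : ℂ) • u := by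
    rw [hst, star_star, Matrix.mulVec_mulVec]
    exact he
  by_cases hw : S.mulVec (star u) + (s : ℂ) • u = 0
  · refine ⟨Complex.I • u, s, Real.sqrt_nonneg _, by simp [hu0], ?_⟩
    have : S.mulVec (star u) = - ((s : ℂ) • u) := eq_neg_of_add_eq_zero_left hw
    rw [star_smul, Matrix.mulVec_smul, this]
    ext i
    simp; ring
  · refine ⟨_, s, Real.sqrt_nonneg _, hw, ?_⟩
    rw [star_add, Matrix.mulVec_add, he', star_smul, Matrix.mulVec_smul, ← hss]
    have h3 : star (s : ℂ) = s := Complex.conj_ofReal s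
    rw [mul_smul, h3, ← smul_add, add_comm]

lemma exists_sq_phase (b : ℂ) : ∃ (w : ℂ) (r : ℝ), w * star w = 1 ∧ 0 ≤ r ∧ b = r * (w * w) := by
  refine ⟨Complex.exp ((b.arg / 2 : ℝ) * Complex.I), ‖b‖, ?_, norm_nonneg _, ?_⟩
  · have := Complex.mul_conj (Complex.exp ((b.arg / 2 : ℝ) * Complex.I))
    rw [Complex.normSq_eq_norm_sq, Complex.norm_exp_ofReal_mul_I] at this
    simpa using this
  · rw [← Complex.exp_add]
    conv_lhs => rw [← Complex.norm_mul_exp_arg_mul_I b]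
    congr 2
    push_cast; ring

lemma takagi (S : Matrix (Fin 2) (Fin 2) ℂ) (hS : S.transpose = S) :
    ∃ (u v : Fin 2 → ℂ) (a b : ℝ), 0 ≤ a ∧ 0 ≤ b ∧
      (∀ i j, u i * star (u j) + v i * star (v j) = if i = j then 1 else 0) ∧
      (∀ i j, star (u 0) * u 0 + star (u 1) * u 1 = 1 ∧ star (v 0) * v 0 + star (v 1) * v 1 = 1 ∧
        star (u 0) * v 0 + star (u 1) * v 1 = 0 ∧
        S i j = a * (u i * u j) + b * (v i * v j)) := by
  obtain ⟨u₀, s, hs, hu₀, he⟩ := takagi_vec S hS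
  obtain ⟨u, hu1, he⟩ : ∃ u : Fin 2 → ℂ, u 0 * star (u 0) + u 1 * star (u 1) = 1 ∧
      S.mulVec (star u) = (s : ℂ) • u := by
    set n : ℝ := Complex.normSq (u₀ 0) + Complex.normSq (u₀ 1) with hn
    have hn0 : 0 < n := by
      have h0 := Complex.normSq_nonneg (u₀ 0)
      have h1 := Complex.normSq_nonneg (u₀ 1)
      rcases (add_nonneg h0 h1).lt_or_eq with h | h
      · exact h
      · exfalso
        apply hu₀
        have e0 : Complex.normSq (u₀ 0) = 0 := by linarith
        have e1 : Complex.normSq (u₀ 1) = 0 := by linarith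
        ext i
        fin_cases i
        · simpa using e0
        · simpa using e1
    have hr : ((√n : ℝ) : ℂ)⁻¹ * ((√n : ℝ) : ℂ)⁻¹ * n = 1 := by
      rw [← mul_inv, ← Complex.ofReal_mul, Real.mul_self_sqrt hn0.le]
      exact inv_mul_cancel₀ (by exact_mod_cast hn0.ne')
    have hn' : (n : ℂ) = u₀ 0 * star (u₀ 0) + u₀ 1 * star (u₀ 1) := by
      simp [hn, Complex.mul_conj]
    refine ⟨((√n : ℝ) : ℂ)⁻¹ • u₀, ?_, ?_⟩
    · have h3 : star (((√n : ℝ) : ℂ)⁻¹) = ((√n : ℝ) : ℂ)⁻¹ := by simp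
      simp only [Pi.smul_apply, smul_eq_mul, star_mul', h3]
      rw [hn'] at hr
      linear_combination hr
    · rw [star_smul, Matrix.mulVec_smul, he, smul_comm]
      simp
  have e0 : S 0 0 * star (u 0) + S 0 1 * star (u 1) = s * u 0 := by
    simpa [Matrix.mulVec, dotProduct, Fin.sum_univ_two] using congrFun he 0
  have e1 : S 1 0 * star (u 0) + S 1 1 * star (u 1) = s * u 1 := by
    simpa [Matrix.mulVec, dotProduct, Fin.sum_univ_two] using congrFun he 1
  have es : S 1 0 = S 0 1 := congrFun (congrFun hS 0) 1
  obtain ⟨w, b, hw, hb, hbw⟩ := exists_sq_phase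
    (S 0 0 * u 1 * u 1 - 2 * S 0 1 * u 0 * u 1 + S 1 1 * u 0 * u 0)
  refine ⟨u, ![-(w * star (u 1)), w * star (u 0)], s, b, hs, hb, ?_, ?_⟩
  · intro i j
    fin_cases i <;> fin_cases j <;>
      simp [-Complex.star_def, -RCLike.star_def, star_mul', star_neg, star_star]
    · linear_combination hu1 + (star (u 1) * u 1) * hw
    · linear_combination (-star (u 1) * u 0) * hw
    · linear_combination (-star (u 0) * u 1) * hw
    · linear_combination hu1 + (star (u 0) * u 0) * hw
  · intro i j
    refine ⟨by linear_combination hu1, ?_, ?_, ?_⟩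
    · simp [-Complex.star_def, -RCLike.star_def, star_mul', star_neg, star_star]
      linear_combination hu1 + (u 0 * star (u 0) + u 1 * star (u 1)) * hw
    · simp [-Complex.star_def, -RCLike.star_def]; ring
    · rw [es] at e1
      fin_cases i <;> fin_cases j <;> simp [-Complex.star_def, -RCLike.star_def, es]
      · linear_combination u 0 * e0 + star (u 1) ^ 2 * hbw +
          u 0 * star (u 1) * (u 1 * e0 - u 0 * e1) +
          (-S 0 0 * (1 + u 1 * star (u 1)) + u 0 * star (u 1) * S 0 1) * hu1
      · linear_combination u 1 * e0 - star (u 0) * star (u 1) * hbw -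
          u 0 * star (u 0) * (u 1 * e0 - u 0 * e1) +
          (-S 0 1 * (1 + u 0 * star (u 0)) + S 0 0 * star (u 0) * u 1) * hu1
      · linear_combination u 1 * e0 - star (u 0) * star (u 1) * hbw -
          u 0 * star (u 0) * (u 1 * e0 - u 0 * e1) +
          (-S 0 1 * (1 + u 0 * star (u 0)) + S 0 0 * star (u 0) * u 1) * hu1
      · linear_combination u 1 * e1 + star (u 0) ^ 2 * hbw +
          u 1 * star (u 0) * (u 0 * e1 - u 1 * e0) +
          (-S 1 1 * (1 + u 0 * star (u 0)) + u 1 * star (u 0) * S 0 1) * hu1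

lemma pure_case (u v : Fin 2 → ℂ) (a b α : ℝ) (ha : 0 ≤ a) (hb : 0 ≤ b)
    (huv : ∀ i j, u i * star (u j) + v i * star (v j) = if i = j then 1 else 0)
    (hα1 : -(3 / 4 : ℝ) ≤ α) (hα2 : α ≤ 1) :
    SepAcross {0} (((a ^ 2 + b ^ 2 : ℝ) : ℂ) • symProj 2 + (α : ℂ) •
      outer (fun x => a * (u (x 0) * u (x 1)) + b * (v (x 0) * v (x 1)))) := by
  by_cases ht : a ^ 2 + b ^ 2 = 0
  · have ha0 : a = 0 := by nlinarith [sq_nonneg a, sq_nonneg b]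
    have hb0 : b = 0 := by nlinarith [sq_nonneg a, sq_nonneg b]
    subst ha0 hb0
    convert sep_zero _ using 1
    ext x y
    simp [outer]
  have hg : 0 < (a ^ 2 + b ^ 2) / 2 := by
    have : 0 ≤ a ^ 2 + b ^ 2 := by positivity
    have := lt_of_le_of_ne this (Ne.symm ht)
    linarith
  obtain ⟨g, hgdef⟩ : ∃ g, g = (a ^ 2 + b ^ 2) / 2 := ⟨_, rfl⟩
  obtain ⟨A, hA⟩ : ∃ A, A = 2 * g + α * a ^ 2 := ⟨_, rfl⟩
  obtain ⟨B, hB⟩ : ∃ B, B = 2 * g + α * b ^ 2 := ⟨_, rfl⟩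
  rw [← hgdef] at hg
  have hA0 : 0 < A := by nlinarith [sq_nonneg a, sq_nonneg b]
  have hab : a * b ≤ g := by nlinarith [sq_nonneg (a - b)]
  have hab0 : 0 ≤ a * b := mul_nonneg ha hb
  have hC1 : α * (a * b) ≤ g := by nlinarith
  have hC2 : -g ≤ α * (a * b) := by nlinarith
  have hAB : g ^ 2 ≤ A * B := by
    have : A * B = 4 * g ^ 2 * (1 + α) + (α * (a * b)) ^ 2 := by rw [hA, hB, hgdef]; ring
    rw [this]
    nlinarith [sq_nonneg (α * (a * b)), sq_nonneg g]
  obtain ⟨k, hk⟩ : ∃ k, k = √(g / A) := ⟨_, rfl⟩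
  have hk2 : k ^ 2 * A = g := by
    rw [hk, Real.sq_sqrt (by positivity)]; field_simp
  obtain ⟨c, hc⟩ : ∃ c, c = α * (a * b) / g := ⟨_, rfl⟩
  have hcg : c * g = α * (a * b) := by rw [hc]; field_simp
  have hc1 : c ≤ 1 := by rw [hc, div_le_one hg]; exact hC1
  have hc2 : -1 ≤ c := by rw [hc, le_div_iff₀ hg]; linarith
  have hD : 0 ≤ B - k ^ 2 * g := by
    have : 0 ≤ (B - k ^ 2 * g) * A := by nlinarith
    exact nonneg_of_mul_nonneg_left this hA0
  have hw1 : 0 ≤ A * (1 + c) / 4 := by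
    have : 0 ≤ 1 + c := by linarith
    positivity
  have hw2 : 0 ≤ A * (1 - c) / 4 := by
    have : 0 ≤ 1 - c := by linarith
    positivity
  have h1 := sep_smul _ (sep_prod (fun i => u i + k * v i)) _ hw1
  have h2 := sep_smul _ (sep_prod (fun i => u i - k * v i)) _ hw1
  have h3 := sep_smul _ (sep_prod (fun i => u i + Complex.I * k * v i)) _ hw2
  have h4 := sep_smul _ (sep_prod (fun i => u i - Complex.I * k * v i)) _ hw2
  have h5 := sep_smul _ (sep_prod v) _ hD
  convert sep_add _ (sep_add _ (sep_add _ (sep_add _ h1 h2) h3) h4) h5 using 1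
  have ek : (k : ℂ) ^ 2 * A = g := by exact_mod_cast hk2
  have ec : (c : ℂ) * g = α * (a * b) := by exact_mod_cast hcg
  have eA : (A : ℂ) = 2 * g + α * a ^ 2 := by exact_mod_cast hA
  have eB : (B : ℂ) = 2 * g + α * b ^ 2 := by exact_mod_cast hB
  have eg : (a : ℂ) ^ 2 + b ^ 2 = 2 * g := by rw [hgdef]; push_cast; ring
  have hI : Complex.I ^ 2 = -1 := Complex.I_sq
  ext x y
  have cI : star Complex.I = -Complex.I := Complex.conj_I
  have cr : ∀ r : ℝ, star (r : ℂ) = r := Complex.conj_ofReal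
  simp only [Matrix.add_apply, Matrix.smul_apply, symProj_two, ← huv, prodProj, outer, smul_eq_mul,
    star_add, star_sub, star_mul', cI, cr]
  push_cast
  rw [eg]
  generalize star (u (y 0)) = U0
  generalize star (u (y 1)) = U1
  generalize star (v (y 0)) = V0
  generalize star (v (y 1)) = V1
  generalize u (x 0) = u0
  generalize u (x 1) = u1
  generalize v (x 0) = v0
  generalize v (x 1) = v1
  clear huv h1 h2 h3 h4 h5
  linear_combination (-(u0 * u1 * U0 * U1)) * eA - (v0 * v1 * V0 * V1) * eB
    - (u0 * u1 * V0 * V1 + v0 * v1 * U0 * U1) * ec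
    - (c * (u0 * u1 * V0 * V1 + v0 * v1 * U0 * U1) + (u0 * v1 + v0 * u1) * (U0 * V1 + V0 * U1)
      + k ^ 2 * (v0 * v1 * V0 * V1)) * ek
    - A * (1 - c) / 4 * (2 * k ^ 2 * (v0 * v1 * U0 * U1 + u0 * u1 * V0 * V1
        - (u0 * v1 + v0 * u1) * (U0 * V1 + V0 * U1))
      + 2 * k ^ 4 * (v0 * v1 * V0 * V1) * (Complex.I ^ 2 - 1)) * hI

/-- Reduction map on the two-qubit symmetric subspace: separability for `-3/4 ≤ α ≤ 1`. -/
theorem stmt3 (ρ : Matrix (Fin 2 → Fin 2) (Fin 2 → Fin 2) ℂ) (hρ : ρ.PosSemidef)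
    (hsupp : symProj 2 * ρ * symProj 2 = ρ)
    (α : ℝ) (hα1 : -(3 / 4 : ℝ) ≤ α) (hα2 : α ≤ 1) :
    SepAcross {0} (ρ.trace • symProj 2 + (α : ℂ) • ρ) := by
  obtain ⟨C, hC⟩ : ∃ C : Matrix (Fin 2 → Fin 2) (Fin 2 → Fin 2) ℂ, ρ = C * C.conjTranspose := by
    open scoped MatrixOrder in
    obtain ⟨C, hC⟩ := CStarAlgebra.nonneg_iff_eq_mul_star_self.mp (Matrix.nonneg_iff_posSemidef.mpr hρ)
    exact ⟨C, hC⟩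
  have hPH : (symProj 2).conjTranspose = symProj 2 := by
    ext x y
    simp only [Matrix.conjTranspose_apply, symProj, star_sum, star_mul', star_star, mul_comm]
  set V := symProj 2 * C with hV
  have hρV : ρ = V * V.conjTranspose := by
    rw [hV, Matrix.conjTranspose_mul, hPH]
    conv_lhs => rw [← hsupp, hC]
    simp only [Matrix.mul_assoc]
  have hsym : ∀ i j z, V ![i, j] z = V ![j, i] z := by
    intro i j z
    have h2 : ∀ (i j : Fin 2) (y : Fin 2 → Fin 2), symProj 2 ![i, j] y =
        1 / 2 * ((if i = y 0 then 1 else 0) * (if j = y 1 then 1 else 0) +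
          (if i = y 1 then 1 else 0) * (if j = y 0 then 1 else 0)) :=
      fun i j y => symProj_two ![i, j] y
    simp only [hV, Matrix.mul_apply, h2]
    refine Finset.sum_congr rfl fun y _ => ?_
    ring
  have hsplit : ρ.trace • symProj 2 + (α : ℂ) • ρ = ∑ z, ((∑ x, V x z * star (V x z)) • symProj 2 +
      (α : ℂ) • outer (fun x => V x z)) := by
    rw [Finset.sum_add_distrib, ← Finset.sum_smul, ← Finset.smul_sum]
    congr 2
    · rw [hρV, Finset.sum_comm]
      simp [Matrix.trace, Matrix.mul_apply]
  rw [hsplit]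
  refine sep_sum _ _ _ fun z => ?_
  obtain ⟨u, v, a, b, ha, hb, huv, hS⟩ := takagi (fun i j => V ![i, j] z) (by
    ext i j; exact hsym j i z)
  have hVx : ∀ x, V x z = a * (u (x 0) * u (x 1)) + b * (v (x 0) * v (x 1)) := by
    intro x
    have hx : x = ![x 0, x 1] := by ext i; fin_cases i <;> rfl
    conv_lhs => rw [hx]
    exact (hS (x 0) (x 1)).2.2.2
  convert pure_case u v a b α ha hb huv hα1 hα2 using 2
  · congr 1
    simp only [hVx]
    obtain ⟨n1, n2, n3, -⟩ := hS 0 0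
    have n3' : star (v 0) * u 0 + star (v 1) * u 1 = 0 := by
      have := congrArg star n3
      simpa [-Complex.star_def, -RCLike.star_def, mul_comm] using this
    have cr : ∀ r : ℝ, star (r : ℂ) = r := Complex.conj_ofReal
    rw [← (finTwoArrowEquiv (Fin 2)).symm.sum_comp, Fintype.sum_prod_type]
    simp only [Fin.sum_univ_two, finTwoArrowEquiv_symm_apply, star_add, star_mul', cr]
    simp only [Matrix.cons_val_zero, Matrix.cons_val_one]
    push_cast
    linear_combination (a ^ 2 * (star (u 0) * u 0 + star (u 1) * u 1 + 1)) * n1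
      + (b ^ 2 * (star (v 0) * v 0 + star (v 1) * v 1 + 1)) * n2
      + (a * b * (star (u 0) * v 0 + star (u 1) * v 1)) * n3
      + (a * b * (star (v 0) * u 0 + star (v 1) * u 1)) * n3'
  · simp only [hVx]
end
end

section
/- Let N = 3 and let ρ be a positive semidefinite 3-qubit operator supported on the symmetric subspace, i.e. 𝟙_S · ρ · 𝟙_S = ρ. Then for every real α with −1/3 ≤ α ≤ 2/3, the matrix σ = Tr(ρ)·𝟙_S + α·ρ is fully separable. -/
open scoped ComplexOrder

noncomputable section

open scoped ComplexConjugate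


/-- The nonnegative quartic with zeros at `0` and infinity. -/
noncomputable def phi (A F : ℝ) (B C D E : ℂ) (z : ℂ) : ℝ :=
  A * Complex.normSq z ^ 2 + 2 * (B * z ^ 3 * conj z).re + 2 * (D * z ^ 2 * conj z).re
    + 2 * (C * z ^ 3).re + 2 * (E * z ^ 2).re + F * Complex.normSq z

noncomputable def qf (a b c d : ℂ) (z : ℂ) : ℂ := a * z ^ 2 + b * (z * conj z) + c * z + d * conj z

def Goal (A F : ℝ) (B C D E : ℂ) : Prop :=
  ∃ a b c d : ℂ, (a ≠ 0 ∨ b ≠ 0 ∨ c ≠ 0 ∨ d ≠ 0) ∧ ∀ z, phi A F B C D E z = 0 → qf a b c d z = 0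

noncomputable def fal (A : ℝ) (B : ℂ) (z : ℂ) : ℝ := A * Complex.normSq z + 2 * (B * z ^ 2).re
noncomputable def fbe (C D : ℂ) (z : ℂ) : ℝ := (D * z).re * Complex.normSq z + (C * z ^ 3).re

lemma phi_scale (A F : ℝ) (B C D E z : ℂ) (t : ℝ) :
    phi A F B C D E (t * z) = t ^ 2 * (Complex.normSq z * fal A B z * (t * t)
      + (2 * fbe C D z) * t + fal F E z) := by
  simp only [phi, fal, fbe, Complex.normSq_apply, pow_succ, pow_zero, one_mul, Complex.mul_re, Complex.mul_im,
    Complex.conj_re, Complex.conj_im, Complex.ofReal_re, Complex.ofReal_im]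
  ring

lemma phi_rot (A F : ℝ) (B C D E z₀ z : ℂ) :
    phi (A * Complex.normSq z₀ ^ 2) (F * Complex.normSq z₀) (B * z₀ ^ 3 * conj z₀) (C * z₀ ^ 3)
      (D * z₀ ^ 2 * conj z₀) (E * z₀ ^ 2) z = phi A F B C D E (z₀ * z) := by
  simp only [phi, map_mul]
  ring_nf

lemma goal_rot (A F : ℝ) (B C D E z₀ : ℂ) (h0 : z₀ ≠ 0)
    (h : Goal (A * Complex.normSq z₀ ^ 2) (F * Complex.normSq z₀) (B * z₀ ^ 3 * conj z₀) (C * z₀ ^ 3)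
      (D * z₀ ^ 2 * conj z₀) (E * z₀ ^ 2)) : Goal A F B C D E := by
  obtain ⟨a, b, c, d, hne, hz⟩ := h
  have hc : conj z₀ ≠ 0 := by simpa using h0
  refine ⟨a / z₀ ^ 2, b / (z₀ * conj z₀), c / z₀, d / conj z₀, ?_, ?_⟩
  · simpa [h0] using hne
  · intro z h
    have := hz (z / z₀) (by rw [phi_rot, mul_div_cancel₀ _ h0]; exact h)
    rw [← this]
    simp only [qf, map_div₀]
    field_simp

lemma nonneg_quad {a b c : ℝ} (h : ∀ t : ℝ, t ≠ 0 → 0 ≤ a * (t * t) + b * t + c) :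
    ∀ t : ℝ, 0 ≤ a * (t * t) + b * t + c := by
  have hcl : IsClosed {t : ℝ | 0 ≤ a * (t * t) + b * t + c} :=
    isClosed_le continuous_const (by fun_prop)
  have hd : Dense ({0}ᶜ : Set ℝ) := dense_compl_singleton 0
  intro t
  have := hcl.closure_subset_iff.2 (show ({0}ᶜ : Set ℝ) ⊆ _ from fun t ht => h t ht) (hd t)
  exact this

section
variable {A F : ℝ} {B C D E : ℂ}

lemma quad_nonneg (hp : ∀ z, 0 ≤ phi A F B C D E z) (z : ℂ) (t : ℝ) :
    0 ≤ Complex.normSq z * fal A B z * (t * t) + (2 * fbe C D z) * t + fal F E z := by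
  refine nonneg_quad (fun t ht => ?_) t
  have := hp (t * z)
  rw [phi_scale] at this
  exact nonneg_of_mul_nonneg_right this (by positivity)

lemma disc_le (hp : ∀ z, 0 ≤ phi A F B C D E z) (z : ℂ) : fbe C D z ^ 2 ≤ Complex.normSq z * fal A B z * fal F E z := by
  have := discrim_le_zero (quad_nonneg hp z)
  rw [discrim] at this
  nlinarith

lemma ga_nonneg (hp : ∀ z, 0 ≤ phi A F B C D E z) (z : ℂ) : 0 ≤ fal F E z := by
  simpa using quad_nonneg hp z 0

lemma al_nonneg (hp : ∀ z, 0 ≤ phi A F B C D E z) (z : ℂ) : 0 ≤ fal A B z := by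
  by_cases hz : z = 0
  · simp [hz, fal]
  have hn := Complex.normSq_pos.2 hz
  have h : 0 ≤ Complex.normSq z * fal A B z := by
    by_contra hneg
    push Not at hneg
    have h1 := quad_nonneg hp z
    have hd := disc_le hp z
    have hg := ga_nonneg hp z
    have hb : fbe C D z = 0 := by
      have : fbe C D z ^ 2 ≤ 0 := hd.trans (mul_nonpos_of_nonpos_of_nonneg hneg.le hg)
      nlinarith [sq_nonneg (fbe C D z), pow_eq_zero_iff (two_ne_zero) (a := fbe C D z) |>.1 (le_antisymm this (sq_nonneg _))]
    set a := Complex.normSq z * fal A B z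
    have := h1 (1 + fal F E z / (-a))
    rw [hb] at this
    have ha : 0 < -a := by linarith
    set s := fal F E z / (-a) with hs
    have hs0 : 0 ≤ s := div_nonneg hg ha.le
    have e : fal F E z = s * (-a) := by rw [hs, div_mul_cancel₀ _ ha.ne']
    rw [e] at this
    nlinarith [mul_nonneg hs0 ha.le, mul_nonneg (mul_nonneg hs0 hs0) ha.le]
  exact nonneg_of_mul_nonneg_right h hn

lemma zero_disc (hp : ∀ z, 0 ≤ phi A F B C D E z) {z : ℂ} (hz : phi A F B C D E z = 0) :
    Complex.normSq z * fal A B z * fal F E z - fbe C D z ^ 2 = 0 := by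
  have h1 := phi_scale A F B C D E z 1
  simp only [Complex.ofReal_one, one_mul, hz] at h1
  have hd := disc_le hp z
  set a := Complex.normSq z * fal A B z
  set c := fal F E z
  set b := fbe C D z
  have hb : b = -(a + c) / 2 := by linarith
  rw [hb] at hd ⊢
  nlinarith [sq_nonneg (a - c)]

/-- a quadratic form vanishing at 1 -/
lemma form_at_one {A : ℝ} {B : ℂ} (h : ∀ z, 0 ≤ fal A B z) (h1 : fal A B 1 = 0) :
    B = -(A / 2 : ℝ) := by
  have e : ∀ x y : ℝ, fal A B ⟨x, y⟩ = (A + 2 * B.re) * x ^ 2 + (A - 2 * B.re) * y ^ 2 - 4 * B.im * x * y := by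
    intro x y
    simp [fal, Complex.normSq_apply, pow_two]
    ring
  have h1' : A + 2 * B.re = 0 := by
    have := e 1 0
    rw [show (⟨1, 0⟩ : ℂ) = 1 from rfl, h1] at this
    linarith
  have him : B.im = 0 := by
    by_contra hb
    have := h ⟨(A - 2 * B.re + 1) / (4 * B.im), 1⟩
    rw [e, h1'] at this
    have e2 : 4 * B.im * ((A - 2 * B.re + 1) / (4 * B.im)) = A - 2 * B.re + 1 := by field_simp
    rw [e2] at this
    linarith
  apply Complex.ext <;> simp
  · linarith
  · exact him

set_option maxHeartbeats 1000000 in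
lemma caseI_one (hp : ∀ z, 0 ≤ phi A F B C D E z) (hne : A ≠ 0 ∨ F ≠ 0 ∨ B ≠ 0 ∨ C ≠ 0 ∨ D ≠ 0 ∨ E ≠ 0) (t : ℝ) (ht0 : t ≠ 0) (ht1 : t ≠ 1)
    (h1 : phi A F B C D E 1 = 0) (h2 : phi A F B C D E t = 0) : Goal A F B C D E := by
  have q1 := phi_scale A F B C D E 1 1
  have q2 := phi_scale A F B C D E 1 t
  have q3 := quad_nonneg hp 1 ((1 + t) / 2)
  have hal := al_nonneg hp 1
  simp only [mul_one, Complex.ofReal_one, h1, h2, one_pow, map_one, one_mul] at q1 q2 q3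
  have q2' : fal A B 1 * (t * t) + 2 * fbe C D 1 * t + fal F E 1 = 0 := by
    have : t ^ 2 ≠ 0 := by positivity
    simpa [this] using q2.symm
  have ht : 0 < (t - 1) ^ 2 := by
    have : t - 1 ≠ 0 := sub_ne_zero.2 ht1
    positivity
  have ha : fal A B 1 = 0 := by
    have : fal A B 1 * (t - 1) ^ 2 ≤ 0 := by nlinarith
    nlinarith
  have hb : fbe C D 1 = 0 := by
    rw [ha] at q1 q2'
    have : 2 * fbe C D 1 * (t - 1) = 0 := by linarith
    have h' : t - 1 ≠ 0 := sub_ne_zero.2 ht1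
    simpa [h'] using this
  have hg : fal F E 1 = 0 := by rw [ha, hb] at q1; linarith
  have hB := form_at_one (al_nonneg hp) ha
  have hE := form_at_one (ga_nonneg hp) hg
  have eal : ∀ x y : ℝ, fal A B ⟨x, y⟩ = 2 * A * y ^ 2 := by
    intro x y
    rw [hB]; simp [fal, Complex.normSq_apply, pow_two]; ring
  have ega : ∀ x y : ℝ, fal F E ⟨x, y⟩ = 2 * F * y ^ 2 := by
    intro x y
    rw [hE]; simp [fal, Complex.normSq_apply, pow_two]; ring
  have ebe : ∀ x y : ℝ, fbe C D ⟨x, y⟩ = (D.re * x - D.im * y) * (x ^ 2 + y ^ 2) +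
      C.re * (x ^ 3 - 3 * x * y ^ 2) - C.im * (3 * x ^ 2 * y - y ^ 3) := by
    intro x y
    simp [fbe, Complex.normSq_apply, pow_succ]; ring
  have hDr : D.re = - C.re := by
    have := ebe 1 0
    rw [show (⟨1, 0⟩ : ℂ) = 1 from rfl, hb] at this
    linarith
  have hDi : D.im = - 3 * C.im := by
    by_contra hne'
    -- fbe(1,y) = y (m + y r(y)), (m + y r)^2 ≤ 4 A F (1+y²) y²
    have key : ∀ y : ℝ, y ≠ 0 → 0 ≤ 4 * A * F * (1 + y ^ 2) * y ^ 2 -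
        ((-D.im - 3 * C.im) + y * (-4 * C.re) + y ^ 2 * (C.im - D.im)) ^ 2 := by
      intro y hy
      have := disc_le hp ⟨1, y⟩
      rw [eal, ega, ebe, hDr] at this
      have hn : Complex.normSq ⟨1, y⟩ = 1 + y ^ 2 := by simp [Complex.normSq_apply, pow_two]
      rw [hn] at this
      have h' : 0 ≤ y ^ 2 * (4 * A * F * (1 + y ^ 2) * y ^ 2 -
        ((-D.im - 3 * C.im) + y * (-4 * C.re) + y ^ 2 * (C.im - D.im)) ^ 2) := by
        nlinarith
      exact nonneg_of_mul_nonneg_right h' (by positivity)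
    have hcl : IsClosed {y : ℝ | 0 ≤ 4 * A * F * (1 + y ^ 2) * y ^ 2 -
        ((-D.im - 3 * C.im) + y * (-4 * C.re) + y ^ 2 * (C.im - D.im)) ^ 2} :=
      isClosed_le continuous_const (by fun_prop)
    have h0 := hcl.closure_subset_iff.2 (show ({0}ᶜ : Set ℝ) ⊆ _ from fun t ht => key t ht)
      (dense_compl_singleton (0:ℝ) 0)
    simp only [Set.mem_ofPred_eq] at h0
    have : -D.im - 3 * C.im ≠ 0 := fun h => hne' (by linarith)
    have : 0 < (-D.im - 3 * C.im) ^ 2 := by positivity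
    nlinarith
  have ephi : ∀ z : ℂ, phi A F B C D E z =
      2 * z.im ^ 2 * (A * (z.re ^ 2 + z.im ^ 2) + 4 * (C.im * z.im - C.re * z.re) + F) := by
    intro z
    have := phi_scale A F B C D E z 1
    simp only [Complex.ofReal_one, one_mul] at this
    have ez : z = ⟨z.re, z.im⟩ := rfl
    rw [this]
    rw [ez, eal, ega, ebe, hDr, hDi]
    simp only [Complex.normSq_mk]
    ring
  have hAF : 4 * Complex.normSq C ≤ A * F := by
    have key : ∀ x y : ℝ, y ≠ 0 → 4 * (C.re * x - C.im * y) ^ 2 ≤ A * F * (x ^ 2 + y ^ 2) := by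
      intro x y hy
      have := disc_le hp ⟨x, y⟩
      rw [eal, ega, ebe, hDr, hDi] at this
      simp only [Complex.normSq_mk] at this
      have h' : 0 ≤ y ^ 4 * (A * F * (x ^ 2 + y ^ 2) - 4 * (C.re * x - C.im * y) ^ 2) := by
        nlinarith
      have := nonneg_of_mul_nonneg_right h' (by positivity)
      linarith
    rw [Complex.normSq_apply]
    by_cases hci : C.im = 0
    · have hAFn : 0 ≤ A * F := by nlinarith [key 0 1 one_ne_zero, sq_nonneg C.im]
      have hcl : IsClosed {y : ℝ | 4 * (C.re * 1 - C.im * y) ^ 2 ≤ A * F * (1 ^ 2 + y ^ 2)} :=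
        isClosed_le (by fun_prop) (by fun_prop)
      have h0 := hcl.closure_subset_iff.2 (show ({0}ᶜ : Set ℝ) ⊆ _ from fun t ht => key 1 t ht)
        (dense_compl_singleton (0:ℝ) 0)
      simp only [Set.mem_ofPred_eq] at h0
      rw [hci] at *
      nlinarith
    · have := key C.re (-C.im) (neg_ne_zero.2 hci)
      have hpos : 0 < C.re ^ 2 + C.im ^ 2 := by positivity
      have h2 : (C.re ^ 2 + C.im ^ 2) * (4 * (C.re * C.re + C.im * C.im)) ≤ (C.re ^ 2 + C.im ^ 2) * (A * F) := by
        nlinarith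
      exact le_of_mul_le_mul_left h2 hpos
  by_cases hA : A = 0
  · have hC : C = 0 := by
      rw [hA] at hAF
      have : Complex.normSq C ≤ 0 := by linarith
      exact Complex.normSq_eq_zero.1 (le_antisymm this (Complex.normSq_nonneg _))
    have hF : F ≠ 0 := by
      intro hF
      have hD : D = 0 := by apply Complex.ext <;> simp [hDr, hDi, hC]
      rcases hne with h | h | h | h | h | h
      · exact h hA
      · exact h hF
      · exact h (by rw [hB, hA]; simp)
      · exact h hC
      · exact h hD
      · exact h (by rw [hE, hF]; simp)
    refine ⟨0, 0, 1, -1, by simp, fun z hz => ?_⟩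
    rw [ephi, hA, hC] at hz
    have : z.im = 0 := by simpa [hF] using hz
    simp only [qf]
    apply Complex.ext <;> simp [this]
  · refine ⟨A, -A, -2 * conj C, 2 * conj C, by simp [hA], fun z hz => ?_⟩
    have hq : qf A (-A) (-2 * conj C) (2 * conj C) z = (z - conj z) * (A * z - 2 * conj C) := by
      simp only [qf]; ring
    rw [hq]
    rw [ephi] at hz
    rcases mul_eq_zero.1 hz with h | h
    · have : z.im = 0 := by simpa using h
      have : z - conj z = 0 := by apply Complex.ext <;> simp [this]
      rw [this, zero_mul]
    · have h3 : (A * z.re - 2 * C.re) ^ 2 + (A * z.im + 2 * C.im) ^ 2 ≤ 0 := by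
        rw [Complex.normSq_apply] at hAF
        have : (A * z.re - 2 * C.re) ^ 2 + (A * z.im + 2 * C.im) ^ 2 = 
          A * (A * (z.re ^ 2 + z.im ^ 2) + 4 * (C.im * z.im - C.re * z.re) + F) - (A * F - 4 * (C.re * C.re + C.im * C.im)) := by ring
        rw [this, h]; linarith
      have h4 : A * z.re - 2 * C.re = 0 := by
        apply pow_eq_zero_iff two_ne_zero |>.1; linarith [sq_nonneg (A * z.re - 2 * C.re), sq_nonneg (A * z.im + 2 * C.im)]
      have h5 : A * z.im + 2 * C.im = 0 := by
        apply pow_eq_zero_iff two_ne_zero |>.1; linarith [sq_nonneg (A * z.re - 2 * C.re), sq_nonneg (A * z.im + 2 * C.im)]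
      have : (A : ℂ) * z - 2 * conj C = 0 := by
        apply Complex.ext <;> simp <;> linarith
      rw [this, mul_zero]

end


lemma caseI {A F : ℝ} {B C D E : ℂ} (hp : ∀ z, 0 ≤ phi A F B C D E z)
    (hne : A ≠ 0 ∨ F ≠ 0 ∨ B ≠ 0 ∨ C ≠ 0 ∨ D ≠ 0 ∨ E ≠ 0) (z : ℂ) (hz : z ≠ 0) (t : ℝ) (ht0 : t ≠ 0)
    (ht1 : t ≠ 1) (h1 : phi A F B C D E z = 0) (h2 : phi A F B C D E (t * z) = 0) :
    Goal A F B C D E := by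
  apply goal_rot A F B C D E z hz
  apply caseI_one (t := t) _ _ ht0 ht1
  · rw [phi_rot]; simpa using h1
  · rw [phi_rot, mul_comm]; exact h2
  · intro w; rw [phi_rot]; exact hp _
  · simpa [hz] using hne

open Polynomial in
lemma three_double (P : ℝ[X]) (hd : P.natDegree < 6) (a b c : ℝ) (hab : a ≠ b) (hac : a ≠ c) (hbc : b ≠ c)
    (hp : ∀ t, 0 ≤ P.eval t) (ha : P.eval a = 0) (hb : P.eval b = 0) (hc : P.eval c = 0) : P = 0 := by
  by_contra hP
  have key : ∀ t, P.eval t = 0 → (X - C t) ^ 2 ∣ P := by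
    intro t ht
    have hder : P.derivative.eval t = 0 := by
      have hm : IsLocalMin (fun s => P.eval s) t := Filter.Eventually.of_forall (fun s => by
        simp only [ht]; exact hp s)
      exact hm.hasDerivAt_eq_zero (P.hasDerivAt t)
    have := (Polynomial.one_lt_rootMultiplicity_iff_isRoot hP (t := t)).2 ⟨ht, hder⟩
    exact (Polynomial.le_rootMultiplicity_iff hP).1 this
  have cop : ∀ s t : ℝ, s ≠ t → IsCoprime ((X - C s) ^ 2) ((X - C t) ^ 2) := fun s t h =>
    (isCoprime_X_sub_C_of_isUnit_sub (by simpa [sub_eq_zero] using h)).pow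
  have h1 := (cop a b hab).mul_dvd (key a ha) (key b hb)
  have h2 := (IsCoprime.mul_left (cop a c hac) (cop b c hbc)).mul_dvd h1 (key c hc)
  have h3 := natDegree_le_of_dvd h2 hP
  have m : ∀ t : ℝ, ((X - C t) ^ 2).Monic := fun t => (monic_X_sub_C t).pow 2
  rw [((m a).mul (m b)).natDegree_mul (m c), (m a).natDegree_mul (m b)] at h3
  simp only [natDegree_pow, natDegree_X_sub_C] at h3
  omega

open Polynomial in
noncomputable def pQ (A : ℝ) (B : ℂ) : ℝ[X] := C (A + 2 * B.re) * X ^ 2 - C (4 * B.im) * X + C (A - 2 * B.re)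

open Polynomial in
noncomputable def pL (D : ℂ) : ℝ[X] := C D.re * X - C D.im

open Polynomial in
noncomputable def pC (Cc : ℂ) : ℝ[X] := C Cc.re * (X ^ 3 - C 3 * X) - C Cc.im * (C 3 * X ^ 2 - 1)

lemma pQ_eval (A : ℝ) (B : ℂ) (t : ℝ) : (pQ A B).eval t = fal A B ⟨t, 1⟩ := by
  simp [pQ, fal, Complex.normSq_apply, pow_two]; ring

lemma pL_eval (C D : ℂ) (t : ℝ) :
    ((Polynomial.X ^ 2 + 1) * pL D + pC C).eval t = fbe C D ⟨t, 1⟩ := by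
  simp [pL, pC, fbe, Complex.normSq_apply, pow_succ]; ring

open Polynomial in
noncomputable def pD (A F : ℝ) (B C D E : ℂ) : ℝ[X] :=
  (X ^ 2 + 1) * pQ A B * pQ F E - ((X ^ 2 + 1) * pL D + pC C) ^ 2

lemma pD_eval (A F : ℝ) (B C D E : ℂ) (t : ℝ) : (pD A F B C D E).eval t =
    Complex.normSq ⟨t, 1⟩ * fal A B ⟨t, 1⟩ * fal F E ⟨t, 1⟩ - fbe C D ⟨t, 1⟩ ^ 2 := by
  rw [pD, Polynomial.eval_sub, Polynomial.eval_pow, pL_eval, Polynomial.eval_mul, Polynomial.eval_mul,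
    pQ_eval, pQ_eval]
  simp [Complex.normSq_apply, pow_two]

open Polynomial in
lemma pD_deg (A F : ℝ) (B Cc D E : ℂ)
    (h : (A + 2 * B.re) * (F + 2 * E.re) - (D.re + Cc.re) ^ 2 = 0) : (pD A F B Cc D E).natDegree < 6 := by
  have : pD A F B Cc D E =
      C ((A + 2 * B.re) * (F + 2 * E.re) - (D.re + Cc.re) ^ 2) * X ^ 6 +
      (C (A + 2 * B.re) * C (F + 2 * E.re) * X ^ 4 +
        (X ^ 2 + 1) * (C (A + 2 * B.re) * X ^ 2 * (C (F - 2 * E.re) - C (4 * E.im) * X)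
          + C (F + 2 * E.re) * X ^ 2 * (C (A - 2 * B.re) - C (4 * B.im) * X)
          + (C (A - 2 * B.re) - C (4 * B.im) * X) * (C (F - 2 * E.re) - C (4 * E.im) * X))
        - C (2 * (D.re + Cc.re)) * X ^ 3 * (C (- D.im - 3 * Cc.im) * X ^ 2
          + C (D.re - 3 * Cc.re) * X + C (Cc.im - D.im))
        - (C (- D.im - 3 * Cc.im) * X ^ 2 + C (D.re - 3 * Cc.re) * X + C (Cc.im - D.im)) ^ 2) := by
    apply Polynomial.funext
    intro t
    simp [pD, pQ, pL, pC]
    ring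
  rw [this, h, C_0, zero_mul, zero_add]
  refine lt_of_le_of_lt (b := 5) ?_ (by norm_num)
  compute_degree

lemma kerq (z₁ z₂ z₃ : ℂ) : ∃ a b c d : ℂ, (a ≠ 0 ∨ b ≠ 0 ∨ c ≠ 0 ∨ d ≠ 0) ∧
    qf a b c d z₁ = 0 ∧ qf a b c d z₂ = 0 ∧ qf a b c d z₃ = 0 := by
  let Z : Fin 3 → ℂ := ![z₁, z₂, z₃]
  let M : Matrix (Fin 3) (Fin 4) ℂ := fun i => ![Z i ^ 2, Z i * conj (Z i), Z i, conj (Z i)]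
  have hk : M.mulVecLin.ker ≠ ⊥ := LinearMap.ker_ne_bot_of_finrank_lt (by simp)
  obtain ⟨v, hv, hv0⟩ := (Submodule.ne_bot_iff _).1 hk
  refine ⟨v 0, v 1, v 2, v 3, ?_, ?_⟩
  · by_contra hcon
    push Not at hcon
    apply hv0
    funext i
    fin_cases i
    · exact hcon.1
    · exact hcon.2.1
    · exact hcon.2.2.1
    · exact hcon.2.2.2
  · have hv' : ∀ i, M.mulVec v i = 0 := fun i => congrFun hv i
    have e : ∀ i, qf (v 0) (v 1) (v 2) (v 3) (Z i) = M.mulVec v i := by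
      intro i
      simp [Matrix.mulVec, dotProduct, Fin.sum_univ_four, M, qf]
      ring
    exact ⟨(e 0).trans (hv' 0), (e 1).trans (hv' 1), (e 2).trans (hv' 2)⟩

open Polynomial in
lemma pD_zero {A F : ℝ} {B Cc D E : ℂ} (h : pD A F B Cc D E = 0) : Cc = 0 ∧ (B = 0 ∨ E = 0) ∧
    pQ A B * pQ F E = (X ^ 2 + 1) * pL D ^ 2 := by
  have hX : (X ^ 2 + 1 : ℝ[X]) ≠ 0 := by
    intro h0
    have := congrArg (Polynomial.eval 0) h0
    simp at this
  have hC : Cc = 0 := by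
    have h1 := congrArg (Polynomial.aeval (R := ℝ) Complex.I) h
    simp [pD, pC] at h1
    apply Complex.ext
    · have := congrArg Complex.im h1
      simp at this
      rcases this with h | h
      · exact h
      · norm_num at h
    · have := congrArg Complex.re h1
      simp at this
      rcases this with h | h
      · exact h
      · norm_num at h
  subst hC
  have h2 : pQ A B * pQ F E = (X ^ 2 + 1) * pL D ^ 2 := by
    have : (X ^ 2 + 1) * (pQ A B * pQ F E - (X ^ 2 + 1) * pL D ^ 2) = 0 := by
      rw [← h, pD, pC]; simp; ring
    rcases mul_eq_zero.1 this with h | h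
    · exact absurd h hX
    · exact sub_eq_zero.1 h
  refine ⟨rfl, ?_, h2⟩
  have h1 := congrArg (Polynomial.aeval (R := ℝ) Complex.I) h2
  simp only [map_mul, map_add, map_pow, aeval_X, Complex.I_sq, map_one, neg_add_cancel, zero_mul] at h1
  have e : ∀ (A : ℝ) (B : ℂ), aeval Complex.I (pQ A B) = -4 * B := by
    intro A B
    simp [pQ]
    apply Complex.ext <;> simp <;> ring
  rw [e, e] at h1
  simpa using h1

lemma line_id {A F : ℝ} {D E : ℂ} (h : ∀ t : ℝ, A * fal F E ⟨t, 1⟩ = (D.re * t - D.im) ^ 2) (z : ℂ) :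
    A * fal F E z = (D * z).re ^ 2 := by
  have e : ∀ x y : ℝ, fal F E ⟨x, y⟩ = (F + 2 * E.re) * x ^ 2 + (F - 2 * E.re) * y ^ 2 - 4 * E.im * x * y := by
    intro x y
    simp [fal, Complex.normSq_apply, pow_two]
    ring
  have h0 := h 0
  have h1 := h 1
  have h2 := h (-1)
  rw [e] at h0 h1 h2
  have ez : z = ⟨z.re, z.im⟩ := rfl
  rw [ez, e, ← ez, Complex.mul_re]
  linear_combination (z.im ^ 2 - z.re ^ 2) * h0 + (z.re ^ 2 + z.re * z.im) / 2 * h1 + (z.re ^ 2 - z.re * z.im) / 2 * h2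

lemma caseII_one {A F : ℝ} {B C D E : ℂ} (hp : ∀ z, 0 ≤ phi A F B C D E z)
    (hne : A ≠ 0 ∨ F ≠ 0 ∨ B ≠ 0 ∨ C ≠ 0 ∨ D ≠ 0 ∨ E ≠ 0) (h1 : phi A F B C D E 1 = 0)
    (z : Fin 3 → ℂ) (him : ∀ i, (z i).im ≠ 0)
    (hdir : ∀ i j, i ≠ j → (z i).re / (z i).im ≠ (z j).re / (z j).im)
    (hz : ∀ i, phi A F B C D E (z i) = 0) : Goal A F B C D E := by
  have hP : pD A F B C D E = 0 := by
    have hroot : ∀ i, (pD A F B C D E).eval ((z i).re / (z i).im) = 0 := by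
      intro i
      have h := zero_disc hp (hz i)
      have ez : z i = ((z i).im : ℂ) * (⟨(z i).re / (z i).im, 1⟩ : ℂ) := by
        have := him i
        apply Complex.ext <;> simp
        field_simp
      have hs : ∀ (r : ℝ) (u : ℂ), Complex.normSq (r * u) * fal A B (r * u) * fal F E (r * u) - fbe C D (r * u) ^ 2
          = r ^ 6 * (Complex.normSq u * fal A B u * fal F E u - fbe C D u ^ 2) := by
        intro r u
        simp only [fal, fbe, Complex.normSq_apply, pow_succ, pow_zero, one_mul, Complex.mul_re, Complex.mul_im,
          Complex.ofReal_re, Complex.ofReal_im]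
        ring
      rw [ez, hs] at h
      rw [pD_eval]
      have h6 : (z i).im ^ 6 ≠ 0 := pow_ne_zero _ (him i)
      simpa [h6] using h
    refine three_double _ ?_ _ _ _ (hdir 0 1 (by decide)) (hdir 0 2 (by decide)) (hdir 1 2 (by decide)) ?_
      (hroot 0) (hroot 1) (hroot 2)
    · apply pD_deg
      have := zero_disc hp h1
      simpa [fal, fbe] using this
    · intro t
      rw [pD_eval]
      linarith [disc_le hp ⟨t, 1⟩]
  obtain ⟨hC, hBE, hid⟩ := pD_zero hP
  subst hC
  have hphi : ∀ w, phi A F B 0 D E w = Complex.normSq w * fal A B w + 2 * ((D * w).re * Complex.normSq w) + fal F E w := by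
    intro w
    have := phi_scale A F B 0 D E w 1
    simpa [fbe] using this
  have hline : ∀ (a : ℝ), pQ a 0 = Polynomial.C a * (Polynomial.X ^ 2 + 1) := by
    intro a; simp [pQ]; ring
  have hX : (Polynomial.X ^ 2 + 1 : Polynomial ℝ) ≠ 0 := by
    intro h0
    have := congrArg (Polynomial.eval 0) h0
    simp at this
  have hD0 : (∀ t : ℝ, (0:ℝ) = (D.re * t - D.im) ^ 2) → D = 0 := by
    intro h
    have e0 := h 0
    have e1 := h 1
    have : D.im = 0 := by simpa using e0.symm
    have h2 : D.re = 0 := by simpa [this] using e1.symm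
    exact Complex.ext h2 this
  rcases hBE with hB | hE
  · subst hB
    rw [hline] at hid
    have hid' : Polynomial.C A * pQ F E = pL D ^ 2 := by
      apply mul_left_cancel₀ hX
      rw [← hid]; ring
    have hev : ∀ t : ℝ, A * fal F E ⟨t, 1⟩ = (D.re * t - D.im) ^ 2 := by
      intro t
      have := congrArg (Polynomial.eval t) hid'
      rw [← pQ_eval]
      simpa [pL] using this
    by_cases hA : A = 0
    · have hD : D = 0 := hD0 (by intro t; rw [← hev t, hA, zero_mul])
      apply caseI hp hne 1 one_ne_zero 2 two_ne_zero (by norm_num) h1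
      have e := hphi 1
      rw [phi_scale]
      rw [h1, hA, hD] at e
      simp [hA, hD, fal, fbe] at e ⊢
      exact e.symm
    · have hid2 := line_id hev
      refine ⟨0, A, D / 2, conj D / 2, by simp [hA], fun w hw => ?_⟩
      have h3 : (A * Complex.normSq w + (D * w).re) ^ 2 = 0 := by
        have : A * phi A F 0 0 D E w = 0 := by rw [hw, mul_zero]
        rw [hphi] at this
        have e2 := hid2 w
        have e3 : fal A 0 w = A * Complex.normSq w := by simp [fal]
        rw [e3] at this
        linear_combination this - e2
      have h4 : A * Complex.normSq w + (D * w).re = 0 := by simpa using h3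
      have h5 : qf 0 A (D / 2) (conj D / 2) w = ((A * Complex.normSq w + (D * w).re : ℝ) : ℂ) := by
        simp only [qf]
        apply Complex.ext <;> simp [Complex.normSq_apply] <;> ring
      rw [h5, h4, Complex.ofReal_zero]
  · subst hE
    rw [hline] at hid
    have hid' : Polynomial.C F * pQ A B = pL D ^ 2 := by
      apply mul_left_cancel₀ hX
      rw [← hid]; ring
    have hev : ∀ t : ℝ, F * fal A B ⟨t, 1⟩ = (D.re * t - D.im) ^ 2 := by
      intro t
      have := congrArg (Polynomial.eval t) hid'
      rw [← pQ_eval]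
      simpa [pL] using this
    by_cases hF : F = 0
    · have hD : D = 0 := hD0 (by intro t; rw [← hev t, hF, zero_mul])
      apply caseI hp hne 1 one_ne_zero 2 two_ne_zero (by norm_num) h1
      have e := hphi 1
      rw [phi_scale]
      rw [h1, hF, hD] at e
      simp [hF, hD, fal, fbe] at e ⊢
      exact e.symm
    · have hid2 := line_id hev
      refine ⟨D / 2, conj D / 2, F, 0, by simp [hF], fun w hw => ?_⟩
      by_cases hw0 : w = 0
      · simp [hw0, qf]
      have hn : Complex.normSq w ≠ 0 := by simpa using hw0
      have h3 : Complex.normSq w * (F + (D * w).re) ^ 2 = 0 := by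
        have : F * phi A F B 0 D 0 w = 0 := by rw [hw, mul_zero]
        rw [hphi] at this
        have e2 := hid2 w
        have e3 : fal F 0 w = F * Complex.normSq w := by simp [fal]
        rw [e3] at this
        linear_combination this - Complex.normSq w * e2
      have h4 : F + (D * w).re = 0 := by simpa [hn] using h3
      have h5 : qf (D / 2) (conj D / 2) F 0 w = w * ((F + (D * w).re : ℝ) : ℂ) := by
        simp only [qf]
        apply Complex.ext <;> simp [pow_two] <;> ring
      rw [h5, h4, Complex.ofReal_zero, mul_zero]

lemma core {A F : ℝ} {B C D E : ℂ} (hp : ∀ z, 0 ≤ phi A F B C D E z)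
    (hne : A ≠ 0 ∨ F ≠ 0 ∨ B ≠ 0 ∨ C ≠ 0 ∨ D ≠ 0 ∨ E ≠ 0) : Goal A F B C D E := by
  by_contra hG
  have step : ∀ z₁ z₂ z₃ : ℂ, ∃ z, z ≠ 0 ∧ phi A F B C D E z = 0 ∧ z ≠ z₁ ∧ z ≠ z₂ ∧ z ≠ z₃ := by
    intro z₁ z₂ z₃
    obtain ⟨a, b, c, d, hn, q1, q2, q3⟩ := kerq z₁ z₂ z₃
    by_contra hcon
    apply hG
    refine ⟨a, b, c, d, hn, fun z hz => ?_⟩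
    by_contra hq
    apply hcon
    refine ⟨z, ?_, hz, ?_, ?_, ?_⟩
    · rintro rfl; exact hq (by simp [qf])
    · rintro rfl; exact hq q1
    · rintro rfl; exact hq q2
    · rintro rfl; exact hq q3
  obtain ⟨u, hu0, hu, -⟩ := step 0 0 0
  obtain ⟨v₁, h10, h1, h1u, -⟩ := step u 0 0
  obtain ⟨v₂, h20, h2, h2u, h21, -⟩ := step u v₁ 0
  obtain ⟨v₃, h30, h3, h3u, h31, h32⟩ := step u v₁ v₂
  have dir : ∀ x y : ℂ, x ≠ 0 → y ≠ 0 → phi A F B C D E x = 0 → phi A F B C D E y = 0 → x ≠ y →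
      ∀ t : ℝ, y ≠ t * x := by
    intro x y hx hy px py hxy t ht
    apply hG
    refine caseI hp hne x hx t ?_ ?_ px (ht ▸ py)
    · rintro rfl; apply hy; simpa using ht
    · rintro rfl; apply hxy; simpa using ht.symm
  apply hG
  apply goal_rot _ _ _ _ _ _ u hu0
  have real_of : ∀ x : ℂ, x.im = 0 → x = (x.re : ℂ) := fun x hx => by apply Complex.ext <;> simp [hx]
  have im_ne : ∀ v : ℂ, v ≠ 0 → phi A F B C D E v = 0 → v ≠ u → (v / u).im ≠ 0 := by
    intro v hv pv hvu him
    refine dir u v hu0 hv hu pv hvu.symm (v / u).re ?_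
    rw [← real_of _ him, div_mul_cancel₀ _ hu0]
  have dir_ne : ∀ v w : ℂ, v ≠ 0 → w ≠ 0 → phi A F B C D E v = 0 → phi A F B C D E w = 0 → v ≠ u → w ≠ u →
      v ≠ w → (v / u).re / (v / u).im ≠ (w / u).re / (w / u).im := by
    intro v w hv hw pv pw hvu hwu hvw he
    have i1 := im_ne v hv pv hvu
    have i2 := im_ne w hw pw hwu
    refine dir v w hv hw pv pw hvw ((w / u).im / (v / u).im) ?_
    have : w / u = (((w / u).im / (v / u).im : ℝ) : ℂ) * (v / u) := by
      apply Complex.ext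
      · rw [Complex.re_ofReal_mul]
        field_simp at he ⊢
        linarith
      · rw [Complex.im_ofReal_mul]
        field_simp
    calc w = (w / u) * u := by rw [div_mul_cancel₀ _ hu0]
      _ = _ := by rw [this, mul_assoc, div_mul_cancel₀ _ hu0]
                  rw [← this]
  have hzz : ∀ v, u * (v / u) = v := fun v => mul_div_cancel₀ _ hu0
  refine caseII_one (z := ![v₁ / u, v₂ / u, v₃ / u]) ?_ ?_ ?_ ?_ ?_ ?_
  · intro w; rw [phi_rot]; exact hp _
  · simpa [hu0] using hne
  · rw [phi_rot, mul_one]; exact hu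
  · intro i
    fin_cases i
    · exact im_ne v₁ h10 h1 h1u
    · exact im_ne v₂ h20 h2 h2u
    · exact im_ne v₃ h30 h3 h3u
  · intro i j hij
    fin_cases i <;> fin_cases j <;> first | exact absurd rfl hij | skip
    · exact dir_ne _ _ h10 h20 h1 h2 h1u h2u h21.symm
    · exact dir_ne _ _ h10 h30 h1 h3 h1u h3u h31.symm
    · exact dir_ne _ _ h20 h10 h2 h1 h2u h1u h21
    · exact dir_ne _ _ h20 h30 h2 h3 h2u h3u h32.symm
    · exact dir_ne _ _ h30 h10 h3 h1 h3u h1u h31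
    · exact dir_ne _ _ h30 h20 h3 h2 h3u h2u h32
  · intro i
    rw [phi_rot]
    fin_cases i
    · simpa [hzz] using h1
    · simpa [hzz] using h2
    · simpa [hzz] using h3


lemma uni_coef {n : ℕ} (c : Fin n → ℂ) (h : ∀ a : ℂ, ∑ i, c i * a ^ (i : ℕ) = 0) : c = 0 := by
  have hp : (∑ i : Fin n, Polynomial.monomial (i : ℕ) (c i)) = 0 := by
    apply Polynomial.funext
    intro a
    simpa [Polynomial.eval_finsetSum, Polynomial.eval_monomial] using h a
  funext k
  have := congrArg (fun p => Polynomial.coeff p (k : ℕ)) hp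
  simpa [Polynomial.finsetSum_coeff, Polynomial.coeff_monomial, Fin.val_inj] using this

lemma bi_coef {m n : ℕ} (P : Fin m → Fin n → ℂ)
    (h : ∀ z : ℂ, ∑ i, ∑ j, P i j * (z ^ (i : ℕ) * conj z ^ (j : ℕ)) = 0) : P = 0 := by
  let p : MvPolynomial (Fin 2) ℂ := ∑ i, ∑ j, MvPolynomial.C (P i j) *
    ((MvPolynomial.X 0 + MvPolynomial.C Complex.I * MvPolynomial.X 1) ^ (i : ℕ) *
     (MvPolynomial.X 0 - MvPolynomial.C Complex.I * MvPolynomial.X 1) ^ (j : ℕ))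
  have hp : p = 0 := by
    apply MvPolynomial.funext_set (fun _ => Set.range (fun r : ℝ => (r : ℂ)))
    · intro _
      exact Set.infinite_range_of_injective Complex.ofReal_injective
    · intro x hx
      obtain ⟨s, hs⟩ := hx 0 (Set.mem_univ _)
      obtain ⟨t, ht⟩ := hx 1 (Set.mem_univ _)
      have := h (s + Complex.I * t)
      simp only [map_add, map_mul, Complex.conj_ofReal, Complex.conj_I] at this
      simp only [p, map_sum, map_mul, map_pow, map_add, map_sub, MvPolynomial.eval_C, MvPolynomial.eval_X, map_zero,
        ← hs, ← ht]
      rw [← this]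
      simp only [neg_mul, sub_eq_add_neg]
  have hab : ∀ a b : ℂ, ∑ i, ∑ j, P i j * (a ^ (i : ℕ) * b ^ (j : ℕ)) = 0 := by
    intro a b
    have := congrArg (MvPolynomial.eval ![(a + b) / 2, (a - b) / (2 * Complex.I)]) hp
    simp only [p, map_sum, map_mul, map_pow, map_add, map_sub, MvPolynomial.eval_C, MvPolynomial.eval_X, map_zero,
      Matrix.cons_val_zero, Matrix.cons_val_one] at this
    have e1 : (a + b) / 2 + Complex.I * ((a - b) / (2 * Complex.I)) = a := by
      field_simp; ring
    have e2 : (a + b) / 2 - Complex.I * ((a - b) / (2 * Complex.I)) = b := by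
      field_simp; ring
    rw [e1, e2] at this
    exact this
  have h1 : ∀ b : ℂ, (fun i => ∑ j, P i j * b ^ (j : ℕ)) = 0 := by
    intro b
    apply uni_coef
    intro a
    rw [← hab a b]
    refine Finset.sum_congr rfl fun i _ => ?_
    rw [Finset.sum_mul]
    refine Finset.sum_congr rfl fun j _ => ?_
    ring
  funext i
  exact uni_coef _ (fun b => congrFun (h1 b) i)

/-- Coherent vector. -/
def vv (z w : ℂ) : Fin 4 → ℂ := ![w ^ 3, z * w ^ 2, z ^ 2 * w, z ^ 3]
noncomputable def ff (W : Matrix (Fin 4) (Fin 4) ℂ) (z w : ℂ) : ℂ := ∑ i, ∑ j, W i j * (vv z w i * conj (vv z w j))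
def v2 (z w : ℂ) : Fin 3 → ℂ := ![w ^ 2, z * w, z ^ 2]
def v1 (z w : ℂ) : Fin 2 → ℂ := ![w, z]
noncomputable def qq (q : Matrix (Fin 3) (Fin 2) ℂ) (z w : ℂ) : ℂ := ∑ i, ∑ j, q i j * (v2 z w i * conj (v1 z w j))

lemma vv_one (z : ℂ) (i : Fin 4) : vv z 1 i = z ^ (i : ℕ) := by
  fin_cases i <;> simp [vv]
lemma v2_one (z : ℂ) (i : Fin 3) : v2 z 1 i = z ^ (i : ℕ) := by
  fin_cases i <;> simp [v2]
lemma v1_one (z : ℂ) (i : Fin 2) : v1 z 1 i = z ^ (i : ℕ) := by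
  fin_cases i <;> simp [v1]

lemma ff_inj {W : Matrix (Fin 4) (Fin 4) ℂ} (h : ∀ z w, ff W z w = 0) : W = 0 := by
  apply bi_coef W
  intro z
  rw [← h z 1]
  simp only [ff, vv_one, map_pow]

lemma qq_inj {q : Matrix (Fin 3) (Fin 2) ℂ} (h : ∀ z w, qq q z w = 0) : q = 0 := by
  apply bi_coef q
  intro z
  rw [← h z 1]
  simp only [qq, v2_one, v1_one, map_pow]

lemma lin_zero {a : ℝ} {P : ℝ → ℝ} (hP : Continuous P) (h : ∀ t, 0 ≤ t * (a + t * P t)) : a = 0 := by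
  have hd : HasDerivAt (fun t => t * (a + t * P t)) a 0 := by
    rw [hasDerivAt_iff_tendsto_slope]
    have : Filter.Tendsto (fun t => a + t * P t) (nhdsWithin 0 {0}ᶜ) (nhds a) := by
      have hc : Continuous (fun t => a + t * P t) := by fun_prop
      have := hc.tendsto 0
      simp only [zero_mul, add_zero] at this
      exact this.mono_left nhdsWithin_le_nhds
    refine this.congr' ?_
    filter_upwards [self_mem_nhdsWithin] with t ht
    have : t ≠ 0 := ht
    simp [slope, this]
  have hm : IsLocalMin (fun t => t * (a + t * P t)) 0 := Filter.Eventually.of_forall (fun s => by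
    simpa using h s)
  exact hm.hasDerivAt_eq_zero hd

lemma edge_zero (W : Matrix (Fin 4) (Fin 4) ℂ) (hH : ∀ i j, W j i = conj (W i j))
    (hp : ∀ z w, 0 ≤ (ff W z w).re) (h0 : W 0 0 = 0) : W 0 1 = 0 := by
  have key : ∀ u : ℂ, (W 0 1 * conj u).re = 0 := by
    intro u
    let G : ℝ → ℂ := fun t =>
      (∑ i : Fin 4, ∑ j : Fin 4, if (i : ℕ) + j < 2 then 0 else
        W i j * (t : ℂ) ^ ((i : ℕ) + j - 2) * (u ^ (i : ℕ) * conj u ^ (j : ℕ)))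
    have hG : Continuous G := by
      refine continuous_finsetSum _ fun i _ => continuous_finsetSum _ fun j _ => ?_
      split_ifs
      · exact continuous_const
      · fun_prop
    have hg : Continuous (fun t => (G t).re) := Complex.continuous_re.comp hG
    have := lin_zero (a := 2 * (W 0 1 * conj u).re) hg (by
      intro t
      have h1 := hp (t * u) 1
      have h10 : W 1 0 = conj (W 0 1) := hH 0 1
      have e : ff W (t * u) 1 = t * ((W 0 1 * conj u + conj (W 0 1 * conj u)) + t * G t) := by
        simp only [ff, vv_one, G, Fin.sum_univ_four, h0, h10]
        simp [mul_pow]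
        ring
      rw [e, Complex.re_ofReal_mul, Complex.add_re, Complex.re_ofReal_mul, Complex.add_re, Complex.conj_re] at h1
      convert h1 using 3
      ring)
    linarith
  apply Complex.ext
  · simpa using key 1
  · simpa using key Complex.I

lemma ff_conj (W : Matrix (Fin 4) (Fin 4) ℂ) (hH : ∀ i j, W j i = conj (W i j)) (z w : ℂ) :
    conj (ff W z w) = ff W z w := by
  simp only [ff, map_sum, map_mul, Complex.conj_conj]
  rw [Finset.sum_comm]
  refine Finset.sum_congr rfl fun i _ => Finset.sum_congr rfl fun j _ => ?_
  rw [hH i j, Complex.conj_conj]; ring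

lemma ff_real (W : Matrix (Fin 4) (Fin 4) ℂ) (hH : ∀ i j, W j i = conj (W i j)) (z w : ℂ) :
    ff W z w = ((ff W z w).re : ℂ) :=
  (Complex.conj_eq_iff_re.1 (ff_conj W hH z w)).symm

lemma ff_rev (W : Matrix (Fin 4) (Fin 4) ℂ) (z w : ℂ) :
    ff (fun i j => W i.rev j.rev) z w = ff W w z := by
  simp only [ff]
  rw [← Equiv.sum_comp Fin.revPerm (fun i => ∑ j, W i j * (vv w z i * conj (vv w z j)))]
  refine Finset.sum_congr rfl fun i _ => ?_
  rw [← Equiv.sum_comp Fin.revPerm (fun j => W (Fin.revPerm i) j * (vv w z (Fin.revPerm i) * conj (vv w z j)))]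
  have hv : ∀ i, vv w z (Fin.revPerm i) = vv z w i := by
    intro i
    fin_cases i
    · rfl
    · change w ^ 2 * z = z * w ^ 2; ring
    · change w * z ^ 2 = z ^ 2 * w; ring
    · rfl
  refine Finset.sum_congr rfl fun j _ => ?_
  rw [hv, hv]
  rfl

lemma zero_norm (W : Matrix (Fin 4) (Fin 4) ℂ) (hH : ∀ i j, W j i = conj (W i j))
    (hp : ∀ z w, 0 ≤ (ff W z w).re) (hne : W ≠ 0) (h0 : ff W 0 1 = 0) (h1 : ff W 1 0 = 0) :
    ∃ q, (∃ z w, qq q z w ≠ 0) ∧ ∀ z w, ff W z w = 0 → qq q z w = 0 := by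
  have w00 : W 0 0 = 0 := by simpa [ff, vv, Fin.sum_univ_four] using h0
  have w33 : W 3 3 = 0 := by simpa [ff, vv, Fin.sum_univ_four] using h1
  have w01 : W 0 1 = 0 := edge_zero W hH hp w00
  have w32 : W 3 2 = 0 := edge_zero (fun i j => W i.rev j.rev) (fun i j => hH _ _)
    (fun z w => by rw [ff_rev]; exact hp w z) w33
  have w10 : W 1 0 = 0 := by rw [hH 0 1, w01, map_zero]
  have w23 : W 2 3 = 0 := by rw [hH 3 2, w32, map_zero]
  have r1 : W 1 1 = ((W 1 1).re : ℂ) := (Complex.conj_eq_iff_re.1 (hH 1 1).symm).symm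
  have r2 : W 2 2 = ((W 2 2).re : ℂ) := (Complex.conj_eq_iff_re.1 (hH 2 2).symm).symm
  have e : ∀ z, (ff W z 1).re = phi (W 2 2).re (W 1 1).re (W 3 1) (W 3 0) (W 2 1) (W 2 0) z := by
    intro z
    have : ff W z 1 = W 2 2 * (z * conj z) ^ 2 + (W 3 1 * z ^ 3 * conj z + conj (W 3 1 * z ^ 3 * conj z))
       + (W 2 1 * z ^ 2 * conj z + conj (W 2 1 * z ^ 2 * conj z)) + (W 3 0 * z ^ 3 + conj (W 3 0 * z ^ 3))
       + (W 2 0 * z ^ 2 + conj (W 2 0 * z ^ 2)) + W 1 1 * (z * conj z) := by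
      simp only [ff, vv_one, Fin.sum_univ_four, w00, w33, w01, w10, w32, w23, hH 3 1, hH 2 1, hH 3 0, hH 2 0]
      simp
      ring
    rw [this, r1, r2, Complex.mul_conj, ← Complex.ofReal_pow, phi]
    simp only [Complex.add_re, Complex.re_ofReal_mul, Complex.conj_re, Complex.ofReal_re]
    ring
  obtain ⟨a, b, c, d, hn, hz⟩ := core (A := (W 2 2).re) (F := (W 1 1).re) (B := W 3 1) (C := W 3 0)
    (D := W 2 1) (E := W 2 0) (fun z => by rw [← e]; exact hp z 1) (by
      by_contra hcon
      push Not at hcon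
      obtain ⟨c1, c2, c3, c4, c5, c6⟩ := hcon
      apply hne
      have r1' : W 1 1 = 0 := by rw [r1, c2]; simp
      have r2' : W 2 2 = 0 := by rw [r2, c1]; simp
      have c3' : W 1 3 = 0 := by rw [hH 3 1, c3, map_zero]
      have c4' : W 0 3 = 0 := by rw [hH 3 0, c4, map_zero]
      have c5' : W 1 2 = 0 := by rw [hH 2 1, c5, map_zero]
      have c6' : W 0 2 = 0 := by rw [hH 2 0, c6, map_zero]
      ext i j
      fin_cases i <;> fin_cases j <;> assumption)
  have eq : ∀ z w, qq !![0, d; c, b; a, 0] z w = a * z ^ 2 * conj w + b * (z * w * conj z) +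
      c * (z * w * conj w) + d * (w ^ 2 * conj z) := by
    intro z w
    simp [qq, v2, v1, Fin.sum_univ_three, Fin.sum_univ_two]
    ring
  refine ⟨!![0, d; c, b; a, 0], ?_, ?_⟩
  · by_contra hcon
    push Not at hcon
    have := qq_inj hcon
    have e1 := congrFun (congrFun this 0) 1
    have e2 := congrFun (congrFun this 1) 0
    have e3 := congrFun (congrFun this 1) 1
    have e4 := congrFun (congrFun this 2) 0
    simp at e1 e2 e3 e4
    simp [e1, e2, e3, e4] at hn
  · intro z w hf
    rw [eq]
    by_cases hw : w = 0
    · simp [hw]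
    have hcw : conj w ≠ 0 := by simpa using hw
    have hs : ff W z w = (w * conj w) ^ 3 * ff W (z / w) 1 := by
      have hv : ∀ i, vv z w i = w ^ 3 * vv (z / w) 1 i := by
        intro i
        fin_cases i <;> simp [vv] <;> field_simp
      simp only [ff, Finset.mul_sum]
      refine Finset.sum_congr rfl fun i _ => Finset.sum_congr rfl fun j _ => ?_
      rw [hv i, hv j]
      simp only [map_mul, map_pow]
      ring
    rw [hs] at hf
    have hf' : ff W (z / w) 1 = 0 := by simpa [hw] using hf
    have := hz (z / w) (by rw [← e, hf', Complex.zero_re])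
    simp only [qf, map_div₀] at this
    have h2 : a * z ^ 2 * conj w + b * (z * w * conj z) + c * (z * w * conj w) + d * (w ^ 2 * conj z) = 
      w ^ 2 * conj w * (a * (z / w) ^ 2 + b * (z / w * (conj z / conj w)) + c * (z / w) + d * (conj z / conj w)) := by
      field_simp
    rw [h2, this, mul_zero]

def S3 (a b c d : ℂ) : Matrix (Fin 4) (Fin 4) ℂ :=
  !![d ^ 3, 3 * c * d ^ 2, 3 * c ^ 2 * d, c ^ 3;
     b * d ^ 2, a * d ^ 2 + 2 * b * c * d, 2 * a * c * d + b * c ^ 2, a * c ^ 2;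
     b ^ 2 * d, 2 * a * b * d + b ^ 2 * c, a ^ 2 * d + 2 * a * b * c, a ^ 2 * c;
     b ^ 3, 3 * a * b ^ 2, 3 * a ^ 2 * b, a ^ 3]

def S2 (a b c d : ℂ) : Matrix (Fin 3) (Fin 3) ℂ :=
  !![d ^ 2, 2 * c * d, c ^ 2; b * d, a * d + b * c, a * c; b ^ 2, 2 * a * b, a ^ 2]

def S1 (a b c d : ℂ) : Matrix (Fin 2) (Fin 2) ℂ := !![d, c; b, a]

lemma vv_sub (a b c d z w : ℂ) (i : Fin 4) :
    vv (a * z + b * w) (c * z + d * w) i = ∑ k, S3 a b c d i k * vv z w k := by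
  fin_cases i <;> simp [vv, S3, Fin.sum_univ_four] <;> ring

lemma v2_sub (a b c d z w : ℂ) (i : Fin 3) :
    v2 (a * z + b * w) (c * z + d * w) i = ∑ k, S2 a b c d i k * v2 z w k := by
  fin_cases i <;> simp [v2, S2, Fin.sum_univ_three] <;> ring

lemma v1_sub (a b c d z w : ℂ) (i : Fin 2) :
    v1 (a * z + b * w) (c * z + d * w) i = ∑ k, S1 a b c d i k * v1 z w k := by
  fin_cases i <;> simp [v1, S1, Fin.sum_univ_two] <;> ring

lemma sesq_sub {m n : ℕ} (W : Matrix (Fin m) (Fin n) ℂ) (S : Matrix (Fin m) (Fin m) ℂ) (T : Matrix (Fin n) (Fin n) ℂ)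
    (u : Fin m → ℂ) (v : Fin n → ℂ) :
    ∑ i, ∑ j, W i j * ((∑ k, S i k * u k) * conj (∑ l, T j l * v l)) =
    ∑ k, ∑ l, (∑ i, ∑ j, W i j * (S i k * conj (T j l))) * (u k * conj (v l)) := by
  have h1 : ∀ i j, W i j * ((∑ k, S i k * u k) * conj (∑ l, T j l * v l)) =
      ∑ k, ∑ l, W i j * (S i k * conj (T j l)) * (u k * conj (v l)) := by
    intro i j
    rw [map_sum, Finset.sum_mul_sum, Finset.mul_sum]
    refine Finset.sum_congr rfl fun k _ => ?_
    rw [Finset.mul_sum]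
    refine Finset.sum_congr rfl fun l _ => ?_
    rw [map_mul]; ring
  rw [Finset.sum_congr rfl fun i _ => Finset.sum_congr rfl fun j _ => h1 i j]
  simp only [Finset.sum_mul]
  calc _ = ∑ i, ∑ k, ∑ j, ∑ l, W i j * (S i k * conj (T j l)) * (u k * conj (v l)) :=
        Finset.sum_congr rfl fun i _ => Finset.sum_comm
    _ = ∑ k, ∑ i, ∑ j, ∑ l, W i j * (S i k * conj (T j l)) * (u k * conj (v l)) := Finset.sum_comm
    _ = ∑ k, ∑ i, ∑ l, ∑ j, W i j * (S i k * conj (T j l)) * (u k * conj (v l)) :=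
        Finset.sum_congr rfl fun k _ => Finset.sum_congr rfl fun i _ => Finset.sum_comm
    _ = _ := Finset.sum_congr rfl fun k _ => Finset.sum_comm

lemma ff_sub (W : Matrix (Fin 4) (Fin 4) ℂ) (a b c d : ℂ) : ∃ W' : Matrix (Fin 4) (Fin 4) ℂ,
    ((∀ i j, W j i = conj (W i j)) → (∀ i j, W' j i = conj (W' i j))) ∧
    ∀ z w, ff W' z w = ff W (a * z + b * w) (c * z + d * w) := by
  refine ⟨fun k l => ∑ i, ∑ j, W i j * (S3 a b c d i k * conj (S3 a b c d j l)), ?_, ?_⟩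
  · intro hH k l
    simp only [map_sum, map_mul, Complex.conj_conj]
    rw [Finset.sum_comm]
    refine Finset.sum_congr rfl fun i _ => Finset.sum_congr rfl fun j _ => ?_
    rw [hH i j]; ring
  · intro z w
    simp only [ff, vv_sub a b c d]
    rw [sesq_sub]

lemma qq_sub (q : Matrix (Fin 3) (Fin 2) ℂ) (a b c d : ℂ) : ∃ q' : Matrix (Fin 3) (Fin 2) ℂ,
    ∀ z w, qq q' z w = qq q (a * z + b * w) (c * z + d * w) := by
  refine ⟨fun k l => ∑ i, ∑ j, q i j * (S2 a b c d i k * conj (S1 a b c d j l)), ?_⟩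
  intro z w
  simp only [qq, v2_sub a b c d, v1_sub a b c d]
  rw [sesq_sub]

theorem zero_lemma (W : Matrix (Fin 4) (Fin 4) ℂ) (hH : ∀ i j, W j i = conj (W i j))
    (hp : ∀ z w, 0 ≤ (ff W z w).re) (hne : W ≠ 0) :
    ∃ q, (∃ z w, qq q z w ≠ 0) ∧ ∀ z w, ff W z w = 0 → qq q z w = 0 := by
  by_cases hind : ∃ a c b d, ff W a c = 0 ∧ ff W b d = 0 ∧ a * d - b * c ≠ 0
  · obtain ⟨a, c, b, d, h1, h2, hdet⟩ := hind
    obtain ⟨W', hW'H, hW'⟩ := ff_sub W a b c d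
    obtain ⟨e, he⟩ : ∃ e : ℂ, (a * d - b * c) * e = 1 := ⟨_, mul_inv_cancel₀ hdet⟩
    have inv1 : ∀ z w : ℂ, a * (d * e * z + -b * e * w) + b * (-c * e * z + a * e * w) = z := by
      intro z w; linear_combination z * he
    have inv2 : ∀ z w : ℂ, c * (d * e * z + -b * e * w) + d * (-c * e * z + a * e * w) = w := by
      intro z w; linear_combination w * he
    obtain ⟨q', ⟨z₀, w₀, hq0⟩, hq'⟩ := zero_norm W' (hW'H hH) (fun z w => by rw [hW']; exact hp _ _) (by
      rintro rfl
      apply hne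
      apply ff_inj
      intro z w
      have := hW' (d * e * z + -b * e * w) (-c * e * z + a * e * w)
      rw [inv1, inv2] at this
      rw [← this]; simp [ff]) (by rw [hW']; simpa using h2) (by rw [hW']; simpa using h1)
    obtain ⟨q, hq⟩ := qq_sub q' (d * e) (-b * e) (-c * e) (a * e)
    refine ⟨q, ⟨a * z₀ + b * w₀, c * z₀ + d * w₀, ?_⟩, ?_⟩
    · rw [hq]
      have i1 : d * e * (a * z₀ + b * w₀) + -b * e * (c * z₀ + d * w₀) = z₀ := by
        linear_combination z₀ * he
      have i2 : -c * e * (a * z₀ + b * w₀) + a * e * (c * z₀ + d * w₀) = w₀ := by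
        linear_combination w₀ * he
      rw [i1, i2]
      exact hq0
    · intro z w hz
      rw [hq]
      apply hq'
      rw [hW', inv1, inv2, hz]
  · push Not at hind
    by_cases hex : ∃ a c, ff W a c = 0 ∧ (a ≠ 0 ∨ c ≠ 0)
    · obtain ⟨a, c, h1, hac⟩ := hex
      have e : ∀ z w, qq !![a ^ 2, 0; -2 * a * c, 0; c ^ 2, 0] z w = (a * w - z * c) ^ 2 * conj w := by
        intro z w
        simp [qq, v2, v1, Fin.sum_univ_three, Fin.sum_univ_two]
        ring
      refine ⟨!![a ^ 2, 0; -2 * a * c, 0; c ^ 2, 0], ?_, ?_⟩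
      · by_contra hcon
        push Not at hcon
        have := qq_inj hcon
        have e1 := congrFun (congrFun this 0) 0
        have e2 := congrFun (congrFun this 2) 0
        simp at e1 e2
        simp [e1, e2] at hac
      · intro z w hz
        rw [e, hind a c z w h1 hz]
        simp
    · push Not at hex
      have e : ∀ z w, qq !![1, 0; 0, 0; 0, 0] z w = w ^ 2 * conj w := by
        intro z w
        simp [qq, v2, v1, Fin.sum_univ_three, Fin.sum_univ_two]
      refine ⟨!![1, 0; 0, 0; 0, 0], ⟨0, 1, by rw [e]; simp⟩, ?_⟩
      intro z w hz
      rw [e, (hex z w hz).2]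
      simp


lemma compact_hull {E : Type*} [NormedAddCommGroup E] [NormedSpace ℝ E] [FiniteDimensional ℝ E]
    {S : Set E} (hS : IsCompact S) : IsCompact (convexHull ℝ S) := by
  rcases S.eq_empty_or_nonempty with rfl | ⟨s0, hs0⟩
  · simp
  let n := Module.finrank ℝ E + 1
  have hc : IsCompact ((fun p : (Fin n → ℝ) × (Fin n → E) => ∑ i, p.1 i • p.2 i) ''
      (stdSimplex ℝ (Fin n) ×ˢ Set.pi Set.univ (fun _ => S))) := by
    apply IsCompact.image
    · exact (isCompact_stdSimplex ℝ (Fin n)).prod (isCompact_univ_pi fun _ => hS)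
    · fun_prop
  convert hc
  ext x
  constructor
  · intro hx
    obtain ⟨ι, hι, z, w, hz, haff, hw, hw1, hx⟩ := eq_pos_convex_span_of_mem_convexHull hx
    have hcard : Fintype.card ι ≤ Fintype.card (Fin n) := by
      rw [Fintype.card_fin]
      exact (haff.card_le_finrank_succ).trans (Nat.succ_le_succ (Submodule.finrank_le _))
    obtain ⟨f⟩ := Function.Embedding.nonempty_of_card_le hcard
    have hinj := f.injective
    have key : ∀ {M : Type _} [AddCommMonoid M] (g : ι → M),
        ∑ i, Function.extend f g 0 i = ∑ k, g k := by
      intro M _ g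
      rw [← Finset.sum_subset (Finset.subset_univ (Finset.univ.map f))]
      · rw [Finset.sum_map]
        exact Finset.sum_congr rfl fun k _ => hinj.extend_apply _ _ _
      · intro i _ hi
        rw [Function.extend_apply']
        · rfl
        · rintro ⟨k, rfl⟩
          exact hi (Finset.mem_map_of_mem _ (Finset.mem_univ _))
    refine ⟨(Function.extend f w 0, Function.extend f z (fun _ => s0)), ⟨⟨?_, ?_⟩, ?_⟩, ?_⟩
    · intro i
      by_cases h : ∃ k, f k = i
      · obtain ⟨k, rfl⟩ := h
        simp only [hinj.extend_apply]
        exact (hw k).le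
      · simp only [Function.extend_apply' _ _ _ h]
        exact le_rfl
    · rw [← hw1]; 
      exact key w
    · intro i _
      by_cases h : ∃ k, f k = i
      · obtain ⟨k, rfl⟩ := h
        simp only [hinj.extend_apply]
        exact hz ⟨k, rfl⟩
      · simp only [Function.extend_apply' _ _ _ h]
        exact hs0
    · rw [← hx]
      simp only
      rw [← Finset.sum_subset (Finset.subset_univ (Finset.univ.map f))]
      · rw [Finset.sum_map]
        exact Finset.sum_congr rfl fun k _ => by
          rw [hinj.extend_apply, hinj.extend_apply]
      · intro i _ hi
        rw [Function.extend_apply']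
        · simp
        · rintro ⟨k, rfl⟩
          exact hi (Finset.mem_map_of_mem _ (Finset.mem_univ _))
  · rintro ⟨⟨w, p⟩, ⟨hw, hp⟩, rfl⟩
    refine (convex_convexHull ℝ S).sum_mem (fun i _ => hw.1 i) hw.2 ?_
    intro i _
    exact subset_convexHull ℝ S (hp i (Set.mem_univ i))


/-- Real pairing of matrices. -/
noncomputable def pr (W m : Fin 4 → Fin 4 → ℂ) : ℝ := (∑ i, ∑ j, W i j * m i j).re
noncomputable def atm (z w : ℂ) : Fin 4 → Fin 4 → ℂ := fun i j => vv z w i * conj (vv z w j)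
def Her (m : Fin 4 → Fin 4 → ℂ) : Prop := ∀ i j, m j i = conj (m i j)
def Tau : Fin 4 → Fin 4 → ℂ := !![1, 0, 0, 0; 0, 3, 0, 0; 0, 0, 3, 0; 0, 0, 0, 1]

lemma pr_atm (W : Fin 4 → Fin 4 → ℂ) (z w : ℂ) : pr W (atm z w) = (ff W z w).re := rfl

lemma pr_add (W m m' : Fin 4 → Fin 4 → ℂ) : pr W (m + m') = pr W m + pr W m' := by
  simp [pr, mul_add, Finset.sum_add_distrib]
lemma pr_smul (W m : Fin 4 → Fin 4 → ℂ) (c : ℝ) : pr W (c • m) = c * pr W m := by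
  simp only [pr, Pi.smul_apply, Complex.real_smul, ← Complex.re_ofReal_mul, Finset.mul_sum]
  congr 1
  refine Finset.sum_congr rfl fun i _ => Finset.sum_congr rfl fun j _ => by ring
lemma pr_comm (W m : Fin 4 → Fin 4 → ℂ) : pr W m = pr m W := by
  simp only [pr, mul_comm]
noncomputable def prL (W : Fin 4 → Fin 4 → ℂ) : (Fin 4 → Fin 4 → ℂ) →ₗ[ℝ] ℝ where
  toFun := pr W
  map_add' := pr_add W
  map_smul' := fun c m => pr_smul W m c
lemma pr_sum {ι : Type*} (s : Finset ι) (W : Fin 4 → Fin 4 → ℂ) (f : ι → Fin 4 → Fin 4 → ℂ) :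
    pr W (∑ k ∈ s, f k) = ∑ k ∈ s, pr W (f k) := map_sum (prL W) f s

lemma her_atm (z w : ℂ) : Her (atm z w) := by
  intro i j
  simp [atm, mul_comm]

lemma her_tau : Her Tau := by
  intro i j
  fin_cases i <;> fin_cases j <;> simp [Tau] <;> exact (map_ofNat (starRingEnd ℂ) 3).symm

lemma her_rep (F : (Fin 4 → Fin 4 → ℂ) →ₗ[ℝ] ℝ) : ∃ W, Her W ∧ ∀ y, Her y → F y = pr W y := by
  let e : Fin 4 → Fin 4 → ℂ → (Fin 4 → Fin 4 → ℂ) := fun i j a => Pi.single i (Pi.single j a)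
  let c : Fin 4 → Fin 4 → ℂ := fun i j => F (e i j 1) - Complex.I * F (e i j Complex.I)
  have h1 : ∀ y, F y = (∑ i, ∑ j, c i j * y i j).re := by
    intro y
    have hy : y = ∑ i, ∑ j, ((y i j).re • e i j 1 + (y i j).im • e i j Complex.I) := by
      funext k l
      simp only [Finset.sum_apply, Pi.add_apply, Pi.smul_apply, e]
      rw [Finset.sum_eq_single k, Finset.sum_eq_single l]
      · simp
      · intro b _ hb; simp [Pi.single_eq_of_ne hb.symm]
      · simp
      · intro b _ hb; simp [Pi.single_eq_of_ne hb.symm]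
      · simp
    conv_lhs => rw [hy]
    simp only [map_sum, map_add, map_smul, Complex.re_sum]
    refine Finset.sum_congr rfl fun i _ => Finset.sum_congr rfl fun j _ => ?_
    simp [c]
    ring
  refine ⟨fun i j => (c i j + conj (c j i)) / 2, ?_, ?_⟩
  · intro i j
    have : conj (2 : ℂ) = 2 := map_ofNat (starRingEnd ℂ) 2
    simp [add_comm, this]
  · intro y hy
    rw [h1]
    have h2 : (∑ i, ∑ j, c i j * y i j).re = (∑ i, ∑ j, conj (c j i) * y i j).re := by
      rw [← Complex.conj_re, map_sum, Finset.sum_comm]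
      simp only [map_sum]
      rw [Finset.sum_comm, Finset.sum_comm]
      congr 1
      refine Finset.sum_congr rfl fun i _ => Finset.sum_congr rfl fun j _ => ?_
      rw [map_mul, ← hy i j]
    have h3 : pr (fun i j => (c i j + conj (c j i)) / 2) y =
      ((∑ i, ∑ j, c i j * y i j).re + (∑ i, ∑ j, conj (c j i) * y i j).re) / 2 := by
      rw [← Complex.add_re, ← Finset.sum_add_distrib]
      simp only [← Finset.sum_add_distrib, pr]
      have : ∀ x : ℂ, x.re / 2 = (x * ((1 / 2 : ℝ) : ℂ)).re := by
        intro x; rw [mul_comm, Complex.re_ofReal_mul]; ring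
      rw [this]
      simp only [Finset.sum_mul]
      congr 1
      refine Finset.sum_congr rfl fun i _ => Finset.sum_congr rfl fun j _ => ?_
      push_cast; ring
    rw [h3, ← h2]; ring

lemma tau_atm (z w : ℂ) : pr Tau (atm z w) = (‖z‖ ^ 2 + ‖w‖ ^ 2) ^ 3 := by
  rw [pr]
  have : ∑ i, ∑ j, Tau i j * atm z w i j = (z * conj z + w * conj w) ^ 3 := by
    simp [Fin.sum_univ_four, Tau, atm, vv]
    ring
  rw [this, Complex.mul_conj', Complex.mul_conj']
  norm_cast

lemma atm_scale (r : ℝ) (z w : ℂ) : atm (r * z) (r * w) = (r ^ 6) • atm z w := by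
  funext i j
  have h : ∀ i, vv (r * z) (r * w) i = r ^ 3 * vv z w i := by
    intro i
    fin_cases i <;> simp [vv] <;> ring
  simp only [atm, h, Pi.smul_apply, Complex.real_smul, map_mul, map_pow, Complex.conj_ofReal]
  push_cast; ring

def sph : Set (ℂ × ℂ) := {p | ‖p.1‖ ^ 2 + ‖p.2‖ ^ 2 = 1}
lemma sph_compact : IsCompact sph := by
  refine Metric.isCompact_of_isClosed_isBounded ?_ ?_
  · exact isClosed_eq (by fun_prop) continuous_const
  · refine (Metric.isBounded_closedBall (x := (0 : ℂ × ℂ)) (r := 1)).subset ?_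
    rintro ⟨a, b⟩ h
    have h' : ‖a‖ ^ 2 + ‖b‖ ^ 2 = 1 := h
    rw [mem_closedBall_zero_iff, Prod.norm_def]
    exact max_le (by nlinarith [norm_nonneg a, norm_nonneg b]) (by nlinarith [norm_nonneg a, norm_nonneg b])

lemma atm_cont : Continuous (fun p : ℂ × ℂ => atm p.1 p.2) := by
  have h : ∀ i, Continuous (fun p : ℂ × ℂ => vv p.1 p.2 i) := by
    intro i
    fin_cases i <;> simp [vv] <;> fun_prop
  refine continuous_pi fun i => continuous_pi fun j => ?_
  exact (h i).mul (Complex.continuous_conj.comp (h j))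

lemma atm_zero : atm 0 0 = 0 := by
  have := atm_scale 0 0 0
  simpa using this

lemma atm_norm (z w : ℂ) : ∃ r : ℝ, 0 ≤ r ∧ ∃ p ∈ sph, atm z w = r • atm p.1 p.2 := by
  by_cases h : z = 0 ∧ w = 0
  · refine ⟨0, le_rfl, (1, 0), by simp [sph], ?_⟩
    rw [h.1, h.2, atm_zero, zero_smul]
  · have hpos : 0 < ‖z‖ ^ 2 + ‖w‖ ^ 2 := by
      rcases not_and_or.1 h with h | h
      · have := norm_pos_iff.2 h; positivity
      · have := norm_pos_iff.2 h; positivity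
    set r := Real.sqrt (‖z‖ ^ 2 + ‖w‖ ^ 2) with hr
    have hr0 : 0 < r := Real.sqrt_pos.2 hpos
    have hr2 : r ^ 2 = ‖z‖ ^ 2 + ‖w‖ ^ 2 := Real.sq_sqrt hpos.le
    have hrc : (r : ℂ) ≠ 0 := by exact_mod_cast hr0.ne'
    refine ⟨r ^ 6, by positivity, (z / r, w / r), ?_, ?_⟩
    · simp only [sph, Set.mem_ofPred_eq, norm_div, Complex.norm_real, Real.norm_eq_abs, div_pow, sq_abs]
      rw [← add_div, hr2, div_self hpos.ne']
    · rw [← atm_scale]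
      simp only
      rw [mul_div_cancel₀ _ hrc, mul_div_cancel₀ _ hrc]

lemma lemA (m : Fin 4 → Fin 4 → ℂ) (hm : Her m) (ht : 0 < pr Tau m)
    (hpos : ∀ W, Her W → (∀ z w, 0 ≤ pr W (atm z w)) → 0 ≤ pr W m) :
    ∃ (ι : Type) (_ : Fintype ι) (z w : ι → ℂ) (c : ι → ℝ), (∀ k, 0 ≤ c k) ∧
      m = ∑ k, c k • atm (z k) (w k) := by
  let S := (fun p : ℂ × ℂ => atm p.1 p.2) '' sph
  have hS : IsCompact S := sph_compact.image atm_cont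
  by_cases hx : (pr Tau m)⁻¹ • m ∈ convexHull ℝ S
  · obtain ⟨ι, hι, c, y, hc, -, hy, he⟩ := mem_convexHull_iff_exists_fintype.1 hx
    choose p hp hpy using hy
    refine ⟨ι, hι, fun k => (p k).1, fun k => (p k).2, fun k => pr Tau m * c k, 
      fun k => mul_nonneg ht.le (hc k), ?_⟩
    have : m = pr Tau m • ((pr Tau m)⁻¹ • m) := by rw [smul_smul, mul_inv_cancel₀ ht.ne', one_smul]
    conv_lhs => rw [this, ← he, Finset.smul_sum]
    refine Finset.sum_congr rfl fun k _ => ?_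
    rw [smul_smul, ← hpy]
  · exfalso
    obtain ⟨F, u, h1, h2⟩ := geometric_hahn_banach_point_closed (convex_convexHull ℝ S)
      (compact_hull hS).isClosed hx
    obtain ⟨W, hW, hF⟩ := her_rep (F : (Fin 4 → Fin 4 → ℂ) →ₗ[ℝ] ℝ)
    let W' := W + (-u) • Tau
    have hpr : ∀ y, pr W' y = pr W y - u * pr Tau y := by
      intro y
      rw [pr_comm, pr_add, pr_smul, pr_comm y W, pr_comm y Tau]; ring
    have hW' : Her W' := by
      intro i j
      simp only [W', Pi.add_apply, Pi.smul_apply, Complex.real_smul, map_add, map_mul, Complex.conj_ofReal]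
      rw [hW i j, her_tau i j]
    have hm' : Her ((pr Tau m)⁻¹ • m) := by
      intro i j
      simp only [Pi.smul_apply, Complex.real_smul, map_mul, Complex.conj_ofReal]
      rw [hm i j]
    have := hpos W' hW' (by
      intro z w
      obtain ⟨r, hr, p, hp, e⟩ := atm_norm z w
      rw [e, pr_smul, hpr, tau_atm]
      apply mul_nonneg hr
      have h3 := h2 (atm p.1 p.2) (subset_convexHull ℝ S ⟨p, hp, rfl⟩)
      have h4 := hF _ (her_atm p.1 p.2)
      have h5 : ‖p.1‖ ^ 2 + ‖p.2‖ ^ 2 = 1 := hp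
      rw [h5]
      simp only [ContinuousLinearMap.coe_coe] at h4
      linarith)
    have h4 := hF _ hm'
    simp only [ContinuousLinearMap.coe_coe] at h4
    rw [h4, pr_smul, inv_mul_eq_div, div_lt_iff₀ ht] at h1
    rw [hpr] at this
    linarith


def ix (a : Fin 3) (b : Fin 2) : Fin 4 := ⟨(a : ℕ) + b, by omega⟩

noncomputable def PT (q : Matrix (Fin 3) (Fin 2) ℂ) (m : Fin 4 → Fin 4 → ℂ) : ℝ :=
  (∑ a, ∑ b, ∑ a', ∑ b', q a b * conj (q a' b') * m (ix a b') (ix a' b)).re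

noncomputable def PTL (q : Matrix (Fin 3) (Fin 2) ℂ) : (Fin 4 → Fin 4 → ℂ) →ₗ[ℝ] ℝ where
  toFun := PT q
  map_add' := by
    intro m m'
    simp [PT, mul_add, Finset.sum_add_distrib]
  map_smul' := by
    intro c m
    simp only [PT, Pi.smul_apply, Complex.real_smul, RingHom.id_apply, smul_eq_mul, ← Complex.re_ofReal_mul,
      Finset.mul_sum]
    congr 1
    refine Finset.sum_congr rfl fun i _ => Finset.sum_congr rfl fun j _ =>
      Finset.sum_congr rfl fun i _ => Finset.sum_congr rfl fun j _ => by ring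

lemma vv_ix (z w : ℂ) (a : Fin 3) (b : Fin 2) : vv z w (ix a b) = v2 z w a * v1 z w b := by
  fin_cases a <;> fin_cases b <;> simp [vv, v2, v1, ix] <;> ring

lemma PT_atm (q : Matrix (Fin 3) (Fin 2) ℂ) (z w : ℂ) : PTL q (atm z w) = ‖qq q z w‖ ^ 2 := by
  change PT q (atm z w) = _
  have : (∑ a, ∑ b, ∑ a', ∑ b', q a b * conj (q a' b') * (atm z w) (ix a b') (ix a' b)) =
      qq q z w * conj (qq q z w) := by
    rw [qq, Finset.sum_mul]
    refine Finset.sum_congr rfl fun a _ => ?_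
    rw [Finset.sum_mul]
    refine Finset.sum_congr rfl fun b _ => ?_
    rw [map_sum, Finset.mul_sum]
    refine Finset.sum_congr rfl fun a' _ => ?_
    rw [map_sum, Finset.mul_sum]
    refine Finset.sum_congr rfl fun b' _ => ?_
    simp only [atm, vv_ix, map_mul, Complex.conj_conj]
    ring
  rw [PT, this, Complex.mul_conj']
  norm_cast

lemma exists_base : ∃ s : Finset (Fin 4 → Fin 4 → ℂ), (∀ x ∈ s, ∃ z w, x = atm z w) ∧
    ∀ F : (Fin 4 → Fin 4 → ℂ) →ₗ[ℝ] ℝ, (∀ x ∈ s, F x = 0) → ∀ z w, F (atm z w) = 0 := by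
  obtain ⟨s, hs, he⟩ := (Submodule.fg_span_iff_fg_span_finset_subset (R := ℝ)
    (Set.range (fun p : ℂ × ℂ => atm p.1 p.2))).1 (IsNoetherian.noetherian _)
  refine ⟨s, ?_, ?_⟩
  · intro x hx
    obtain ⟨p, hp⟩ := hs hx
    exact ⟨p.1, p.2, hp.symm⟩
  · intro F hF z w
    have h1 : atm z w ∈ Submodule.span ℝ (s : Set (Fin 4 → Fin 4 → ℂ)) := by
      rw [← he]
      exact Submodule.subset_span ⟨(z, w), rfl⟩
    have h2 : Submodule.span ℝ (s : Set (Fin 4 → Fin 4 → ℂ)) ≤ LinearMap.ker F := by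
      rw [Submodule.span_le]
      intro x hx
      exact hF x hx
    exact h2 h1

lemma pr_smul_left (W m : Fin 4 → Fin 4 → ℂ) (c : ℝ) : pr (c • W) m = c * pr W m := by
  rw [pr_comm, pr_smul, pr_comm]

lemma her_smul {W : Fin 4 → Fin 4 → ℂ} (h : Her W) (c : ℝ) : Her (c • W) := by
  intro i j
  simp only [Pi.smul_apply, Complex.real_smul, map_mul, Complex.conj_ofReal]
  rw [h i j]

lemma her_add {W V : Fin 4 → Fin 4 → ℂ} (h : Her W) (h' : Her V) : Her (W + V) := by
  intro i j
  simp only [Pi.add_apply, map_add]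
  rw [h i j, h' i j]

lemma pr_zero (m : Fin 4 → Fin 4 → ℂ) : pr 0 m = 0 := by simp [pr]

lemma pr_cont (m : Fin 4 → Fin 4 → ℂ) : Continuous (fun W => pr W m) := by
  simp only [pr]
  fun_prop

lemma lemB (m : Fin 4 → Fin 4 → ℂ) (hm : Her m) (ht : 0 < pr Tau m) (hq : ∀ q, 0 ≤ PTL q m)
    (W : Fin 4 → Fin 4 → ℂ) (hW : Her W) (hWp : ∀ z w, 0 ≤ pr W (atm z w)) : 0 ≤ pr W m := by
  by_contra hneg
  push Not at hneg
  obtain ⟨s, hs, hspan⟩ := exists_base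
  let e := ∑ x ∈ s, x
  let K : Set (Fin 4 → Fin 4 → ℂ) := {V | (∀ i j, V j i = conj (V i j)) ∧ (∀ z w, 0 ≤ pr V (atm z w)) ∧ ‖V‖ = 1}
  have hK : IsCompact K := by
    refine Metric.isCompact_of_isClosed_isBounded ?_ ?_
    · have : K = (⋂ i, ⋂ j, {V | V j i = conj (V i j)}) ∩ ((⋂ z, ⋂ w, {V | 0 ≤ pr V (atm z w)}) ∩ {V | ‖V‖ = 1}) := by
        ext V; simp [K]
      rw [this]
      refine IsClosed.inter ?_ (IsClosed.inter ?_ ?_)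
      · refine isClosed_iInter fun i => isClosed_iInter fun j => isClosed_eq (by fun_prop) ?_
        exact Complex.continuous_conj.comp (by fun_prop)
      · exact isClosed_iInter fun z => isClosed_iInter fun w => isClosed_le continuous_const (pr_cont _)
      · exact isClosed_eq continuous_norm continuous_const
    · refine (Metric.isBounded_closedBall (x := (0 : Fin 4 → Fin 4 → ℂ)) (r := 1)).subset ?_
      intro V hV
      rw [mem_closedBall_zero_iff]
      exact hV.2.2.le
  have hds : ∀ V : Fin 4 → Fin 4 → ℂ, pr V e = ∑ x ∈ s, pr V x := fun V => pr_sum s V (fun x => x)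
  have hd : ∀ V ∈ K, 0 < pr V e := by
    intro V hV
    have hnn : ∀ x ∈ s, 0 ≤ pr V x := by
      intro x hx
      obtain ⟨z, w, rfl⟩ := hs x hx
      exact hV.2.1 z w
    refine lt_of_le_of_ne (by rw [hds]; exact Finset.sum_nonneg hnn) ?_
    intro h0
    rw [hds] at h0
    have h1 := (Finset.sum_eq_zero_iff_of_nonneg hnn).1 h0.symm
    have h2 := hspan (prL V) h1
    have h3 : V = 0 := by
      apply ff_inj
      intro z w
      rw [ff_real V hV.1, ← pr_atm]
      exact_mod_cast h2 z w
    have := hV.2.2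
    rw [h3] at this
    simp at this
  have hnorm : ∀ V, Her V → (∀ z w, 0 ≤ pr V (atm z w)) → V ≠ 0 → (‖V‖⁻¹ • V) ∈ K := by
    intro V h1 h2 h3
    refine ⟨her_smul h1 _, fun z w => ?_, ?_⟩
    · rw [pr_smul_left]; exact mul_nonneg (by positivity) (h2 z w)
    · rw [norm_smul, norm_inv, norm_norm, inv_mul_cancel₀ (norm_ne_zero_iff.2 h3)]
  have hW0 : W ≠ 0 := by
    rintro rfl
    rw [pr_zero] at hneg
    exact lt_irrefl _ hneg
  have hWK := hnorm W hW hWp hW0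
  obtain ⟨W0, hW0K, hmin⟩ := hK.exists_isMinOn ⟨_, hWK⟩ (f := fun V => pr V m / pr V e)
    (ContinuousOn.div (pr_cont m).continuousOn (pr_cont e).continuousOn fun V hV => (hd V hV).ne')
  have hmin' : ∀ V ∈ K, pr W0 m / pr W0 e ≤ pr V m / pr V e := fun V hV => hmin hV
  obtain ⟨l, hl⟩ : ∃ l, l = -(pr W0 m / pr W0 e) := ⟨_, rfl⟩
  have hlpos : 0 < l := by
    have h1 := hmin' _ hWK
    have h2 : pr (‖W‖⁻¹ • W) m / pr (‖W‖⁻¹ • W) e < 0 := by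
      apply div_neg_of_neg_of_pos _ (hd _ hWK)
      rw [pr_smul_left]
      exact mul_neg_of_pos_of_neg (inv_pos.2 (norm_pos_iff.2 hW0)) hneg
    linarith
  have hW0m : pr W0 (m + l • e) = 0 := by
    have := hd W0 hW0K
    rw [pr_add, pr_smul, hl]
    field_simp
    ring
  have hall : ∀ V, Her V → (∀ z w, 0 ≤ pr V (atm z w)) → 0 ≤ pr V (m + l • e) := by
    intro V h1 h2
    by_cases h3 : V = 0
    · rw [h3, pr_zero]
    have h4 := hnorm V h1 h2 h3
    have h5 := hmin' _ h4
    have h6 := hd _ h4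
    rw [le_div_iff₀ h6, pr_smul_left, pr_smul_left] at h5
    have h7 : 0 < ‖V‖⁻¹ := inv_pos.2 (norm_pos_iff.2 h3)
    rw [pr_add, pr_smul]
    have h8 : 0 ≤ ‖V‖⁻¹ * (pr V m + l * pr V e) := by rw [hl]; linarith
    exact nonneg_of_mul_nonneg_right h8 h7
  have hHe : Her e := by
    intro i j
    simp only [e, Finset.sum_apply, map_sum]
    refine Finset.sum_congr rfl fun x hx => ?_
    obtain ⟨z, w, rfl⟩ := hs x hx
    exact her_atm z w i j
  have hTe : 0 ≤ pr Tau e := by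
    rw [hds]
    refine Finset.sum_nonneg fun x hx => ?_
    obtain ⟨z, w, rfl⟩ := hs x hx
    rw [tau_atm]; positivity
  obtain ⟨ι, hι, z, w, c, hc, hsum⟩ := lemA (m + l • e) (her_add hm (her_smul hHe l))
    (by rw [pr_add, pr_smul]; have := mul_nonneg hlpos.le hTe; linarith) hall
  have hW0ne : W0 ≠ 0 := by
    rintro rfl
    have := hW0K.2.2
    simp at this
  obtain ⟨q, ⟨z0, w0, hq0⟩, hqz⟩ := zero_lemma W0 hW0K.1 hW0K.2.1 hW0ne
  have hterm : ∀ k, c k * pr W0 (atm (z k) (w k)) = 0 := by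
    rw [hsum, pr_sum] at hW0m
    simp only [pr_smul] at hW0m
    intro k
    exact (Finset.sum_eq_zero_iff_of_nonneg (fun k _ => mul_nonneg (hc k) (hW0K.2.1 _ _))).1 hW0m k (Finset.mem_univ k)
  have hz1 : PTL q (m + l • e) = 0 := by
    rw [hsum, map_sum]
    refine Finset.sum_eq_zero fun k _ => ?_
    rw [map_smul, PT_atm, smul_eq_mul]
    rcases mul_eq_zero.1 (hterm k) with h | h
    · rw [h, zero_mul]
    · rw [hqz (z k) (w k) (by rw [ff_real W0 hW0K.1, ← pr_atm, h, Complex.ofReal_zero])]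
      simp
  rw [map_add, map_smul, smul_eq_mul] at hz1
  have hnn : ∀ x ∈ s, 0 ≤ PTL q x := by
    intro x hx
    obtain ⟨z, w, rfl⟩ := hs x hx
    rw [PT_atm]; positivity
  have hes : PTL q e = ∑ x ∈ s, PTL q x := map_sum (PTL q) _ s
  have he0 : 0 ≤ PTL q e := by rw [hes]; exact Finset.sum_nonneg hnn
  have he1 : PTL q e = 0 := by
    have := hq q
    nlinarith
  rw [hes] at he1
  have := hspan (PTL q) ((Finset.sum_eq_zero_iff_of_nonneg hnn).1 he1) z0 w0
  rw [PT_atm] at this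
  apply hq0
  simpa using this

lemma lemC (m : Fin 4 → Fin 4 → ℂ) (hm : Her m) (ht : 0 < pr Tau m) (hq : ∀ q, 0 ≤ PTL q m) :
    ∃ (ι : Type) (_ : Fintype ι) (z w : ι → ℂ) (c : ι → ℝ), (∀ k, 0 ≤ c k) ∧
      m = ∑ k, c k • atm (z k) (w k) :=
  lemA m hm ht (lemB m hm ht hq)


lemma cs4 (x0 x1 x2 x3 p0 p1 p2 p3 : ℂ) : ‖x0 * p0 + x1 * p1 + x2 * p2 + x3 * p3‖ ^ 2 ≤
    (‖x0‖ ^ 2 + ‖x1‖ ^ 2 / 3 + ‖x2‖ ^ 2 / 3 + ‖x3‖ ^ 2) * (‖p0‖ ^ 2 + 3 * ‖p1‖ ^ 2 + 3 * ‖p2‖ ^ 2 + ‖p3‖ ^ 2) := by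
  have h : ‖x0 * p0 + x1 * p1 + x2 * p2 + x3 * p3‖ ≤ ‖x0‖ * ‖p0‖ + ‖x1‖ * ‖p1‖ + ‖x2‖ * ‖p2‖ + ‖x3‖ * ‖p3‖ := by
    simp only [← norm_mul]
    exact norm_add₄_le
  have h2 := pow_le_pow_left₀ (norm_nonneg _) h 2
  refine h2.trans ?_
  generalize ‖x0‖ = a0, ‖x1‖ = a1, ‖x2‖ = a2, ‖x3‖ = a3, ‖p0‖ = b0, ‖p1‖ = b1, ‖p2‖ = b2, ‖p3‖ = b3
  linarith [sq_nonneg (a0 * b1 * 3 - a1 * b0), sq_nonneg (a0 * b2 * 3 - a2 * b0), sq_nonneg (a0 * b3 - a3 * b0),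
    sq_nonneg (a1 * b2 - a2 * b1), sq_nonneg (a1 * b3 - a3 * b1 * 3), sq_nonneg (a2 * b3 - a3 * b2 * 3)]

lemma cs3 (x0 x1 x2 p0 p1 p2 : ℂ) : ‖x0 * p0 + x1 * p1 + x2 * p2‖ ^ 2 ≤
    (‖x0‖ ^ 2 + ‖x1‖ ^ 2 / 2 + ‖x2‖ ^ 2) * (‖p0‖ ^ 2 + 2 * ‖p1‖ ^ 2 + ‖p2‖ ^ 2) := by
  have h : ‖x0 * p0 + x1 * p1 + x2 * p2‖ ≤ ‖x0‖ * ‖p0‖ + ‖x1‖ * ‖p1‖ + ‖x2‖ * ‖p2‖ := by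
    simp only [← norm_mul]
    exact norm_add₃_le
  have h2 := pow_le_pow_left₀ (norm_nonneg _) h 2
  refine h2.trans ?_
  generalize ‖x0‖ = a0, ‖x1‖ = a1, ‖x2‖ = a2, ‖p0‖ = b0, ‖p1‖ = b1, ‖p2‖ = b2
  linarith [sq_nonneg (a0 * b1 * 2 - a1 * b0), sq_nonneg (a0 * b2 - a2 * b0), 
    sq_nonneg (a1 * b2 - a2 * b1 * 2)]

noncomputable def DD : Fin 4 → Fin 4 → ℂ := !![1, 0, 0, 0; 0, 1/3, 0, 0; 0, 0, 1/3, 0; 0, 0, 0, 1]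
noncomputable def r1 (p : Fin 4 → ℂ) : Fin 4 → Fin 4 → ℂ := fun i j => p i * conj (p j)

lemma ix_vals : ix 0 0 = 0 ∧ ix 0 1 = 1 ∧ ix 1 0 = 1 ∧ ix 1 1 = 2 ∧ ix 2 0 = 2 ∧ ix 2 1 = 3 := by
  decide

lemma sqn (x : ℂ) : ‖x‖ ^ 2 = x.re * x.re + x.im * x.im := by
  rw [← Complex.normSq_eq_norm_sq, Complex.normSq_apply]

lemma PT_D (q : Matrix (Fin 3) (Fin 2) ℂ) : PTL q DD =
    (‖q 0 1‖ ^ 2 + ‖q 0 0‖ ^ 2 + ‖q 1 0‖ ^ 2 / 3 + ‖q 1 1‖ ^ 2 / 3 + ‖q 2 0‖ ^ 2 + ‖q 2 1‖ ^ 2) 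
    - (2 / 3) * (‖q 0 1‖ ^ 2 + ‖q 2 0‖ ^ 2)
    + (2 / 3) * (q 0 0 * conj (q 1 1)).re + (2 / 3) * (q 1 0 * conj (q 2 1)).re := by
  change PT q DD = _
  obtain ⟨h1, h2, h3, h4, h5, h6⟩ := ix_vals
  have e : ∑ a, ∑ b, ∑ a', ∑ b', q a b * conj (q a' b') * DD (ix a b') (ix a' b) =
      (q 0 1 * conj (q 0 1)) / 3 + q 0 0 * conj (q 0 0) + (q 1 0 * conj (q 1 0)) / 3 + (q 1 1 * conj (q 1 1)) / 3
      + (q 2 0 * conj (q 2 0)) / 3 + q 2 1 * conj (q 2 1)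
      + (q 0 0 * conj (q 1 1) + q 1 1 * conj (q 0 0)) / 3 + (q 1 0 * conj (q 2 1) + q 2 1 * conj (q 1 0)) / 3 := by
    simp only [Fin.sum_univ_three, Fin.sum_univ_two, h1, h2, h3, h4, h5, h6]
    simp [DD]
    ring
  rw [PT, e]
  simp only [sqn]
  simp
  ring

lemma PT_r1 (q : Matrix (Fin 3) (Fin 2) ℂ) (p : Fin 4 → ℂ) : PTL q (r1 p) =
    ‖q 0 0 * p 0 + q 1 0 * p 1 + q 2 0 * p 2‖ ^ 2 + ‖q 0 1 * p 1 + q 1 1 * p 2 + q 2 1 * p 3‖ ^ 2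
    + 2 * ((q 0 0 * p 1 + q 1 0 * p 2 + q 2 0 * p 3) * conj (q 0 1 * p 0 + q 1 1 * p 1 + q 2 1 * p 2)).re := by
  change PT q (r1 p) = _
  obtain ⟨h1, h2, h3, h4, h5, h6⟩ := ix_vals
  have e : ∑ a, ∑ b, ∑ a', ∑ b', q a b * conj (q a' b') * r1 p (ix a b') (ix a' b) =
      (q 0 0 * p 0 + q 1 0 * p 1 + q 2 0 * p 2) * conj (q 0 0 * p 0 + q 1 0 * p 1 + q 2 0 * p 2)
      + (q 0 1 * p 1 + q 1 1 * p 2 + q 2 1 * p 3) * conj (q 0 1 * p 1 + q 1 1 * p 2 + q 2 1 * p 3)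
      + ((q 0 0 * p 1 + q 1 0 * p 2 + q 2 0 * p 3) * conj (q 0 1 * p 0 + q 1 1 * p 1 + q 2 1 * p 2)
      + conj ((q 0 0 * p 1 + q 1 0 * p 2 + q 2 0 * p 3) * conj (q 0 1 * p 0 + q 1 1 * p 1 + q 2 1 * p 2))) := by
    simp only [Fin.sum_univ_three, Fin.sum_univ_two, h1, h2, h3, h4, h5, h6, r1, map_add, map_mul, Complex.conj_conj]
    ring
  rw [PT, e, Complex.mul_conj', Complex.mul_conj']
  simp only [Complex.add_re, Complex.conj_re]
  norm_cast
  ring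

lemma ppt1 (q : Matrix (Fin 3) (Fin 2) ℂ) (p : Fin 4 → ℂ) (al : ℝ) (h1 : -(1 / 3 : ℝ) ≤ al) (h2 : al ≤ 2 / 3) :
    0 ≤ PTL q ((‖p 0‖ ^ 2 + 3 * ‖p 1‖ ^ 2 + 3 * ‖p 2‖ ^ 2 + ‖p 3‖ ^ 2) • DD + al • r1 p) := by
  rw [map_add, map_smul, map_smul, smul_eq_mul, smul_eq_mul]
  obtain ⟨T, hT⟩ : ∃ T, T = ‖p 0‖ ^ 2 + 3 * ‖p 1‖ ^ 2 + 3 * ‖p 2‖ ^ 2 + ‖p 3‖ ^ 2 := ⟨_, rfl⟩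
  have hT0 : 0 ≤ T := by rw [hT]; positivity
  rw [← hT]
  set x00 := q 0 0 * p 0 + q 1 0 * p 1 + q 2 0 * p 2 with hx00
  set x11 := q 0 1 * p 1 + q 1 1 * p 2 + q 2 1 * p 3 with hx11
  set x01 := q 0 0 * p 1 + q 1 0 * p 2 + q 2 0 * p 3 with hx01
  set x10 := q 0 1 * p 0 + q 1 1 * p 1 + q 2 1 * p 2 with hx10
  have hR := PT_r1 q p
  rw [← hx00, ← hx11, ← hx01, ← hx10] at hR
  have hD := PT_D q
  rcases le_total 0 al with ha | ha
  · have hcs := cs4 (-q 0 1) (q 0 0 - q 1 1) (q 1 0 - q 2 1) (q 2 0) (p 0) (p 1) (p 2) (p 3)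
    have hx : -q 0 1 * p 0 + (q 0 0 - q 1 1) * p 1 + (q 1 0 - q 2 1) * p 2 + q 2 0 * p 3 = x01 - x10 := by
      rw [hx01, hx10]; ring
    rw [hx, norm_neg, ← hT] at hcs
    have hlow : -(‖x01 - x10‖ ^ 2) ≤ 2 * PTL q (r1 p) := by
      have e : ‖x01 - x10‖ ^ 2 + 4 * (x01 * conj x10).re = ‖x01 + x10‖ ^ 2 := by
        simp only [sqn]; simp; ring
      rw [hR]
      have := sq_nonneg ‖x01 + x10‖
      have := sq_nonneg ‖x00‖
      have := sq_nonneg ‖x11‖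
      linarith
    have hrem : PTL q DD - (‖q 0 1‖ ^ 2 + ‖q 0 0 - q 1 1‖ ^ 2 / 3 + ‖q 1 0 - q 2 1‖ ^ 2 / 3 + ‖q 2 0‖ ^ 2) / 3 =
        (2 / 9) * ‖2 * q 0 0 + q 1 1‖ ^ 2 + (2 / 9) * ‖q 1 0 + 2 * q 2 1‖ ^ 2 := by
      rw [hD]
      simp only [sqn]; simp; ring
    set Y := ‖q 0 1‖ ^ 2 + ‖q 0 0 - q 1 1‖ ^ 2 / 3 + ‖q 1 0 - q 2 1‖ ^ 2 / 3 + ‖q 2 0‖ ^ 2 with hY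
    have hY0 : 0 ≤ Y := by positivity
    have hDY : Y / 3 ≤ PTL q DD := by
      have : 0 ≤ (2 / 9) * ‖2 * q 0 0 + q 1 1‖ ^ 2 + (2 / 9) * ‖q 1 0 + 2 * q 2 1‖ ^ 2 := by positivity
      linarith
    have a1 : T * (Y / 3) ≤ T * PTL q DD := mul_le_mul_of_nonneg_left hDY hT0
    have a2 : -(Y * T) ≤ 2 * PTL q (r1 p) := by linarith
    have a3 := mul_le_mul_of_nonneg_left a2 ha
    have a4 := mul_nonneg (sub_nonneg.2 h2) (mul_nonneg hY0 hT0)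
    linarith
  · have c00 := cs3 (q 0 0) (q 1 0) (q 2 0) (p 0) (p 1) (p 2)
    have c01 := cs3 (q 0 0) (q 1 0) (q 2 0) (p 1) (p 2) (p 3)
    have c10 := cs3 (q 0 1) (q 1 1) (q 2 1) (p 0) (p 1) (p 2)
    have c11 := cs3 (q 0 1) (q 1 1) (q 2 1) (p 1) (p 2) (p 3)
    rw [← hx00] at c00
    rw [← hx01] at c01
    rw [← hx10] at c10
    rw [← hx11] at c11
    set Y := ‖q 0 0‖ ^ 2 + ‖q 1 0‖ ^ 2 / 2 + ‖q 2 0‖ ^ 2 with hY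
    set Z := ‖q 0 1‖ ^ 2 + ‖q 1 1‖ ^ 2 / 2 + ‖q 2 1‖ ^ 2 with hZ
    have hup : PTL q (r1 p) ≤ (Y + Z) * T := by
      have e : ‖x01‖ ^ 2 + ‖x10‖ ^ 2 - 2 * (x01 * conj x10).re = ‖x01 - x10‖ ^ 2 := by
        simp only [sqn]; simp; ring
      rw [hR, hT]
      have := sq_nonneg ‖x01 - x10‖
      linarith
    have hrem : PTL q DD - (Y + Z) / 3 = (2 / 3) * ‖q 0 0 + q 1 1 / 2‖ ^ 2 + (2 / 3) * ‖q 1 0 / 2 + q 2 1‖ ^ 2 := by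
      rw [hD, hY, hZ]
      have : q 1 1 / 2 = ((1 / 2 : ℝ) : ℂ) * q 1 1 := by push_cast; ring
      rw [this]
      have : q 1 0 / 2 = ((1 / 2 : ℝ) : ℂ) * q 1 0 := by push_cast; ring
      rw [this]
      simp only [sqn, Complex.add_re, Complex.add_im, Complex.ofReal_re, Complex.ofReal_im, Complex.mul_im, Complex.mul_re,
        Complex.conj_re, Complex.conj_im]
      ring
    have hY0 : 0 ≤ Y + Z := by positivity
    have hDY : (Y + Z) / 3 ≤ PTL q DD := by
      have : 0 ≤ (2 / 3) * ‖q 0 0 + q 1 1 / 2‖ ^ 2 + (2 / 3) * ‖q 1 0 / 2 + q 2 1‖ ^ 2 := by positivity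
      linarith
    have a1 : T * ((Y + Z) / 3) ≤ T * PTL q DD := mul_le_mul_of_nonneg_left hDY hT0
    have a3 := mul_le_mul_of_nonpos_left hup ha
    have a4 : 0 ≤ (1 / 3 + al) * ((Y + Z) * T) := mul_nonneg (by linarith) (mul_nonneg hY0 hT0)
    linarith


lemma main4 (R : Matrix (Fin 4) (Fin 4) ℂ) (hR : R.PosSemidef) (al : ℝ) (h1 : -(1 / 3 : ℝ) ≤ al) (h2 : al ≤ 2 / 3) :
    ∃ (ι : Type) (_ : Fintype ι) (z w : ι → ℂ) (c : ι → ℝ), (∀ k, 0 ≤ c k) ∧ ∀ i j,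
      (R 0 0 + 3 * R 1 1 + 3 * R 2 2 + R 3 3) * DD i j + al * R i j = ∑ k, c k * atm (z k) (w k) i j := by
  obtain ⟨B, hB⟩ : ∃ B : Matrix (Fin 4) (Fin 4) ℂ, R = B.conjTranspose * B := by
    open scoped MatrixOrder Matrix.Norms.L2Operator in
    exact CStarAlgebra.nonneg_iff_eq_star_mul_self.mp hR.nonneg
  let p : Fin 4 → Fin 4 → ℂ := fun k i => conj (B k i)
  have hp : ∀ i j, R i j = ∑ k, r1 (p k) i j := by
    intro i j
    rw [hB, Matrix.mul_apply]
    refine Finset.sum_congr rfl fun k _ => ?_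
    simp [r1, p]
  let t : Fin 4 → ℝ := fun k => ‖p k 0‖ ^ 2 + 3 * ‖p k 1‖ ^ 2 + 3 * ‖p k 2‖ ^ 2 + ‖p k 3‖ ^ 2
  have ht0 : ∀ k, 0 ≤ t k := fun k => by simp only [t]; positivity
  have hT : R 0 0 + 3 * R 1 1 + 3 * R 2 2 + R 3 3 = ((∑ k, t k : ℝ) : ℂ) := by
    simp only [hp, Finset.mul_sum, ← Finset.sum_add_distrib, r1, Complex.mul_conj', t]
    push_cast
    rfl
  let m : Fin 4 → Fin 4 → ℂ := ∑ k, (t k • DD + al • r1 (p k))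
  have hm : ∀ i j, (R 0 0 + 3 * R 1 1 + 3 * R 2 2 + R 3 3) * DD i j + al * R i j = m i j := by
    intro i j
    rw [hT, hp]
    simp only [m, Finset.sum_apply, Pi.add_apply, Pi.smul_apply, Complex.real_smul, Finset.sum_add_distrib,
      Finset.mul_sum, Complex.ofReal_sum, Finset.sum_mul]
  simp only [hm]
  have hDD : pr Tau DD = 4 := by
    simp [pr, Tau, DD, Fin.sum_univ_four]
    norm_num
  have hTr : ∀ k, pr Tau (r1 (p k)) = t k := by
    intro k
    simp only [pr, t, r1]
    have : ∑ i, ∑ j, Tau i j * (p k i * conj (p k j)) = p k 0 * conj (p k 0) + 3 * (p k 1 * conj (p k 1)) +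
      3 * (p k 2 * conj (p k 2)) + p k 3 * conj (p k 3) := by
      simp [Tau, Fin.sum_univ_four]
    rw [this]
    simp only [Complex.mul_conj']
    norm_cast
  have hprm : pr Tau m = ∑ k, (4 + al) * t k := by
    simp only [m]
    rw [pr_sum]
    refine Finset.sum_congr rfl fun k _ => ?_
    rw [pr_add, pr_smul, pr_smul, hDD, hTr]; ring
  by_cases h0 : ∑ k, t k = 0
  · refine ⟨Empty, inferInstance, fun _ => 0, fun _ => 0, fun _ => 0, fun _ => le_rfl, ?_⟩
    have h3 : ∀ k, t k = 0 := fun k =>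
      (Finset.sum_eq_zero_iff_of_nonneg (fun k _ => ht0 k)).1 h0 k (Finset.mem_univ k)
    have h4 : ∀ k i, p k i = 0 := by
      intro k i
      have h5 := h3 k
      simp only [t] at h5
      have a0 := sq_nonneg ‖p k 0‖
      have a1 := sq_nonneg ‖p k 1‖
      have a2 := sq_nonneg ‖p k 2‖
      have a3 := sq_nonneg ‖p k 3‖
      have : ‖p k i‖ ^ 2 = 0 := by
        fin_cases i
        · change ‖p k 0‖ ^ 2 = 0; linarith
        · change ‖p k 1‖ ^ 2 = 0; linarith
        · change ‖p k 2‖ ^ 2 = 0; linarith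
        · change ‖p k 3‖ ^ 2 = 0; linarith
      simpa using this
    intro i j
    simp [m, h3, r1, h4]
  · have hpos : 0 < ∑ k, t k := lt_of_le_of_ne (Finset.sum_nonneg fun k _ => ht0 k) (Ne.symm h0)
    have hHD : Her DD := by
      intro i j
      have : conj (3 : ℂ) = 3 := map_ofNat (starRingEnd ℂ) 3
      fin_cases i <;> fin_cases j <;> simp [DD, this]
    have hHr : ∀ k, Her (r1 (p k)) := by
      intro k i j
      simp [r1, mul_comm]
    obtain ⟨ι, hι, z, w, c, hc, he⟩ := lemC m (by
        intro i j
        simp only [m, Finset.sum_apply, map_sum]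
        exact Finset.sum_congr rfl fun k _ => her_add (her_smul hHD _) (her_smul (hHr k) _) i j)
      (by
        rw [hprm, ← Finset.mul_sum]
        exact mul_pos (by linarith) hpos)
      (by
        intro q
        simp only [m]
        rw [map_sum]
        exact Finset.sum_nonneg fun k _ => ppt1 q (p k) al h1 h2)
    refine ⟨ι, hι, z, w, c, hc, ?_⟩
    intro i j
    rw [he]
    simp [Finset.sum_apply]


/-- Hamming weight. -/
def wt (x : Fin 3 → Fin 2) : Fin 4 :=
  ⟨(Finset.univ.filter (fun i => x i = 1)).card, by
    have := Finset.card_le_univ (Finset.univ.filter (fun i => x i = 1))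
    simp only [Fintype.card_fin] at this
    omega⟩

def rep (k : Fin 4) : Fin 3 → Fin 2 := fun i => if (i : ℕ) < k then 1 else 0

lemma wt_rep (k : Fin 4) : wt (rep k) = k := by
  revert k; decide

lemma sq3 : (((Real.sqrt 3)⁻¹ : ℝ) : ℂ) * (((Real.sqrt 3)⁻¹ : ℝ) : ℂ) = 1 / 3 := by
  rw [← Complex.ofReal_mul, ← mul_inv, Real.mul_self_sqrt (by norm_num)]
  push_cast; ring

lemma symProj_eq (x y : Fin 3 → Fin 2) : symProj 3 x y = DD (wt x) (wt y) := by
  have hd : ∀ k x, dicke 3 k x = if ((wt x : Fin 4) : ℕ) = k then (((Real.sqrt ((Nat.choose 3 k : ℕ) : ℝ))⁻¹ : ℝ) : ℂ) else (0 : ℂ) :=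
    fun k x => rfl
  have c1 : Nat.choose 3 1 = 3 := rfl
  have c2 : Nat.choose 3 2 = 3 := rfl
  have h3 := sq3
  simp only [symProj, hd]
  generalize wt x = i
  generalize wt y = j
  push_cast at h3
  fin_cases i <;> fin_cases j <;> simp [Finset.sum_range_succ, DD, c1, c2] <;> simpa using h3

lemma sum_wt (f : Fin 4 → ℂ) : ∑ x : Fin 3 → Fin 2, f (wt x) = f 0 + 3 * f 1 + 3 * f 2 + f 3 := by
  have : ∑ x : Fin 3 → Fin 2, f (wt x) = ∑ k, ∑ x ∈ Finset.univ.filter (fun x => wt x = k), f (wt x) :=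
    (Finset.sum_fiberwise Finset.univ wt (fun x => f (wt x))).symm
  rw [this]
  have h2 : ∀ k, ∑ x ∈ Finset.univ.filter (fun x => wt x = k), f (wt x) =
      (Finset.univ.filter (fun x => wt x = k)).card * f k := by
    intro k
    rw [Finset.sum_congr rfl (g := fun _ => f k), Finset.sum_const, nsmul_eq_mul]
    intro x hx
    rw [(Finset.mem_filter.1 hx).2]
  simp only [h2, Fin.sum_univ_four]
  have d0 : (Finset.univ.filter (fun x => wt x = 0)).card = 1 := by decide
  have d1 : (Finset.univ.filter (fun x => wt x = 1)).card = 3 := by decide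
  have d2 : (Finset.univ.filter (fun x => wt x = 2)).card = 3 := by decide
  have d3 : (Finset.univ.filter (fun x => wt x = 3)).card = 1 := by decide
  rw [d0, d1, d2, d3]
  push_cast; ring

lemma vv_wt (z w : ℂ) (x : Fin 3 → Fin 2) : vv z w (wt x) = ∏ i, ![w, z] (x i) := by
  rw [Fin.prod_univ_three]
  have h : x = ![x 0, x 1, x 2] := by
    funext i; fin_cases i <;> rfl
  rw [h]
  generalize x 0 = a
  generalize x 1 = b
  generalize x 2 = c
  have e : ∀ a b c : Fin 2, wt ![a, b, c] = a.castLE (by omega) + b.castLE (by omega) + c.castLE (by omega) := by decide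
  rw [e]
  fin_cases a <;> fin_cases b <;> fin_cases c <;> simp [vv] <;> first | ring1 | exact Or.inl (by ring1) | exact Or.inl trivial

lemma psd_rank1 (u : Fin 2 → ℂ) : (Matrix.of (fun a b => u a * conj (u b)) : Matrix (Fin 2) (Fin 2) ℂ).PosSemidef := by
  have := Matrix.posSemidef_vecMulVec_self_star u
  convert this using 1
  ext a b
  simp [Matrix.vecMulVec_apply]

/-- Reduction map on the three-qubit symmetric subspace: full separability
for `-1/3 ≤ α ≤ 2/3`. -/
theorem stmt4 (ρ : Matrix (Fin 3 → Fin 2) (Fin 3 → Fin 2) ℂ) (hρ : ρ.PosSemidef)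
    (hsupp : symProj 3 * ρ * symProj 3 = ρ)
    (α : ℝ) (hα1 : -(1 / 3 : ℝ) ≤ α) (hα2 : α ≤ 2 / 3) :
    FullySep (ρ.trace • symProj 3 + (α : ℂ) • ρ) := by
  have hdep : ∀ x y, ρ x y = ρ (rep (wt x)) (rep (wt y)) := by
    intro x y
    conv_lhs => rw [← hsupp]
    conv_rhs => rw [← hsupp]
    simp only [Matrix.mul_apply, symProj_eq, wt_rep]
  obtain ⟨ι, hι, z, w, c, hc, he⟩ := main4 (ρ.submatrix rep rep) (hρ.submatrix rep) α hα1 hα2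
  have htr : ρ.trace = (ρ.submatrix rep rep) 0 0 + 3 * (ρ.submatrix rep rep) 1 1 +
      3 * (ρ.submatrix rep rep) 2 2 + (ρ.submatrix rep rep) 3 3 := by
    rw [← sum_wt (fun k => (ρ.submatrix rep rep) k k), Matrix.trace]
    refine Finset.sum_congr rfl fun x _ => ?_
    rw [Matrix.diag_apply, hdep]
    rfl
  let e := (Fintype.equivFin ι).symm
  refine ⟨Fintype.card ι, fun k i => ((if i = 0 then c (e k) else 1 : ℝ) : ℂ) •
    Matrix.of (fun a b => ![w (e k), z (e k)] a * conj (![w (e k), z (e k)] b)), ?_, ?_⟩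
  · intro k i
    refine (psd_rank1 _).smul ?_
    split_ifs
    · exact_mod_cast hc (e k)
    · simp
  · intro x y
    have h1 := he (wt x) (wt y)
    rw [← htr] at h1
    simp only [Matrix.submatrix_apply, ← hdep] at h1
    rw [Matrix.add_apply, Matrix.smul_apply, Matrix.smul_apply, symProj_eq, smul_eq_mul, smul_eq_mul, h1,
      ← Equiv.sum_comp e]
    refine Finset.sum_congr rfl fun k _ => ?_
    simp only [atm, vv_wt, Matrix.smul_apply, Matrix.of_apply, smul_eq_mul, Fin.prod_univ_three, map_mul]
    simp
    ring
end
end
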